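/- For any C*-algebras A and B, the Banach *-algebra A ⊗̂ B has the Wiener property: every proper closed two-sided ideal of A ⊗̂ B is annihilated by some irreducible *-representation of A ⊗̂ B on a Hilbert space. -/

import Mathlib

open scoped TensorProduct
open Pointwise

universe u

noncomputable section

/-- A C⋆-norm on a complex `*`-algebra.  On a matrix algebra over a C⋆-algebra such a
norm is unique, namely the canonical C⋆-norm. -/
structure IsCStarNorm {M : Type*} [NonUnitalRing M] [StarRing M] [Module ℂ M]
    (N : M → ℝ) : Prop where
  add_le : ∀ x y, N (x + y) ≤ N x + N y
  smul_eq : ∀ (c : ℂ) (x : M), N (c • x) = ‖c‖ * N x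
  eq_zero_of : ∀ x, N x = 0 → x = 0
  mul_le : ∀ x y, N (x * y) ≤ N x * N y
  star_mul_self : ∀ x, N (star x * x) = N x * N x

/-- The operator space projective tensor norm `‖·‖_∧` on the algebraic tensor product
`A ⊗ B`, relative to given families of matrix norms on `A` and `B`:
`‖u‖_∧ = inf { ‖α‖ ‖v‖ ‖w‖ ‖β‖ : u = α (v ⊗ w) β }` where `v ∈ M_p(A)`, `w ∈ M_q(B)`,
`α ∈ M_{1,pq}(ℂ)` and `β ∈ M_{pq,1}(ℂ)` (row and column vectors carrying the Euclidean
norm, which is their norm as scalar matrices). -/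
noncomputable def osProjNorm {A B : Type u}
    [AddCommGroup A] [Module ℂ A] [AddCommGroup B] [Module ℂ B]
    (NA : ∀ p : ℕ, Matrix (Fin p) (Fin p) A → ℝ)
    (NB : ∀ q : ℕ, Matrix (Fin q) (Fin q) B → ℝ) (u : A ⊗[ℂ] B) : ℝ :=
  sInf { r : ℝ | ∃ (p q : ℕ) (α : Fin p × Fin q → ℂ) (v : Matrix (Fin p) (Fin p) A)
      (w : Matrix (Fin q) (Fin q) B) (β : Fin p × Fin q → ℂ),
      u = ∑ ik : Fin p × Fin q, ∑ jl : Fin p × Fin q,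
            (α ik * β jl) • (v ik.1 jl.1 ⊗ₜ[ℂ] w ik.2 jl.2) ∧
      r = Real.sqrt (∑ ik, ‖α ik‖ ^ 2) * NA p v * NB q w *
            Real.sqrt (∑ jl, ‖β jl‖ ^ 2) }

/-- `X` is a completion of the algebraic tensor product `A ⊗ B` with respect to the
norm `ν`, via the (necessarily isometric) dense embedding `ι`, and the multiplication and
involution of `X` are the canonical ones induced from `A` and `B`.  Applied with
`ν = osProjNorm NA NB` (for the canonical matrix C⋆-norms `NA`, `NB`) this characterizes
the Banach `*`-algebra `A ⊗̂ B` (the operator space projective tensor product) up to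
isometric `*`-isomorphism; applied with `ν = bsProjNorm` it characterizes the Banach
space projective tensor product `A ⊗_γ B`. -/
structure IsTensorCompletion {A B : Type u} [NonUnitalRing A] [StarRing A] [Module ℂ A]
    [NonUnitalRing B] [StarRing B] [Module ℂ B] (ν : A ⊗[ℂ] B → ℝ)
    (X : Type u) [NonUnitalNormedRing X] [StarRing X] [NormedSpace ℂ X] [CompleteSpace X]
    (ι : A ⊗[ℂ] B →ₗ[ℂ] X) : Prop where
  norm_eq : ∀ u, ‖ι u‖ = ν u
  dense : DenseRange ι
  mul_tmul : ∀ (a c : A) (b d : B),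
    ι (a ⊗ₜ[ℂ] b) * ι (c ⊗ₜ[ℂ] d) = ι ((a * c) ⊗ₜ[ℂ] (b * d))
  star_tmul : ∀ (a : A) (b : B), star (ι (a ⊗ₜ[ℂ] b)) = ι (star a ⊗ₜ[ℂ] star b)

/-- The product ideal `S ⊗̂ T`: the closure in `X` (a completion of `A ⊗ B`) of the span of
elementary tensors `a ⊗ b` with `a ∈ S`, `b ∈ T`. -/
def tensorIdeal {A B : Type u} [NonUnitalRing A] [StarRing A] [Module ℂ A]
    [NonUnitalRing B] [StarRing B] [Module ℂ B]
    {X : Type u} [NonUnitalNormedRing X] [StarRing X] [NormedSpace ℂ X] [CompleteSpace X]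
    (ι : A ⊗[ℂ] B →ₗ[ℂ] X) (S : Set A) (T : Set B) : Set X :=
  closure (ι '' (Submodule.span ℂ (Set.image2 (fun a b => a ⊗ₜ[ℂ] b) S T)))

/-- A closed prime (two-sided) ideal of a Banach algebra: a proper closed two-sided ideal `K`
such that whenever the product of two closed two-sided ideals is contained in `K`, one of them
is contained in `K`. -/
def IsClosedPrimeIdeal {Y : Type u} [NonUnitalNormedRing Y] (K : TwoSidedIdeal Y) : Prop :=
  IsClosed (K : Set Y) ∧ (K : Set Y) ≠ Set.univ ∧
    ∀ I J : TwoSidedIdeal Y, IsClosed (I : Set Y) → IsClosed (J : Set Y) →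
      (∀ x ∈ I, ∀ y ∈ J, x * y ∈ K) → (I : Set Y) ⊆ (K : Set Y) ∨ (J : Set Y) ⊆ (K : Set Y)

/-- An irreducible continuous `*`-representation of a Banach `*`-algebra `Y` on a complex
Hilbert space. -/
structure IrreducibleRepOn (Y : Type u)
    [NonUnitalNormedRing Y] [StarRing Y] [NormedSpace ℂ Y] where
  H : Type u
  [normH : NormedAddCommGroup H]
  [ipsH : InnerProductSpace ℂ H]
  [csH : CompleteSpace H]
  π : Y →⋆ₙₐ[ℂ] (H →L[ℂ] H)
  continuous : Continuous π
  nonzero : ∃ y, π y ≠ 0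
  irreducible : ∀ S : Submodule ℂ H, IsClosed (S : Set H) →
    (∀ y : Y, ∀ v ∈ S, π y v ∈ S) → S = ⊥ ∨ S = ⊤

/-- A primitive ideal: the kernel of an irreducible `*`-representation. -/
def IsPrimitiveIdeal {Y : Type u} [NonUnitalNormedRing Y] [StarRing Y] [NormedSpace ℂ Y]
    (K : TwoSidedIdeal Y) : Prop :=
  ∃ ρ : IrreducibleRepOn Y, ∀ y, y ∈ K ↔ ρ.π y = 0

/-- A subset `K` of a ring is modular (as an ideal) if there is a relative unit `e`
with `x * e - x ∈ K` and `e * x - x ∈ K` for every `x`. -/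
def IsModularIdealSet {Y : Type u} [NonUnitalRing Y] (K : Set Y) : Prop :=
  ∃ e : Y, ∀ x : Y, x * e - x ∈ K ∧ e * x - x ∈ K

/-- A maximal modular (two-sided) ideal: a modular ideal which is proper and maximal among
proper two-sided ideals. -/
def IsMaximalModularIdeal {Y : Type u} [NonUnitalRing Y] (K : TwoSidedIdeal Y) : Prop :=
  IsModularIdealSet (K : Set Y) ∧ (K : Set Y) ≠ Set.univ ∧
    ∀ L : TwoSidedIdeal Y, (K : Set Y) ⊆ (L : Set Y) →
      (L : Set Y) = (K : Set Y) ∨ (L : Set Y) = Set.univ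

/-- The operator norm of a `p × p` matrix of bounded operators on a Hilbert space `H`,
viewed as an operator on the `ℓ²`-direct sum `H ⊕ ⋯ ⊕ H`. -/
noncomputable def opMatrixNorm {H : Type u} [NormedAddCommGroup H] [InnerProductSpace ℂ H]
    {p : ℕ} (T : Matrix (Fin p) (Fin p) (H →L[ℂ] H)) : ℝ :=
  sSup { r : ℝ | ∃ x : Fin p → H, (∑ i, ‖x i‖ ^ 2) ≤ 1 ∧
      r = Real.sqrt (∑ i, ‖∑ j, (T i j) (x j)‖ ^ 2) }

/-- An operator algebra structure on a Banach algebra `Y`: a bicontinuous algebra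
homomorphism of `Y` into the bounded operators on some Hilbert space. -/
structure OperatorAlgebraEmbedding (Y : Type u) [NonUnitalNormedRing Y] [NormedSpace ℂ Y] where
  H : Type u
  [normH : NormedAddCommGroup H]
  [ipsH : InnerProductSpace ℂ H]
  [csH : CompleteSpace H]
  ρ : Y →ₙₐ[ℂ] (H →L[ℂ] H)
  c : ℝ
  C : ℝ
  c_pos : 0 < c
  lower : ∀ y, c * ‖y‖ ≤ ‖ρ y‖
  upper : ∀ y, ‖ρ y‖ ≤ C * ‖y‖

/-- The matrix norms on `Y` induced by an operator algebra embedding, giving `Y` its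
operator space structure: the norm of `v ∈ M_p(Y)` is the operator norm of the matrix
of operators obtained by applying the embedding entrywise. -/
noncomputable def OperatorAlgebraEmbedding.matrixNorm {Y : Type u}
    [NonUnitalNormedRing Y] [NormedSpace ℂ Y] (e : OperatorAlgebraEmbedding Y)
    (p : ℕ) (v : Matrix (Fin p) (Fin p) Y) : ℝ :=
  letI := e.normH; letI := e.ipsH
  opMatrixNorm (v.map e.ρ)

/-- The Banach space projective tensor norm `‖·‖_γ` on the algebraic tensor product. -/
noncomputable def bsProjNorm {A B : Type u} [NonUnitalNormedRing A] [NormedSpace ℂ A]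
    [NonUnitalNormedRing B] [NormedSpace ℂ B] (u : A ⊗[ℂ] B) : ℝ :=
  sInf { r : ℝ | ∃ (n : ℕ) (a : Fin n → A) (b : Fin n → B),
      u = ∑ i, a i ⊗ₜ[ℂ] b i ∧ r = ∑ i, ‖a i‖ * ‖b i‖ }

/-- A C⋆-algebra `A` is subhomogeneous if there is `n : ℕ` bounding the (finite)
dimensions of all its irreducible `*`-representations. -/
def IsSubhomogeneous (A : Type u) [NonUnitalCStarAlgebra A] : Prop :=
  ∃ n : ℕ, ∀ ρ : IrreducibleRepOn A,
    letI := ρ.normH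
    letI := ρ.ipsH
    FiniteDimensional ℂ ρ.H ∧ Module.finrank ℂ ρ.H ≤ n



namespace WP

section uniq
variable {M : Type*} [NonUnitalCStarAlgebra M] {N : M → ℝ}

lemma N_zero (hN : IsCStarNorm N) : N 0 = 0 := by
  have := hN.smul_eq 0 0
  simpa using this

lemma N_nonneg (hN : IsCStarNorm N) (x : M) : 0 ≤ N x := by
  have h1 := hN.add_le x ((-1 : ℂ) • x)
  rw [hN.smul_eq] at h1
  have : x + (-1 : ℂ) • x = 0 := by simp
  rw [this, N_zero hN] at h1
  simp at h1
  linarith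

lemma N_le_one (hN : IsCStarNorm N) {h : M} (hs : IsSelfAdjoint h) (hn : ‖h‖ ≤ 1) : N h ≤ 1 := by
  set w : M := cfcₙ (fun s : ℝ => √(1 - s^2) - 1) h with hw
  have hws : star w = w := (cfcₙ_predicate (R := ℝ) _ h : IsSelfAdjoint w)
  have hcont : ContinuousOn (fun s : ℝ => √(1 - s^2) - 1) (quasispectrum ℝ h) := by fun_prop
  have hid : cfcₙ (fun s : ℝ => s) h = h := cfcₙ_id' ℝ h
  have hcomm : h * w = w * h := by
    have e1 : h * w = cfcₙ (fun s : ℝ => s * (√(1 - s^2) - 1)) h := by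
      rw [cfcₙ_mul _ _ h (by fun_prop) (by simp) hcont (by simp), hid]
    have e2 : w * h = cfcₙ (fun s : ℝ => (√(1 - s^2) - 1) * s) h := by
      rw [cfcₙ_mul _ _ h hcont (by simp) (by fun_prop) (by simp), hid]
    rw [e1, e2]
    simp only [mul_comm]
  have hrel : h * h + w * w + (w + w) = 0 := by
    have e1 : h * h = cfcₙ (fun s : ℝ => s * s) h := by
      rw [cfcₙ_mul _ _ h (by fun_prop) (by simp) (by fun_prop) (by simp), hid]
    have e2 : w * w = cfcₙ (fun s : ℝ => (√(1 - s^2) - 1) * (√(1 - s^2) - 1)) h := by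
      rw [cfcₙ_mul _ _ h hcont (by simp) hcont (by simp)]
    rw [e1, e2, hw, ← cfcₙ_add _ _ h hcont (by simp) hcont (by simp),
      ← cfcₙ_add _ _ h (by fun_prop) (by simp) (by fun_prop) (by simp),
      ← cfcₙ_add _ _ h (by fun_prop) (by simp) (by fun_prop) (by simp)]
    rw [← cfcₙ_zero ℝ h]
    apply cfcₙ_congr
    intro s hs'
    have hsn : |s| ≤ 1 := by
      have := NonUnitalIsometricContinuousFunctionalCalculus.norm_quasispectrum_le h hs' hs
      simpa using this.trans hn
    have : (0:ℝ) ≤ 1 - s^2 := by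
      have := sq_le_one_iff_abs_le_one s |>.2 hsn
      linarith
    have h2 := Real.mul_self_sqrt this
    simp only [Pi.zero_apply]
    nlinarith
  have key : ∀ (c : ℂ) (x : M), star c * c = 1 → star c = - c →
      N (h * x + c • (x + w * x)) = N x := by
    intro c x hc hc2
    have h1 := hN.star_mul_self (h * x + c • (x + w * x))
    have h2 : star (h * x + c • (x + w * x)) * (h * x + c • (x + w * x)) = star x * x := by
      have hc3 : c * c = -1 := by rw [hc2] at hc; linear_combination -hc
      have hcc : ∀ y : M, c • c • y = - y := fun y => by rw [smul_smul, hc3]; simp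
      simp only [star_add, star_mul, star_smul, hws, hs.star_eq, hc2]
      simp only [add_mul, mul_add, smul_add, neg_smul, neg_mul, smul_mul_assoc, mul_smul_comm, hcc]
      have a1 : star x * h * (h * x) = star x * (h * h) * x := by noncomm_ring
      have a2 : star x * h * (w * x) = star x * (h * w) * x := by noncomm_ring
      have a3 : star x * w * (h * x) = star x * (w * h) * x := by noncomm_ring
      have a4 : star x * w * (w * x) = star x * (w * w) * x := by noncomm_ring
      have a5 : h * h = - (w * w) - (w + w) := by
        rw [eq_sub_iff_add_eq, eq_neg_iff_add_eq_zero, ← hrel]; abel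
      rw [a1, a2, a3, a4, a5, hcomm]
      simp only [mul_sub, sub_mul, mul_add, add_mul, mul_neg, neg_mul, mul_assoc]
      simp only [smul_neg, hcc, neg_neg, smul_sub, smul_add, neg_add, neg_sub]
      abel
    rw [h2, hN.star_mul_self] at h1
    nlinarith [N_nonneg hN x, N_nonneg hN (h * x + c • (x + w * x))]
  have h1 := key Complex.I h (by simp) (by simp)
  have h2 := key (-Complex.I) h (by simp) (by simp)
  have h3 : N (h * h) = N h * N h := by
    conv_lhs => rw [← hs.star_eq, hs.star_eq]
    have := hN.star_mul_self h
    rwa [hs.star_eq] at this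
  have h4 := hN.add_le (h * h + Complex.I • (h + w * h)) (h * h + (-Complex.I) • (h + w * h))
  have h5 : (h * h + Complex.I • (h + w * h)) + (h * h + (-Complex.I) • (h + w * h)) =
      (2:ℂ) • (h * h) := by
    rw [two_smul, neg_smul]; abel
  rw [h5, hN.smul_eq, h1, h2, h3] at h4
  simp at h4
  by_contra hlt
  push Not at hlt
  nlinarith

lemma N_le (hN : IsCStarNorm N) (x : M) : N x ≤ ‖x‖ := by
  have sa : ∀ h : M, IsSelfAdjoint h → N h ≤ ‖h‖ := by
    intro h hs
    rcases eq_or_ne h 0 with rfl | h0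
    · simp [N_zero hN]
    · have hp : 0 < ‖h‖ := norm_pos_iff.2 h0
      have h1 := N_le_one hN (h := ((‖h‖⁻¹ : ℝ)) • h) ((IsSelfAdjoint.all (‖h‖⁻¹ : ℝ)).smul hs)
        (by rw [norm_smul]; simp [hp.ne'])
      have h2 : ((‖h‖⁻¹ : ℝ)) • h = ((‖h‖⁻¹ : ℝ) : ℂ) • h := (Complex.coe_smul _ _).symm
      rw [h2, hN.smul_eq] at h1
      simp at h1
      rwa [inv_mul_le_iff₀ hp, mul_one] at h1
  have h1 := sa _ (IsSelfAdjoint.star_mul_self x)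
  rw [hN.star_mul_self, CStarRing.norm_star_mul_self] at h1
  exact abs_le_of_sq_le_sq' (by nlinarith) (norm_nonneg _) |>.2

lemma le_N_sa (hN : IsCStarNorm N) {h : M} (hs : IsSelfAdjoint h) : ‖h‖ ≤ N h := by
  by_contra hlt
  push Not at hlt
  obtain ⟨c, hc1, hc2⟩ := exists_between hlt
  have hc0 : 0 < c := (N_nonneg hN h).trans_lt hc1
  have hid : cfcₙ (fun s : ℝ => s) h = h := cfcₙ_id' ℝ h
  set T : ℝ → ℝ := fun s => s / (max |s| c)^2 with hT
  set g : ℝ → ℝ := fun s => max (|s| - c) 0 with hg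
  have hmax : ∀ s : ℝ, 0 < max |s| c := fun s => lt_max_of_lt_right hc0
  have hTc : Continuous T := by
    apply Continuous.div continuous_id (by fun_prop)
    intro s; have := hmax s; positivity
  have hgc : Continuous g := by fun_prop
  have hg0 : g 0 = 0 := by simp [hg, hc0.le]
  have hTb : ∀ s, |T s| ≤ c⁻¹ := by
    intro s
    have hm := hmax s
    simp only [hT]
    rw [abs_div, abs_of_pos (by positivity : 0 < (max |s| c)^2), div_le_iff₀ (by positivity)]
    have h1 : |s| ≤ max |s| c := le_max_left _ _
    have h2 : c ≤ max |s| c := le_max_right _ _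
    rw [inv_mul_eq_div, le_div_iff₀ hc0]
    nlinarith [abs_nonneg s]
  have hstep : ∀ n : ℕ, cfcₙ (fun s => T s ^ n * g s) h = h * cfcₙ (fun s => T s ^ (n+1) * g s) h := by
    intro n
    have : h * cfcₙ (fun s => T s ^ (n+1) * g s) h = cfcₙ (fun s => s * (T s ^ (n+1) * g s)) h := by
      rw [cfcₙ_mul (fun s => s) (fun s => T s ^ (n+1) * g s) h (by fun_prop) (by simp) (by fun_prop) (by simp [hg0]), hid]
    rw [this]
    congr 1
    ext s
    by_cases hsc : |s| ≤ c
    · have : g s = 0 := by simp [hg, hsc]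
      simp [this]
    · push Not at hsc
      have h1 : s * T s = 1 := by
        have hs0 : s ≠ 0 := by
          rintro rfl; simp at hsc; linarith
        simp only [hT, max_eq_left hsc.le, sq_abs]
        field_simp
      rw [pow_succ]
      linear_combination (- T s ^ n * g s) * h1
  have hbd : ∀ n : ℕ, N (cfcₙ g h) ≤ N h ^ n * N (cfcₙ (fun s => T s ^ n * g s) h) := by
    intro n
    induction n with
    | zero => simp
    | succ n ih =>
      refine ih.trans ?_
      rw [hstep n, pow_succ, mul_assoc]
      exact mul_le_mul_of_nonneg_left (hN.mul_le _ _) (pow_nonneg (N_nonneg hN h) _)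
  have hbd2 : ∀ n : ℕ, N (cfcₙ g h) ≤ (N h / c)^n * ‖h‖ := by
    intro n
    refine (hbd n).trans ?_
    rw [div_pow, div_mul_eq_mul_div, mul_div_assoc]
    refine mul_le_mul_of_nonneg_left ?_ (pow_nonneg (N_nonneg hN h) _)
    refine (N_le hN _).trans ?_
    apply norm_cfcₙ_le
    intro s hs'
    have hsn : |s| ≤ ‖h‖ := by
      simpa using NonUnitalIsometricContinuousFunctionalCalculus.norm_quasispectrum_le h hs' hs
    have hgs : |g s| ≤ ‖h‖ := by
      simp only [hg]
      rw [abs_of_nonneg (le_max_right _ _)]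
      exact max_le (by linarith) (norm_nonneg _)
    rw [Real.norm_eq_abs, abs_mul, abs_pow, div_eq_inv_mul, ← inv_pow]
    exact mul_le_mul (pow_le_pow_left₀ (abs_nonneg _) (hTb s) n) hgs (abs_nonneg _) (by positivity)
  have hlim : Filter.Tendsto (fun n : ℕ => (N h / c)^n * ‖h‖) Filter.atTop (nhds 0) := by
    have := (tendsto_pow_atTop_nhds_zero_of_lt_one (div_nonneg (N_nonneg hN h) hc0.le)
      ((div_lt_one hc0).2 hc1)).mul_const ‖h‖
    simpa using this
  have hz : N (cfcₙ g h) = 0 :=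
    le_antisymm (ge_of_tendsto' hlim hbd2) (N_nonneg hN _)
  have hz2 := hN.eq_zero_of _ hz
  have hid2 : ‖h‖ ≤ c := by
    conv_lhs => rw [← hid]
    apply norm_cfcₙ_le
    intro s hs'
    have : g s = 0 := by
      have h1 : cfcₙ g h = cfcₙ (fun _ => (0:ℝ)) h := by rw [hz2, cfcₙ_const_zero]
      exact (cfcₙ_eq_cfcₙ_iff_eqOn hs hgc.continuousOn hg0 (by fun_prop) rfl).1 h1 hs'
    simp only [hg] at this
    have h3 := le_max_left (|s| - c) 0
    rw [this] at h3
    simpa using h3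
  linarith

lemma N_eq (hN : IsCStarNorm N) (x : M) : N x = ‖x‖ := by
  refine le_antisymm (N_le hN x) ?_
  have h1 := le_N_sa hN (IsSelfAdjoint.star_mul_self x)
  rw [hN.star_mul_self, CStarRing.norm_star_mul_self] at h1
  exact abs_le_of_sq_le_sq' (by nlinarith) (N_nonneg hN x) |>.2

end uniq

section mat
variable {A : Type u} [NonUnitalCStarAlgebra A] [PartialOrder A] [StarOrderedRing A]

open CStarMatrix in
lemma NA_eq (NA : ∀ p : ℕ, Matrix (Fin p) (Fin p) A → ℝ) (hNA : ∀ p, IsCStarNorm (NA p)) (p : ℕ)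
    (v : Matrix (Fin p) (Fin p) A) : NA p v = ‖(CStarMatrix.ofMatrix v : CStarMatrix (Fin p) (Fin p) A)‖ := by
  exact N_eq (M := CStarMatrix (Fin p) (Fin p) A) (N := NA p)
    ⟨(hNA p).add_le, (hNA p).smul_eq, (hNA p).eq_zero_of, (hNA p).mul_le, (hNA p).star_mul_self⟩ v

end mat
end WP


namespace WP

section matrep
variable {A : Type u} [NonUnitalCStarAlgebra A] [PartialOrder A] [StarOrderedRing A]
variable {H : Type u} [NormedAddCommGroup H] [InnerProductSpace ℂ H] [CompleteSpace H]

abbrev ampl (ρ : A →⋆ₙₐ[ℂ] (H →L[ℂ] H)) (p : ℕ) (v : CStarMatrix (Fin p) (Fin p) A) :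
    PiLp 2 (fun _ : Fin p => H) →L[ℂ] PiLp 2 (fun _ : Fin p => H) :=
  ((PiLp.continuousLinearEquiv 2 ℂ (fun _ : Fin p => H)).symm : (Fin p → H) →L[ℂ] _) ∘L
  (ContinuousLinearMap.pi fun i => ∑ j, (ρ (v i j)) ∘L (ContinuousLinearMap.proj j)) ∘L
  ((PiLp.continuousLinearEquiv 2 ℂ (fun _ : Fin p => H)) : _ →L[ℂ] (Fin p → H))

lemma ampl_apply (ρ : A →⋆ₙₐ[ℂ] (H →L[ℂ] H)) (p : ℕ) (v : CStarMatrix (Fin p) (Fin p) A)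
    (x : PiLp 2 (fun _ : Fin p => H)) (i : Fin p) :
    ampl ρ p v x i = ∑ j, ρ (v i j) (x j) := by
  simp [ampl]

def amplHom (ρ : A →⋆ₙₐ[ℂ] (H →L[ℂ] H)) (p : ℕ) :
    CStarMatrix (Fin p) (Fin p) A →⋆ₙₐ[ℂ]
    (PiLp 2 (fun _ : Fin p => H) →L[ℂ] PiLp 2 (fun _ : Fin p => H)) where
  toFun := ampl ρ p
  map_smul' c v := by
    ext x i
    simp [ampl_apply, Finset.smul_sum]
  map_zero' := by ext x i; simp [ampl_apply]
  map_add' v w := by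
    ext x i
    simp [ampl_apply, Finset.sum_add_distrib]
  map_mul' v w := by
    ext x i
    simp only [ampl_apply, ContinuousLinearMap.mul_apply, CStarMatrix.mul_apply, map_sum, map_mul,
      ContinuousLinearMap.sum_apply]
    rw [Finset.sum_comm]
  map_star' v := by
    rw [ContinuousLinearMap.star_eq_adjoint, ContinuousLinearMap.eq_adjoint_iff]
    intro x y
    simp only [PiLp.inner_apply, ampl_apply, sum_inner, inner_sum, CStarMatrix.star_apply, map_star,
      ContinuousLinearMap.star_eq_adjoint, ContinuousLinearMap.adjoint_inner_left]
    rw [Finset.sum_comm]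

lemma ampl_bound (ρ : A →⋆ₙₐ[ℂ] (H →L[ℂ] H)) (NA : ∀ p : ℕ, Matrix (Fin p) (Fin p) A → ℝ)
    (hNA : ∀ p, IsCStarNorm (NA p)) (p : ℕ) (v : Matrix (Fin p) (Fin p) A) (x : Fin p → H) :
    ∑ i, ‖∑ j, ρ (v i j) (x j)‖ ^ 2 ≤ (NA p v) ^ 2 * ∑ j, ‖x j‖ ^ 2 := by
  have h1 := NonUnitalStarAlgHom.norm_apply_le (amplHom ρ p) (CStarMatrix.ofMatrix v)
  have h2 := (amplHom ρ p (CStarMatrix.ofMatrix v)).le_of_opNorm_le h1 (WithLp.toLp 2 x)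
  rw [← NA_eq NA hNA] at h2
  have h3 := pow_le_pow_left₀ (norm_nonneg _) h2 2
  rw [mul_pow, PiLp.norm_sq_eq_of_L2, PiLp.norm_sq_eq_of_L2] at h3
  have h4 : ∀ i, (amplHom ρ p (CStarMatrix.ofMatrix v)) (WithLp.toLp 2 x) i = ∑ j, ρ (v i j) (x j) :=
    fun i => ampl_apply ρ p (CStarMatrix.ofMatrix v) (WithLp.toLp 2 x) i
  simp only [h4] at h3
  exact h3

end matrep

section tens
variable {A B : Type u} [NonUnitalCStarAlgebra A] [PartialOrder A] [StarOrderedRing A]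
variable [NonUnitalCStarAlgebra B] [PartialOrder B] [StarOrderedRing B]
variable {H : Type u} [NormedAddCommGroup H] [InnerProductSpace ℂ H] [CompleteSpace H]

/-- product map -/
def prodMap (ρ₁ : A →⋆ₙₐ[ℂ] (H →L[ℂ] H)) (ρ₂ : B →⋆ₙₐ[ℂ] (H →L[ℂ] H)) :
    A ⊗[ℂ] B →ₗ[ℂ] (H →L[ℂ] H) :=
  TensorProduct.lift (LinearMap.mk₂ ℂ (fun a b => ρ₁ a * ρ₂ b)
    (by intros; simp [add_mul]) (by intros; simp)
    (by intros; simp [mul_add]) (by intros; simp))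

lemma prodMap_tmul (ρ₁ : A →⋆ₙₐ[ℂ] (H →L[ℂ] H)) (ρ₂ : B →⋆ₙₐ[ℂ] (H →L[ℂ] H)) (a : A) (b : B) :
    prodMap ρ₁ ρ₂ (a ⊗ₜ b) = ρ₁ a * ρ₂ b := by simp [prodMap]

lemma osSet_nonempty (NA : ∀ p : ℕ, Matrix (Fin p) (Fin p) A → ℝ)
    (NB : ∀ p : ℕ, Matrix (Fin p) (Fin p) B → ℝ) (u : A ⊗[ℂ] B) :
    { r : ℝ | ∃ (p q : ℕ) (α : Fin p × Fin q → ℂ) (v : Matrix (Fin p) (Fin p) A)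
      (w : Matrix (Fin q) (Fin q) B) (β : Fin p × Fin q → ℂ),
      u = ∑ ik : Fin p × Fin q, ∑ jl : Fin p × Fin q,
            (α ik * β jl) • (v ik.1 jl.1 ⊗ₜ[ℂ] w ik.2 jl.2) ∧
      r = Real.sqrt (∑ ik, ‖α ik‖ ^ 2) * NA p v * NB q w *
            Real.sqrt (∑ jl, ‖β jl‖ ^ 2) }.Nonempty := by
  obtain ⟨k, a, b, rfl⟩ := TensorProduct.exists_sum_tmul_eq u
  refine ⟨_, k, k, fun ik => if ik.1 = ik.2 then 1 else 0, Matrix.diagonal a, Matrix.diagonal b,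
    fun ik => if ik.1 = ik.2 then 1 else 0, ?_, rfl⟩
  simp only [Fintype.sum_prod_type, Matrix.diagonal_apply]
  refine Finset.sum_congr rfl fun i _ => ?_
  rw [Finset.sum_eq_single i, Finset.sum_eq_single i, Finset.sum_eq_single i]
  · simp
  · intro j _ hj; simp [hj.symm]
  · simp
  · intro j _ hj; simp [hj.symm]
  · simp
  · intro j _ hj; simp [hj.symm]
  · simp

lemma prodMap_bound (NA : ∀ p : ℕ, Matrix (Fin p) (Fin p) A → ℝ)
    (hNA : ∀ p, IsCStarNorm (NA p)) (NB : ∀ p : ℕ, Matrix (Fin p) (Fin p) B → ℝ)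
    (hNB : ∀ p, IsCStarNorm (NB p))
    (ρ₁ : A →⋆ₙₐ[ℂ] (H →L[ℂ] H)) (ρ₂ : B →⋆ₙₐ[ℂ] (H →L[ℂ] H)) (u : A ⊗[ℂ] B) :
    ‖prodMap ρ₁ ρ₂ u‖ ≤ osProjNorm NA NB u := by
  refine le_csInf (osSet_nonempty NA NB u) ?_
  rintro r ⟨p, q, α, v, w, β, rfl, rfl⟩
  have hA : 0 ≤ NA p v := by rw [NA_eq NA hNA]; exact norm_nonneg _
  have hB : 0 ≤ NB q w := by rw [NA_eq NB hNB]; exact norm_nonneg _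
  refine ContinuousLinearMap.opNorm_le_bound _ (by positivity) fun x => ?_
  set z : Fin p → Fin q → H := fun j k => ∑ l, ρ₂ (w k l) (β (j, l) • x) with hz
  set y : Fin p → Fin q → H := fun i k => ∑ j, ρ₁ (v i j) (z j k) with hy
  have e : (prodMap ρ₁ ρ₂ (∑ ik : Fin p × Fin q, ∑ jl : Fin p × Fin q,
            (α ik * β jl) • (v ik.1 jl.1 ⊗ₜ[ℂ] w ik.2 jl.2))) x
      = ∑ ik : Fin p × Fin q, α ik • y ik.1 ik.2 := by
    simp only [map_sum, map_smul, prodMap_tmul, ContinuousLinearMap.sum_apply,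
      ContinuousLinearMap.smul_apply, ContinuousLinearMap.mul_apply, hy, hz]
    refine Finset.sum_congr rfl fun ik _ => ?_
    rw [Finset.smul_sum, Fintype.sum_prod_type]
    refine Finset.sum_congr rfl fun j _ => ?_
    rw [Finset.smul_sum]
    refine Finset.sum_congr rfl fun l _ => ?_
    rw [smul_smul]
  have hzb : ∀ j, ∑ k, ‖z j k‖ ^ 2 ≤ NB q w ^ 2 * ∑ l, ‖β (j, l) • x‖ ^ 2 := fun j =>
    ampl_bound ρ₂ NB hNB q w _
  have hyb : ∀ k, ∑ i, ‖y i k‖ ^ 2 ≤ NA p v ^ 2 * ∑ j, ‖z j k‖ ^ 2 := fun k =>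
    ampl_bound ρ₁ NA hNA p v _
  have hyt : ∑ ik : Fin p × Fin q, ‖y ik.1 ik.2‖ ^ 2 ≤
      (NA p v * NB q w) ^ 2 * ((∑ jl, ‖β jl‖ ^ 2) * ‖x‖ ^ 2) := by
    calc ∑ ik : Fin p × Fin q, ‖y ik.1 ik.2‖ ^ 2 = ∑ k, ∑ i, ‖y i k‖ ^ 2 := by
          rw [Fintype.sum_prod_type, Finset.sum_comm]
      _ ≤ ∑ k, NA p v ^ 2 * ∑ j, ‖z j k‖ ^ 2 := Finset.sum_le_sum fun k _ => hyb k
      _ = NA p v ^ 2 * ∑ j, ∑ k, ‖z j k‖ ^ 2 := by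
          rw [← Finset.mul_sum, Finset.sum_comm]
      _ ≤ NA p v ^ 2 * ∑ j, (NB q w ^ 2 * ∑ l, ‖β (j, l) • x‖ ^ 2) :=
          mul_le_mul_of_nonneg_left (Finset.sum_le_sum fun j _ => hzb j) (by positivity)
      _ = _ := by
          rw [← Finset.mul_sum, mul_pow, mul_assoc, Fintype.sum_prod_type, Finset.sum_mul]
          simp only [norm_smul, mul_pow, Finset.sum_mul]
  rw [e]
  calc ‖∑ ik : Fin p × Fin q, α ik • y ik.1 ik.2‖
      ≤ ∑ ik : Fin p × Fin q, ‖α ik‖ * ‖y ik.1 ik.2‖ :=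
        (norm_sum_le _ _).trans_eq (Finset.sum_congr rfl fun _ _ => norm_smul _ _)
    _ ≤ √(∑ ik, ‖α ik‖ ^ 2) * √(∑ ik : Fin p × Fin q, ‖y ik.1 ik.2‖ ^ 2) :=
        Real.sum_mul_le_sqrt_mul_sqrt _ _ _
    _ ≤ √(∑ ik, ‖α ik‖ ^ 2) * √((NA p v * NB q w) ^ 2 * ((∑ jl, ‖β jl‖ ^ 2) * ‖x‖ ^ 2)) := by
        gcongr
    _ = _ := by
        rw [Real.sqrt_mul (by positivity), Real.sqrt_mul (by positivity),
          Real.sqrt_sq (by positivity), Real.sqrt_sq (by positivity)]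
        ring

end tens
end WP


namespace WP

section X
open Filter Topology
variable {A B X : Type u} [NonUnitalCStarAlgebra A] [PartialOrder A] [StarOrderedRing A]
variable [NonUnitalCStarAlgebra B] [PartialOrder B] [StarOrderedRing B]
    [NonUnitalNormedRing X] [StarRing X] [NormedSpace ℂ X] [CompleteSpace X]
    [IsScalarTower ℂ X X] [SMulCommClass ℂ X X]
    {NA : ∀ p : ℕ, Matrix (Fin p) (Fin p) A → ℝ}
    {NB : ∀ q : ℕ, Matrix (Fin q) (Fin q) B → ℝ}
    (hNA : ∀ p, IsCStarNorm (NA p)) (hNB : ∀ q, IsCStarNorm (NB q))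
    {ι : A ⊗[ℂ] B →ₗ[ℂ] X} (hX : IsTensorCompletion (osProjNorm NA NB) X ι)
variable {H : Type u} [NormedAddCommGroup H] [InnerProductSpace ℂ H] [CompleteSpace H]

include hNA hNB in
lemma osProjNorm_le (p q : ℕ) (α : Fin p × Fin q → ℂ) (v : Matrix (Fin p) (Fin p) A)
      (w : Matrix (Fin q) (Fin q) B) (β : Fin p × Fin q → ℂ) :
    osProjNorm NA NB (∑ ik : Fin p × Fin q, ∑ jl : Fin p × Fin q,
            (α ik * β jl) • (v ik.1 jl.1 ⊗ₜ[ℂ] w ik.2 jl.2)) ≤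
     Real.sqrt (∑ ik, ‖α ik‖ ^ 2) * NA p v * NB q w *
            Real.sqrt (∑ jl, ‖β jl‖ ^ 2) := by
  refine csInf_le ⟨0, ?_⟩ ⟨p, q, α, v, w, β, rfl, rfl⟩
  rintro r ⟨p, q, α, v, w, β, -, rfl⟩
  have hA : 0 ≤ NA p v := by rw [NA_eq NA hNA]; exact norm_nonneg _
  have hB : 0 ≤ NB q w := by rw [NA_eq NB hNB]; exact norm_nonneg _
  positivity

omit [PartialOrder A] [StarOrderedRing A] in
include hNA in
lemma N_one (a : A) : NA 1 (fun _ _ => a) = ‖a‖ := by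
  refine N_eq (N := fun a : A => NA 1 (fun _ _ => a)) ⟨?_, ?_, ?_, ?_, ?_⟩ a
  · intro x y; exact (hNA 1).add_le (fun _ _ => x) (fun _ _ => y)
  · intro x y; exact (hNA 1).smul_eq _ (fun _ _ => y)
  · intro x hx; exact congrFun (congrFun ((hNA 1).eq_zero_of (fun _ _ => x) hx) 0) 0
  · intro x y
    have := (hNA 1).mul_le (Matrix.of fun _ _ => x) (Matrix.of fun _ _ => y)
    have e : ((Matrix.of fun _ _ => x : Matrix (Fin 1) (Fin 1) A) * (Matrix.of fun _ _ => y)) =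
        Matrix.of fun _ _ => x * y := by
      ext i j; simp [Matrix.mul_apply]
    rw [e] at this
    exact this
  · intro x
    have := (hNA 1).star_mul_self (Matrix.of fun _ _ => x)
    have e : (star (Matrix.of fun _ _ => x : Matrix (Fin 1) (Fin 1) A) * (Matrix.of fun _ _ => x)) =
        Matrix.of fun _ _ => star x * x := by
      ext i j; simp [Matrix.mul_apply, Matrix.star_apply]
    rw [e] at this
    exact this

include hNA hNB hX in
lemma norm_tmul_le (a : A) (b : B) : ‖ι (a ⊗ₜ b)‖ ≤ ‖a‖ * ‖b‖ := by
  rw [hX.norm_eq]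
  have := osProjNorm_le hNA hNB 1 1 (fun _ => 1) (fun _ _ => a) (fun _ _ => b) (fun _ => 1)
  simpa [N_one hNA, N_one hNB] using this

include hX in
lemma star_iota_smul (c : ℂ) (u : A ⊗[ℂ] B) : star (ι (c • u)) = star c • star (ι u) := by
  induction u with
  | zero => simp
  | tmul a b =>
    rw [TensorProduct.smul_tmul', hX.star_tmul, hX.star_tmul, star_smul, ← TensorProduct.smul_tmul', map_smul]
  | add x y hx hy => rw [smul_add, map_add, star_add, hx, hy, map_add, star_add, smul_add]

include hNA hNB hX in
lemma star_iota_le (u : A ⊗[ℂ] B) : ‖star (ι u)‖ ≤ ‖ι u‖ := by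
  rw [hX.norm_eq u]
  refine le_csInf (osSet_nonempty NA NB u) ?_
  rintro r ⟨p, q, α, v, w, β, rfl, rfl⟩
  have e : star (ι (∑ ik : Fin p × Fin q, ∑ jl : Fin p × Fin q,
            (α ik * β jl) • (v ik.1 jl.1 ⊗ₜ[ℂ] w ik.2 jl.2))) =
     ι (∑ ik : Fin p × Fin q, ∑ jl : Fin p × Fin q,
            (star (β ik) * star (α jl)) • (star v ik.1 jl.1 ⊗ₜ[ℂ] star w ik.2 jl.2)) := by
    simp only [map_sum, star_sum, star_iota_smul hX, hX.star_tmul]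
    rw [Finset.sum_comm]
    simp only [map_smul, star_mul, Matrix.star_apply]
  rw [e, hX.norm_eq]
  refine (osProjNorm_le hNA hNB p q _ _ _ _).trans_eq ?_
  have e1 : NA p (star v) = NA p v := by
    rw [NA_eq NA hNA, NA_eq NA hNA]; exact norm_star (CStarMatrix.ofMatrix v)
  have e2 : NB q (star w) = NB q w := by
    rw [NA_eq NB hNB, NA_eq NB hNB]; exact norm_star (CStarMatrix.ofMatrix w)
  simp only [norm_star, e1, e2]
  ring

/-- the continuous involution -/
def sharp (hX : IsTensorCompletion (osProjNorm NA NB) X ι) : X →SL[starRingEnd ℂ] X :=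
  LinearMap.extendOfNorm (σ₁₂ := starRingEnd ℂ)
    { toFun := fun u => star (ι u)
      map_add' := by simp
      map_smul' := star_iota_smul hX } ι

include hNA hNB in
lemma sharp_iota (u : A ⊗[ℂ] B) : sharp hX (ι u) = star (ι u) :=
  LinearMap.extendOfNorm_eq hX.dense ⟨1, fun x => by simpa using star_iota_le hNA hNB hX x⟩ u

/-- extended product rep -/
def ext (ι : A ⊗[ℂ] B →ₗ[ℂ] X) (ρ₁ : A →⋆ₙₐ[ℂ] (H →L[ℂ] H)) (ρ₂ : B →⋆ₙₐ[ℂ] (H →L[ℂ] H)) :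
    X →L[ℂ] (H →L[ℂ] H) :=
  (prodMap ρ₁ ρ₂).extendOfNorm ι

include hNA hNB hX in
lemma ext_iota (ρ₁ : A →⋆ₙₐ[ℂ] (H →L[ℂ] H)) (ρ₂ : B →⋆ₙₐ[ℂ] (H →L[ℂ] H)) (u : A ⊗[ℂ] B) :
    ext ι ρ₁ ρ₂ (ι u) = prodMap ρ₁ ρ₂ u :=
  LinearMap.extendOfNorm_eq hX.dense
    ⟨1, fun x => by rw [one_mul, hX.norm_eq]; exact prodMap_bound NA hNA NB hNB _ _ x⟩ u

include hX in
lemma iota_mul_ind {P : A ⊗[ℂ] B → Prop} (h0 : P 0) (ht : ∀ a b, P (a ⊗ₜ b))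
   (hadd : ∀ x y, P x → P y → P (x + y)) (u) : P u := by
  induction u with
  | zero => exact h0
  | tmul a b => exact ht a b
  | add x y hx hy => exact hadd x y hx hy

include hNA hNB hX in
lemma ext_mul (ρ₁ : A →⋆ₙₐ[ℂ] (H →L[ℂ] H)) (ρ₂ : B →⋆ₙₐ[ℂ] (H →L[ℂ] H))
    (hc : ∀ a b, ρ₁ a * ρ₂ b = ρ₂ b * ρ₁ a) (x y : X) :
    ext ι ρ₁ ρ₂ (x * y) = ext ι ρ₁ ρ₂ x * ext ι ρ₁ ρ₂ y := by
  have hcl : IsClosed {z : X × X | ext ι ρ₁ ρ₂ (z.1 * z.2) = ext ι ρ₁ ρ₂ z.1 * ext ι ρ₁ ρ₂ z.2} :=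
    isClosed_eq (by fun_prop) (by fun_prop)
  have hd : DenseRange (Prod.map ι ι) := hX.dense.prodMap hX.dense
  refine hd.induction_on (p := fun z : X × X => ext ι ρ₁ ρ₂ (z.1 * z.2) = ext ι ρ₁ ρ₂ z.1 * ext ι ρ₁ ρ₂ z.2)
    (x, y) hcl ?_
  rintro ⟨u, v⟩
  simp only [Prod.map_apply]
  induction u with
  | zero => simp
  | add u u' h h' => simp only [map_add, add_mul, h, h']
  | tmul a b =>
    induction v with
    | zero => simp
    | add u u' h h' => simp only [map_add, mul_add, h, h']
    | tmul a' b' =>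
      rw [hX.mul_tmul, ext_iota hNA hNB hX, ext_iota hNA hNB hX, ext_iota hNA hNB hX,
        prodMap_tmul, prodMap_tmul, prodMap_tmul, map_mul, map_mul, mul_assoc, mul_assoc,
        ← mul_assoc (ρ₁ a') , hc a' b, mul_assoc]

include hNA hNB hX in
lemma ext_sharp (ρ₁ : A →⋆ₙₐ[ℂ] (H →L[ℂ] H)) (ρ₂ : B →⋆ₙₐ[ℂ] (H →L[ℂ] H))
    (hc : ∀ a b, ρ₁ a * ρ₂ b = ρ₂ b * ρ₁ a) (x : X) :
    ext ι ρ₁ ρ₂ (sharp hX x) = star (ext ι ρ₁ ρ₂ x) := by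
  have hcl : IsClosed {x : X | ext ι ρ₁ ρ₂ (sharp hX x) = star (ext ι ρ₁ ρ₂ x)} :=
    isClosed_eq (by fun_prop) (by fun_prop)
  refine hX.dense.induction_on (p := fun x => ext ι ρ₁ ρ₂ (sharp hX x) = star (ext ι ρ₁ ρ₂ x)) x hcl ?_
  intro u
  induction u with
  | zero => simp
  | add u u' h h' => simp only [map_add, star_add, h, h']
  | tmul a b =>
    rw [sharp_iota hNA hNB, hX.star_tmul, ext_iota hNA hNB hX, ext_iota hNA hNB hX,
        prodMap_tmul, prodMap_tmul, star_mul, map_star, map_star, ← map_star, ← map_star, hc]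

/-- approximate unit -/
def au (A B : Type u) [NonUnitalCStarAlgebra A] [PartialOrder A] [StarOrderedRing A]
    [NonUnitalCStarAlgebra B] [PartialOrder B] [StarOrderedRing B] : Filter (A × B) :=
  CStarAlgebra.approximateUnit A ×ˢ CStarAlgebra.approximateUnit B

instance : (au A B).NeBot := by
  have h1 := (CStarAlgebra.increasingApproximateUnit A).neBot
  have h2 := (CStarAlgebra.increasingApproximateUnit B).neBot
  unfold au; infer_instance

lemma au_norm : ∀ᶠ z in au A B, 0 ≤ z.1 ∧ 0 ≤ z.2 ∧ ‖z.1‖ ≤ 1 ∧ ‖z.2‖ ≤ 1 := by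
  have h1 := (CStarAlgebra.increasingApproximateUnit A).eventually_norm
  have h2 := (CStarAlgebra.increasingApproximateUnit B).eventually_norm
  have h3 := (CStarAlgebra.increasingApproximateUnit A).eventually_nonneg
  have h4 := (CStarAlgebra.increasingApproximateUnit B).eventually_nonneg
  filter_upwards [h1.prod_inl _, h2.prod_inr _, h3.prod_inl _, h4.prod_inr _] with z a b c d
  exact ⟨c, d, a, b⟩

include hNA hNB hX in
lemma tendsto_iota {α : Type*} {l : Filter α} {f : α → A} {g : α → B} {a : A} {b : B}
    (hf : Tendsto f l (𝓝 a)) (hg : Tendsto g l (𝓝 b)) :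
    Tendsto (fun t => ι (f t ⊗ₜ g t)) l (𝓝 (ι (a ⊗ₜ b))) := by
  let L : A →L[ℂ] B →L[ℂ] X := LinearMap.mkContinuous₂ ((TensorProduct.mk ℂ A B).compr₂ ι) 1
    (by intro a b; simpa using norm_tmul_le hNA hNB hX a b)
  have : ∀ a b, ι (a ⊗ₜ b) = L a b := fun a b => by simp [L]
  simp only [this]
  exact ((isBoundedBilinearMap_apply (𝕜 := ℂ) (E := B) (F := X)).continuous.tendsto (L a, b)).comp
    (((L.continuous.tendsto _).comp hf).prodMk_nhds hg)

include hNA hNB hX in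
lemma au_left (x : X) : Tendsto (fun z : A × B => ι (z.1 ⊗ₜ z.2) * x) (au A B) (𝓝 x) := by
  have key : ∀ u : A ⊗[ℂ] B, Tendsto (fun z : A × B => ι (z.1 ⊗ₜ z.2) * ι u) (au A B) (𝓝 (ι u)) := by
    intro u
    induction u with
    | zero => simp
    | add u v hu hv => simpa only [map_add, mul_add] using hu.add hv
    | tmul a b =>
      simp only [hX.mul_tmul]
      exact tendsto_iota hNA hNB hX
        (((CStarAlgebra.increasingApproximateUnit A).tendsto_mul_right a).comp tendsto_fst)
        (((CStarAlgebra.increasingApproximateUnit B).tendsto_mul_right b).comp tendsto_snd)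
  rw [Metric.tendsto_nhds]
  intro ε hε
  obtain ⟨u, hu⟩ := hX.dense.exists_dist_lt x (ε := ε / 3) (by positivity)
  filter_upwards [Metric.tendsto_nhds.1 (key u) (ε / 3) (by positivity), au_norm] with z hz ⟨_, _, h1, h2⟩
  have hle : ‖ι (z.1 ⊗ₜ[ℂ] z.2)‖ ≤ 1 :=
    (norm_tmul_le hNA hNB hX _ _).trans (mul_le_one₀ h1 (norm_nonneg _) h2)
  rw [dist_eq_norm] at *
  have e : ι (z.1 ⊗ₜ[ℂ] z.2) * x - x = ι (z.1 ⊗ₜ[ℂ] z.2) * (x - ι u) +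
    ((ι (z.1 ⊗ₜ[ℂ] z.2) * ι u - ι u) - (x - ι u)) := by rw [mul_sub]; abel
  rw [e]
  have h3 : ‖ι (z.1 ⊗ₜ[ℂ] z.2) * (x - ι u)‖ ≤ ‖x - ι u‖ :=
    (norm_mul_le _ _).trans (mul_le_of_le_one_left (norm_nonneg _) hle)
  have := norm_add_le (ι (z.1 ⊗ₜ[ℂ] z.2) * (x - ι u)) ((ι (z.1 ⊗ₜ[ℂ] z.2) * ι u - ι u) - (x - ι u))
  have := norm_sub_le (ι (z.1 ⊗ₜ[ℂ] z.2) * ι u - ι u) (x - ι u)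
  linarith

include hNA hNB hX in
lemma au_right (x : X) : Tendsto (fun z : A × B => x * ι (z.1 ⊗ₜ z.2)) (au A B) (𝓝 x) := by
  have key : ∀ u : A ⊗[ℂ] B, Tendsto (fun z : A × B => ι u * ι (z.1 ⊗ₜ z.2)) (au A B) (𝓝 (ι u)) := by
    intro u
    induction u with
    | zero => simp
    | add u v hu hv => simpa only [map_add, add_mul] using hu.add hv
    | tmul a b =>
      simp only [hX.mul_tmul]
      exact tendsto_iota hNA hNB hX
        (((CStarAlgebra.increasingApproximateUnit A).tendsto_mul_left a).comp tendsto_fst)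
        (((CStarAlgebra.increasingApproximateUnit B).tendsto_mul_left b).comp tendsto_snd)
  rw [Metric.tendsto_nhds]
  intro ε hε
  obtain ⟨u, hu⟩ := hX.dense.exists_dist_lt x (ε := ε / 3) (by positivity)
  filter_upwards [Metric.tendsto_nhds.1 (key u) (ε / 3) (by positivity), au_norm] with z hz ⟨_, _, h1, h2⟩
  have hle : ‖ι (z.1 ⊗ₜ[ℂ] z.2)‖ ≤ 1 :=
    (norm_tmul_le hNA hNB hX _ _).trans (mul_le_one₀ h1 (norm_nonneg _) h2)
  rw [dist_eq_norm] at *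
  have e : x * ι (z.1 ⊗ₜ[ℂ] z.2) - x = (x - ι u) * ι (z.1 ⊗ₜ[ℂ] z.2) +
    ((ι u * ι (z.1 ⊗ₜ[ℂ] z.2) - ι u) - (x - ι u)) := by rw [sub_mul]; abel
  rw [e]
  have h3 : ‖(x - ι u) * ι (z.1 ⊗ₜ[ℂ] z.2)‖ ≤ ‖x - ι u‖ :=
    (norm_mul_le _ _).trans (mul_le_of_le_one_right (norm_nonneg _) hle)
  have := norm_add_le ((x - ι u) * ι (z.1 ⊗ₜ[ℂ] z.2)) ((ι u * ι (z.1 ⊗ₜ[ℂ] z.2) - ι u) - (x - ι u))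
  have := norm_sub_le (ι u * ι (z.1 ⊗ₜ[ℂ] z.2) - ι u) (x - ι u)
  linarith

end X
end WP


namespace WP

section qs
open Filter Topology
open scoped ComplexOrder
variable {A : Type u} [NonUnitalCStarAlgebra A] [PartialOrder A] [StarOrderedRing A]

variable (A) in
/-- quasi-states -/
def QS : Set (A → ℂ) := {f | (∀ a b, f (a + b) = f a + f b) ∧ (∀ (c : ℂ) a, f (c • a) = c * f a) ∧
  (∀ a, 0 ≤ a → 0 ≤ f a) ∧ ∀ a, ‖f a‖ ≤ ‖a‖}

def QS.lin {f : A → ℂ} (hf : f ∈ QS A) : A →ₗ[ℂ] ℂ where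
  toFun := f
  map_add' := hf.1
  map_smul' := hf.2.1

lemma QS.lin_apply {f : A → ℂ} (hf : f ∈ QS A) (a : A) : QS.lin hf a = f a := rfl

lemma QS.zero {f : A → ℂ} (hf : f ∈ QS A) : f 0 = 0 := (QS.lin hf).map_zero
lemma QS.neg {f : A → ℂ} (hf : f ∈ QS A) (a) : f (-a) = - f a := (QS.lin hf).map_neg a
lemma QS.sub {f : A → ℂ} (hf : f ∈ QS A) (a b) : f (a - b) = f a - f b := (QS.lin hf).map_sub a b

def QS.pos {f : A → ℂ} (hf : f ∈ QS A) : A →ₚ[ℂ] ℂ :=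
  PositiveLinearMap.mk₀ (QS.lin hf) hf.2.2.1

lemma QS.pos_apply {f : A → ℂ} (hf : f ∈ QS A) (a : A) : QS.pos hf a = f a := rfl

lemma QS.star {f : A → ℂ} (hf : f ∈ QS A) (a : A) : f (star a) = star (f a) := by
  exact map_star (QS.pos hf) a

lemma QS.mono {f : A → ℂ} (hf : f ∈ QS A) {a b : A} (h : a ≤ b) : f a ≤ f b :=
  (QS.pos hf).monotone' h

lemma QS.zero_mem : (0 : A → ℂ) ∈ QS A := ⟨by simp, by simp, by simp, by simp⟩

lemma QS.isClosed : IsClosed (QS A) := by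
  simp only [QS, Set.setOf_and, Set.setOf_forall]
  refine IsClosed.inter ?_ (IsClosed.inter ?_ (IsClosed.inter ?_ ?_))
  · exact isClosed_iInter fun a => isClosed_iInter fun b => isClosed_eq (by fun_prop) (by fun_prop)
  · exact isClosed_iInter fun a => isClosed_iInter fun b => isClosed_eq (by fun_prop) (by fun_prop)
  · exact isClosed_iInter fun a => isClosed_iInter fun b => isClosed_le (by fun_prop) (by fun_prop)
  · exact isClosed_iInter fun a => isClosed_le (by fun_prop) (by fun_prop)

lemma QS.isCompact : IsCompact (QS A) := by
  refine (isCompact_univ_pi (fun a : A => isCompact_closedBall (0 : ℂ) ‖a‖)).of_isClosed_subset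
    QS.isClosed ?_
  intro f hf a _
  simpa using hf.2.2.2 a

lemma QS.comb {f g : A → ℂ} (hf : f ∈ QS A) (hg : g ∈ QS A) {s t : ℝ} (hs : 0 ≤ s) (ht : 0 ≤ t)
    (hst : s + t ≤ 1) : s • f + t • g ∈ QS A := by
  refine ⟨fun a b => ?_, fun c a => ?_, fun a ha => ?_, fun a => ?_⟩
  · simp [hf.1, hg.1]; ring
  · simp [hf.2.1, hg.2.1]; ring
  · have := hf.2.2.1 a ha
    have := hg.2.2.1 a ha
    have hs' : (0:ℂ) ≤ s := by simpa using hs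
    have ht' : (0:ℂ) ≤ t := by simpa using ht
    simp only [Pi.add_apply, Pi.smul_apply, Complex.real_smul]
    positivity
  · simp only [Pi.add_apply, Pi.smul_apply]
    refine (norm_add_le _ _).trans ?_
    rw [norm_smul, norm_smul, Real.norm_of_nonneg hs, Real.norm_of_nonneg ht]
    nlinarith [hf.2.2.2 a, hg.2.2.2 a, norm_nonneg a, norm_nonneg (f a)]

lemma QS.convex : Convex ℝ (QS A) := by
  intro f hf g hg s t hs ht hst
  exact QS.comb hf hg hs ht hst.le

/-- separation -/
lemma sep_cone (C : Set A) (hpos : ∀ a, 0 ≤ a → a ∈ C) (hadd : ∀ a ∈ C, ∀ b ∈ C, a + b ∈ C)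
    (hsmul : ∀ a ∈ C, ∀ t : ℝ, 0 ≤ t → t • a ∈ C) (hsa : ∀ a ∈ C, IsSelfAdjoint a)
    (y : A) (hy : IsSelfAdjoint y) (hyC : y ∉ closure C) :
    ∃ φ ∈ QS A, (∀ c ∈ C, 0 ≤ φ c) ∧ (φ y).re < 0 := by
  have hconv : Convex ℝ (closure C) := by
    apply Convex.closure
    intro a ha b hb s t hs ht _
    exact hadd _ (hsmul _ ha _ hs) _ (hsmul _ hb _ ht)
  obtain ⟨f, u, hu, hfy⟩ := RCLike.geometric_hahn_banach_closed_point (𝕜 := ℂ) hconv isClosed_closure hyC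
  have hu0 : 0 < u := by simpa using hu 0 (subset_closure (hpos 0 le_rfl))
  have hC : ∀ c ∈ C, (f c).re ≤ 0 := by
    intro c hc
    by_contra hlt
    push Not at hlt
    have h1 := hu _ (subset_closure (hsmul c hc (u / (f c).re) (by positivity)))
    rw [← Complex.coe_smul, map_smul] at h1
    simp only [smul_eq_mul, RCLike.re_eq_complex_re, Complex.re_ofReal_mul] at h1
    rw [div_mul_cancel₀ _ hlt.ne'] at h1
    exact lt_irrefl _ h1
  set g : A → ℂ := fun a => - (f a + star (f (star a))) / 2 with hg
  have hgsa : ∀ a, IsSelfAdjoint a → g a = ((-(f a).re : ℝ) : ℂ) := by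
    intro a ha
    simp only [hg, ha.star_eq]
    apply Complex.ext <;> simp
  have hgadd : ∀ a b, g (a + b) = g a + g b := by intro a b; simp [hg]; ring
  have hgsm : ∀ (c : ℂ) a, g (c • a) = c * g a := by intro a b; simp [hg]; ring
  have hgn : ∀ a, ‖g a‖ ≤ ‖f‖ * ‖a‖ := by
    intro a
    simp only [hg]
    rw [norm_div, norm_neg]
    have h1 := norm_add_le (f a) (star (f (star a)))
    have h2 := f.le_opNorm a
    have h3 := f.le_opNorm (star a)
    rw [norm_star] at h1 h3
    rw [div_le_iff₀ (by simp), Complex.norm_ofNat]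
    linarith
  have hM : 0 < ‖f‖ + 1 := by positivity
  refine ⟨fun a => (((‖f‖ + 1)⁻¹ : ℝ) : ℂ) * g a, ⟨?_, ?_, ?_, ?_⟩, ?_, ?_⟩
  · intro a b; beta_reduce; rw [hgadd]; ring
  · intro a b; beta_reduce; rw [hgsm]; ring
  · intro a ha
    beta_reduce
    rw [hgsa a (hsa a (hpos a ha)), ← Complex.ofReal_mul]
    have := hC a (hpos a ha)
    rw [Complex.zero_le_real]
    exact mul_nonneg (by positivity) (by linarith)
  · intro a
    beta_reduce
    rw [norm_mul, Complex.norm_real, Real.norm_of_nonneg (by positivity), inv_mul_le_iff₀ hM]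
    refine (hgn a).trans ?_
    gcongr
    linarith
  · intro a ha
    beta_reduce
    rw [hgsa a (hsa a ha), ← Complex.ofReal_mul]
    have := hC a ha
    rw [Complex.zero_le_real]
    exact mul_nonneg (by positivity) (by linarith)
  · beta_reduce
    rw [hgsa y hy, ← Complex.ofReal_mul, Complex.ofReal_re]
    have h1 : 0 < (f y).re := hu0.trans hfy
    have : 0 < (‖f‖ + 1)⁻¹ := by positivity
    nlinarith

lemma nonneg_of_QS (y : A) (hy : IsSelfAdjoint y) (h : ∀ φ ∈ QS A, 0 ≤ (φ y).re) : 0 ≤ y := by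
  by_contra hlt
  obtain ⟨φ, hφ, -, h2⟩ := sep_cone {a : A | 0 ≤ a} (fun a ha => ha) (fun a ha b hb => add_nonneg ha hb)
    (fun a ha t ht => smul_nonneg ht ha) (fun a ha => IsSelfAdjoint.of_nonneg ha) y hy
    (by rw [CStarAlgebra.isClosed_nonneg.closure_eq]; exact hlt)
  exact absurd (h φ hφ) (by linarith)

end qs
end WP


namespace WP

section ideal
open Filter Topology
open scoped ComplexOrder
variable {A : Type u} [NonUnitalCStarAlgebra A] [PartialOrder A] [StarOrderedRing A]

/-- formal conjugation by `1 - u` -/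
def cj (u x : A) : A := x - u * x - x * u + u * x * u

lemma cj_sub (u x y : A) : cj u (x - y) = cj u x - cj u y := by
  simp only [cj, mul_sub, sub_mul]; abel

lemma cj_star (u z : A) (hu : IsSelfAdjoint u) : cj u (star z * z) = star (z - z * u) * (z - z * u) := by
  simp only [cj, star_sub, star_mul, mul_sub, sub_mul, hu.star_eq, mul_assoc]; abel

lemma cj_nonneg (u p : A) (hu : IsSelfAdjoint u) (hp : 0 ≤ p) : 0 ≤ cj u p := by
  obtain ⟨z, rfl⟩ := CStarAlgebra.nonneg_iff_eq_star_mul_self.1 hp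
  rw [cj_star u z hu]
  exact star_mul_self_nonneg _

lemma cj_norm (u r : A) (hu : ‖u‖ ≤ 1) : ‖cj u r‖ ≤ 4 * ‖r‖ := by
  have h1 : ‖u * r‖ ≤ ‖r‖ := (norm_mul_le _ _).trans (by nlinarith [norm_nonneg r])
  have h2 : ‖r * u‖ ≤ ‖r‖ := (norm_mul_le _ _).trans (by nlinarith [norm_nonneg r])
  have h3 : ‖u * r * u‖ ≤ ‖r‖ := (norm_mul_le _ _).trans (by nlinarith [norm_nonneg r, norm_nonneg u, norm_nonneg (u*r)])
  unfold cj
  calc _ ≤ ‖r‖ + ‖u * r‖ + ‖r * u‖ + ‖u * r * u‖ :=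
        (norm_add_le _ _).trans (by gcongr; exact (norm_sub_le _ _).trans (by gcongr; exact norm_sub_le _ _))
    _ ≤ _ := by linarith

lemma exists_cutoff (i : A) (hi : 0 ≤ i) (δ : ℝ) (hδ : 0 < δ) :
    ∃ u v : A, IsSelfAdjoint u ∧ ‖u‖ ≤ 1 ∧ u = v * i ∧ ‖cj u i‖ ≤ δ := by
  have his : IsSelfAdjoint i := IsSelfAdjoint.of_nonneg hi
  have hd : ∀ t : ℝ, 0 < t ^ 2 + δ ^ 2 := fun t => by positivity
  have hd' : ∀ t : ℝ, t ^ 2 + δ ^ 2 ≠ 0 := fun t => (hd t).ne'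
  set w : ℝ → ℝ := fun t => t / (t ^ 2 + δ ^ 2) * t with hw
  set v : ℝ → ℝ := fun t => t / (t ^ 2 + δ ^ 2) with hv
  have hvc : Continuous v := by simp only [hv]; fun_prop (disch := exact hd' _)
  have hwc : Continuous w := hvc.mul continuous_id
  have hv0 : v 0 = 0 := by simp [hv]
  have hw0 : w 0 = 0 := by simp [hw]
  have hid : cfcₙ (fun t : ℝ => t) i = i := cfcₙ_id' ℝ i
  refine ⟨cfcₙ w i, cfcₙ v i, cfcₙ_predicate (R := ℝ) _ _, ?_, ?_, ?_⟩
  · refine norm_cfcₙ_le fun t _ => ?_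
    have : w t = t ^ 2 / (t ^ 2 + δ ^ 2) := by simp only [hw]; ring
    rw [this, Real.norm_of_nonneg (div_nonneg (sq_nonneg _) (hd t).le), div_le_one (hd t)]
    nlinarith
  · have := cfcₙ_mul v (fun t => t) i hvc.continuousOn hv0 continuous_id.continuousOn rfl
    rw [hid] at this
    exact this
  · have e : cj (cfcₙ w i) i = cfcₙ (fun t => t - w t * t - t * w t + w t * t * w t) i := by
      rw [cfcₙ_add (fun t => t - w t * t - t * w t) (fun t => w t * t * w t) i
        (by fun_prop) (by simp [hw0]) (by fun_prop) (by simp [hw0]),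
        cfcₙ_sub (fun t => t - w t * t) (fun t => t * w t) i
        (by fun_prop) (by simp [hw0]) (by fun_prop) (by simp [hw0]),
        cfcₙ_sub (fun t => t) (fun t => w t * t) i
        (by fun_prop) (by simp) (by fun_prop) (by simp [hw0]),
        cfcₙ_mul (fun t => w t * t) w i (by fun_prop) (by simp [hw0]) (by fun_prop) hw0,
        cfcₙ_mul w (fun t => t) i (by fun_prop) (by simp [hw0]) (by fun_prop) rfl,
        cfcₙ_mul (fun t => t) w i (by fun_prop) (by simp) (by fun_prop) hw0, hid]
      rfl
    rw [e]
    refine norm_cfcₙ_le fun t _ => ?_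
    have : t - w t * t - t * w t + w t * t * w t = t * δ ^ 4 / (t ^ 2 + δ ^ 2) ^ 2 := by
      simp only [hw]
      field_simp [hd' t]
      ring
    rw [this, Real.norm_eq_abs, abs_div, abs_mul, abs_of_pos (show 0 < δ ^ 4 by positivity),
      abs_of_pos (show 0 < (t ^ 2 + δ ^ 2) ^ 2 by have := hd t; positivity),
      div_le_iff₀ (by have := hd t; positivity)]
    have h2 : |t| ^ 2 = t ^ 2 := sq_abs t
    have h3 := abs_nonneg t
    rw [← h2]
    set x := |t|
    have h4 : x * δ ≤ x ^ 2 + δ ^ 2 := by nlinarith [sq_nonneg (x - δ)]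
    have h5 : δ ^ 2 ≤ x ^ 2 + δ ^ 2 := by nlinarith
    have h6 : (x * δ) * δ ^ 2 ≤ (x ^ 2 + δ ^ 2) * (x ^ 2 + δ ^ 2) := by gcongr
    nlinarith

lemma L2 (I : Submodule ℂ A) (hI : IsClosed (I : Set A)) (hl : ∀ a, ∀ x ∈ I, a * x ∈ I)
    (s : A) (hs : s ∉ I) :
    ∃ φ ∈ QS A, (∀ i ∈ I, 0 ≤ i → φ i = 0) ∧ φ (star s * s) ≠ 0 := by
  have hnot : -(star s * s) ∉ closure {c : A | ∃ p i, 0 ≤ p ∧ i ∈ I ∧ 0 ≤ i ∧ c = p - i} := by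
    intro hcl
    apply hs
    change s ∈ (I : Set A)
    rw [← hI.closure_eq, Metric.mem_closure_iff]
    intro ε hε
    set δ := ε ^ 2 / 6 with hδ
    have hδ0 : 0 < δ := by positivity
    obtain ⟨_, ⟨p, i, hp, hi, hi', rfl⟩, hd⟩ := Metric.mem_closure_iff.1 hcl δ hδ0
    rw [dist_eq_norm] at hd
    set r := -(star s * s) - (p - i) with hr
    obtain ⟨u, v, hu, hu1, huv, hui⟩ := exists_cutoff i hi' δ hδ0
    refine ⟨s * u, ?_, ?_⟩
    · rw [huv, ← mul_assoc]; exact hl _ _ hi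
    · have e : star s * s = i - p - r := by rw [hr]; abel
      have h3 : cj u (star s * s) ≤ cj u i - cj u r := by
        rw [e, cj_sub, cj_sub, sub_right_comm]
        exact sub_le_self _ (cj_nonneg u p hu hp)
      have h4 := CStarAlgebra.norm_le_norm_of_nonneg_of_le (cj_nonneg u _ hu (star_mul_self_nonneg s)) h3
      rw [cj_star u s hu, CStarRing.norm_star_mul_self] at h4
      have h5 := cj_norm u r hu1
      have h6 := norm_sub_le (cj u i) (cj u r)
      rw [dist_eq_norm]
      have : ‖s - s * u‖ * ‖s - s * u‖ < ε ^ 2 := by linarith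
      nlinarith [norm_nonneg (s - s * u)]
  obtain ⟨φ, hφ, h1, h2⟩ := sep_cone {c : A | ∃ p i, 0 ≤ p ∧ i ∈ I ∧ 0 ≤ i ∧ c = p - i}
    (fun a ha => ⟨a, 0, ha, I.zero_mem, le_rfl, by simp⟩)
    (by
      rintro _ ⟨p, i, hp, hi, hi', rfl⟩ _ ⟨q, j, hq, hj, hj', rfl⟩
      exact ⟨p + q, i + j, add_nonneg hp hq, I.add_mem hi hj, add_nonneg hi' hj', by abel⟩)
    (by
      rintro _ ⟨p, i, hp, hi, hi', rfl⟩ t ht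
      exact ⟨t • p, t • i, smul_nonneg ht hp, by
        rw [← Complex.coe_smul]; exact I.smul_mem _ hi, smul_nonneg ht hi', smul_sub _ _ _⟩)
    (by
      rintro _ ⟨p, i, hp, hi, hi', rfl⟩
      exact (IsSelfAdjoint.of_nonneg hp).sub (IsSelfAdjoint.of_nonneg hi'))
    (-(star s * s)) (IsSelfAdjoint.star_mul_self s).neg hnot
  refine ⟨φ, hφ, fun i hi hi' => ?_, fun h0 => ?_⟩
  · have := h1 (0 - i) ⟨0, i, le_rfl, hi, hi', rfl⟩
    rw [zero_sub, QS.neg hφ] at this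
    exact le_antisymm (by simpa using this) (hφ.2.2.1 i hi')
  · rw [QS.neg hφ, h0] at h2
    simp at h2

/-- pure quasi-states -/
def Pure (φ : A → ℂ) : Prop := φ ∈ Set.extremePoints ℝ (QS A) ∧ φ ≠ 0

lemma Pure.mem {φ : A → ℂ} (h : Pure φ) : φ ∈ QS A := h.1.1

lemma L3 (I : Submodule ℂ A) (hI : IsClosed (I : Set A)) (hl : ∀ a, ∀ x ∈ I, a * x ∈ I)
    (hne : I ≠ ⊤) : ∃ φ : A → ℂ, Pure φ ∧ ∀ i ∈ I, 0 ≤ i → φ i = 0 := by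
  obtain ⟨s, hs⟩ : ∃ s, s ∉ I := by
    by_contra h
    push Not at h
    exact hne (eq_top_iff.2 fun x _ => h x)
  obtain ⟨φ₀, hφ₀, h1, h2⟩ := L2 I hI hl s hs
  set F : Set (A → ℂ) := QS A ∩ {f | ∀ i ∈ I, 0 ≤ i → f i = 0} with hF
  have hFc : IsClosed F := by
    refine QS.isClosed.inter ?_
    simp only [Set.setOf_forall]
    exact isClosed_iInter fun i => isClosed_iInter fun _ => isClosed_iInter fun _ =>
      isClosed_eq (by fun_prop) (by fun_prop)
  have hFk : IsCompact F := QS.isCompact.of_isClosed_subset hFc Set.inter_subset_left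
  have hFx : IsExtreme ℝ (QS A) F := by
    refine ⟨Set.inter_subset_left, ?_⟩
    rintro x hx y hy z hz ⟨a, b, ha, hb, hab, rfl⟩
    refine ⟨hx, fun i hi hi' => ?_⟩
    have h3 := hz.2 i hi hi'
    simp only [Pi.add_apply, Pi.smul_apply] at h3
    have hxi := hx.2.2.1 i hi'
    have hyi := hy.2.2.1 i hi'
    rw [Complex.le_def] at hxi hyi
    have h4 := congrArg Complex.re h3
    simp at h4 hxi hyi
    apply Complex.ext
    · simp
      have := mul_nonneg hb.le hyi.1
      have := mul_nonneg ha.le hxi.1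
      have h0 : a * (x i).re = 0 := by linarith
      rcases mul_eq_zero.1 h0 with h | h
      · linarith
      · exact h
    · simp [← hxi.2]
  have hFv : Convex ℝ F := by
    intro x hx y hy a b ha hb hab
    refine ⟨QS.convex hx.1 hy.1 ha hb hab, fun i hi hi' => ?_⟩
    simp [hx.2 i hi hi', hy.2 i hi hi']
  by_contra hcon
  push Not at hcon
  have hz : Set.extremePoints ℝ F ⊆ {0} := by
    intro φ hφ
    by_contra h0
    obtain ⟨i, hi, hi', h⟩ := hcon φ ⟨hFx.extremePoints_subset_extremePoints hφ, h0⟩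
    exact h (hφ.1.2 i hi hi')
  have hk := closure_convexHull_extremePoints hFk hFv
  have hsub : F ⊆ {0} := by
    rw [← hk]
    exact closure_minimal (convexHull_min hz (convex_singleton _)) isClosed_singleton
  have := hsub ⟨hφ₀, h1⟩
  rw [Set.mem_singleton_iff] at this
  exact h2 (by rw [this]; rfl)

end ideal
end WP


namespace WP

section slice
open Filter Topology
open scoped ComplexOrder
variable {A : Type u} [NonUnitalCStarAlgebra A] [PartialOrder A] [StarOrderedRing A]

lemma compact_convexJoin {E : Type u} [AddCommGroup E] [Module ℝ E] [TopologicalSpace E]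
    [IsTopologicalAddGroup E] [ContinuousSMul ℝ E] {T C : Set E} (hT : IsCompact T) (hC : IsCompact C) :
    IsCompact (convexJoin ℝ T C) := by
  have : convexJoin ℝ T C = (fun z : ℝ × E × E => (1 - z.1) • z.2.1 + z.1 • z.2.2) ''
      (Set.Icc (0:ℝ) 1 ×ˢ T ×ˢ C) := by
    ext z
    simp only [mem_convexJoin, segment_eq_image, Set.mem_image, Set.mem_prod, Prod.exists]
    constructor
    · rintro ⟨a, ha, b, hb, θ, hθ, rfl⟩
      exact ⟨θ, a, b, ⟨hθ, ha, hb⟩, rfl⟩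
    · rintro ⟨θ, a, b, ⟨hθ, ha, hb⟩, rfl⟩
      exact ⟨a, ha, b, hb, θ, hθ, rfl⟩
  rw [this]
  exact (isCompact_Icc.prod (hT.prod hC)).image (by fun_prop)

lemma join_step {E : Type u} [AddCommGroup E] [Module ℝ E] [TopologicalSpace E]
    [IsTopologicalAddGroup E] [ContinuousSMul ℝ E] {S T C : Set E} (φ : E) (hφ : φ ∈ Set.extremePoints ℝ S)
    (hS : Convex ℝ S)
    (hT : IsCompact T) (hTv : Convex ℝ T) (hTS : T ⊆ S) (hTφ : φ ∉ T)
    (hC : IsCompact C) (hCv : Convex ℝ C) (hCS : C ⊆ S) (hCφ : φ ∉ C) :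
    ∃ T' : Set E, IsCompact T' ∧ Convex ℝ T' ∧ T' ⊆ S ∧ φ ∉ T' ∧ T ⊆ T' ∧ C ⊆ T' := by
  rcases T.eq_empty_or_nonempty with rfl | hTn
  · exact ⟨C, hC, hCv, hCS, hCφ, Set.empty_subset _, le_rfl⟩
  rcases C.eq_empty_or_nonempty with rfl | hCn
  · exact ⟨T, hT, hTv, hTS, hTφ, le_rfl, Set.empty_subset _⟩
  refine ⟨convexJoin ℝ T C, compact_convexJoin hT hC, hTv.convexJoin hCv, ?_, ?_,
    subset_convexJoin_left hCn, subset_convexJoin_right hTn⟩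
  · intro z hz
    obtain ⟨a, ha, b, hb, h⟩ := mem_convexJoin.1 hz
    exact hS.segment_subset (hTS ha) (hCS hb) h
  · intro hz
    obtain ⟨a, ha, b, hb, h⟩ := mem_convexJoin.1 hz
    rcases (mem_extremePoints_iff_forall_segment.1 hφ).2 a (hTS ha) b (hCS hb) h with h | h
    · exact hTφ (h ▸ ha)
    · exact hCφ (h ▸ hb)

lemma dual_pi {J : Type u} (f : (J → ℂ) →L[ℂ] ℂ) : ∃ (s : Finset J) (c : J → ℂ), ∀ g, f g = ∑ i ∈ s, c i * g i := by
  classical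
  have hV : {g : J → ℂ | ‖f g‖ < 1} ∈ 𝓝 (0 : J → ℂ) := by
    apply (isOpen_lt (by fun_prop) continuous_const).mem_nhds
    simp
  rw [nhds_pi, Filter.mem_pi'] at hV
  obtain ⟨s, t, ht, hst⟩ := hV
  have h0 : ∀ g : J → ℂ, (∀ i ∈ s, g i = 0) → f g = 0 := by
    intro g hg
    by_contra hne
    have : (f g)⁻¹ • g ∈ Set.pi (s : Set J) t := by
      intro i hi
      simp only [Pi.smul_apply, hg i hi, smul_zero]
      exact mem_of_mem_nhds (ht i)
    have := hst this
    simp [hne] at this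
  refine ⟨s, fun i => f (Pi.single i 1), fun g => ?_⟩
  have := h0 (g - ∑ i ∈ s, g i • Pi.single i 1) (by
    intro j hj
    simp [Finset.sum_apply, Pi.single_apply, hj])
  rw [map_sub, sub_eq_zero, map_sum] at this
  rw [this]
  refine Finset.sum_congr rfl fun i _ => ?_
  rw [map_smul, smul_eq_mul, mul_comm]

lemma QS.sum {f : A → ℂ} (hf : f ∈ QS A) (s : Finset A) (c : A → ℂ) :
    f (∑ i ∈ s, c i • i) = ∑ i ∈ s, c i * f i := by
  have := map_sum (QS.lin hf) (fun i => c i • i) s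
  simp only [map_smul, QS.lin_apply, smul_eq_mul] at this
  exact this

/-- excluded pieces -/
def piece (φ : A → ℂ) (ε : ℝ) (z : A × ℂ) : Set (A → ℂ) :=
  QS A ∩ {f | ε / 2 ≤ (z.2 * (f z.1 - φ z.1)).re}

lemma piece_compact (φ : A → ℂ) (ε : ℝ) (z : A × ℂ) : IsCompact (piece φ ε z) :=
  QS.isCompact.of_isClosed_subset (QS.isClosed.inter (isClosed_le (by fun_prop) (by fun_prop)))
    Set.inter_subset_left

lemma piece_convex (φ : A → ℂ) (ε : ℝ) (z : A × ℂ) : Convex ℝ (piece φ ε z) := by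
  rintro f ⟨hf, hf'⟩ g ⟨hg, hg'⟩ s t hs ht hst
  refine ⟨QS.convex hf hg hs ht hst, ?_⟩
  simp only [Set.mem_setOf_eq] at hf' hg' ⊢
  have : z.2 * ((s • f + t • g) z.1 - φ z.1) =
    (s:ℂ) * (z.2 * (f z.1 - φ z.1)) + (t:ℂ) * (z.2 * (g z.1 - φ z.1)) := by
    have h1 : (s : ℂ) + t = 1 := by exact_mod_cast hst
    simp only [Pi.add_apply, Pi.smul_apply, Complex.real_smul]
    linear_combination (- z.2 * φ z.1) * (1 - h1) + z.2 * φ z.1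
  rw [this, Complex.add_re, Complex.re_ofReal_mul, Complex.re_ofReal_mul]
  have k1 := mul_le_mul_of_nonneg_left hf' hs
  have k2 := mul_le_mul_of_nonneg_left hg' ht
  have k3 : s * (ε / 2) + t * (ε / 2) = ε / 2 := by rw [← add_mul, hst, one_mul]
  linarith

lemma exists_hull (φ : A → ℂ) (hφ : φ ∈ Set.extremePoints ℝ (QS A)) (ε : ℝ) (hε : 0 < ε)
    (G : Finset (A × ℂ)) : ∃ T : Set (A → ℂ), IsCompact T ∧ Convex ℝ T ∧ T ⊆ QS A ∧ φ ∉ T ∧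
      ∀ z ∈ G, piece φ ε z ⊆ T := by
  classical
  induction G using Finset.induction_on with
  | empty => exact ⟨∅, isCompact_empty, convex_empty, by simp, by simp, by simp⟩
  | insert z G _ ih =>
    obtain ⟨T, h1, h2, h3, h4, h5⟩ := ih
    obtain ⟨T', g1, g2, g3, g4, g5, g6⟩ := join_step φ hφ QS.convex h1 h2 h3 h4
      (piece_compact φ ε z) (piece_convex φ ε z) Set.inter_subset_left
      (by rintro ⟨-, h⟩; simp at h; linarith)
    refine ⟨T', g1, g2, g3, g4, ?_⟩
    intro w hw
    rcases Finset.mem_insert.1 hw with rfl | hw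
    · exact g6
    · exact (h5 w hw).trans g5

lemma slice0 (φ : A → ℂ) (hφ : φ ∈ Set.extremePoints ℝ (QS A)) (F : Finset A) (ε : ℝ) (hε : 0 < ε) :
    ∃ (x : A) (t : ℝ), IsSelfAdjoint x ∧ t < (φ x).re ∧
      ∀ f ∈ QS A, t < (f x).re → ∀ a ∈ F, ‖f a - φ a‖ < ε := by
  classical
  obtain ⟨T, h1, h2, h3, h4, h5⟩ := exists_hull φ hφ ε hε
    (F ×ˢ ({1, -1, Complex.I, -Complex.I} : Finset ℂ))
  obtain ⟨ℓ, t, ht, htφ⟩ := RCLike.geometric_hahn_banach_closed_point (𝕜 := ℂ) h2 h1.isClosed h4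
  obtain ⟨s, c, hsc⟩ := dual_pi ℓ
  set x₀ : A := ∑ i ∈ s, c i • i with hx₀
  have key : ∀ f ∈ QS A, (f ((1/2:ℂ) • (x₀ + star x₀))).re = (ℓ f).re := by
    intro f hf
    rw [hf.2.1, hf.1, QS.star hf, hx₀, QS.sum hf, ← hsc]
    simp
    ring
  refine ⟨(1/2:ℂ) • (x₀ + star x₀), t, ?_, ?_, ?_⟩
  · rw [isSelfAdjoint_iff, star_smul, star_add, star_star, add_comm (star x₀)]
    congr 1
    simp
  · rw [key φ hφ.1]; exact htφ
  · intro f hf hft a ha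
    rw [key f hf] at hft
    have hfT : f ∉ T := fun h => absurd (ht f h) (by simpa using hft.le)
    have hd : ∀ d ∈ ({1, -1, Complex.I, -Complex.I} : Finset ℂ), (d * (f a - φ a)).re < ε / 2 := by
      intro d hd
      by_contra hcon
      push Not at hcon
      exact hfT (h5 (a, d) (Finset.mk_mem_product ha hd) ⟨hf, hcon⟩)
    have d1 := hd 1 (by simp)
    have d2 := hd (-1) (by simp)
    have d3 := hd Complex.I (by simp)
    have d4 := hd (-Complex.I) (by simp)
    simp only [one_mul, neg_mul, Complex.neg_re, Complex.I_mul_re] at d1 d2 d3 d4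
    refine (Complex.norm_le_abs_re_add_abs_im _).trans_lt ?_
    have : |(f a - φ a).re| < ε / 2 := abs_lt.2 ⟨by linarith, d1⟩
    have : |(f a - φ a).im| < ε / 2 := abs_lt.2 ⟨by linarith, by linarith⟩
    linarith

lemma slice (φ : A → ℂ) (hφ : Pure φ) (F : Finset A) (ε : ℝ) (hε : 0 < ε) :
    ∃ (x : A) (t : ℝ), IsSelfAdjoint x ∧ 0 ≤ t ∧ t < (φ x).re ∧
      ∀ f ∈ QS A, t < (f x).re → ∀ a ∈ F, ‖f a - φ a‖ < ε := by
  classical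
  obtain ⟨a₀, ha₀⟩ : ∃ a, φ a ≠ 0 := by
    by_contra h
    push Not at h
    exact hφ.2 (funext h)
  obtain ⟨x, t, h1, h2, h3⟩ := slice0 φ hφ.1 (insert a₀ F) (min ε ‖φ a₀‖) (lt_min hε (norm_pos_iff.2 ha₀))
  refine ⟨x, t, h1, ?_, h2, fun f hf hft a ha => ?_⟩
  · by_contra hlt
    push Not at hlt
    have := h3 0 QS.zero_mem (by simpa using hlt) a₀ (by simp)
    simp at this
  · exact (h3 f hf hft a (Finset.mem_insert_of_mem ha)).trans_le (min_le_left _ _)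

end slice
end WP


namespace WP

section excision
open Filter Topology
open scoped ComplexOrder
variable {A : Type u} [NonUnitalCStarAlgebra A] [PartialOrder A] [StarOrderedRing A]

lemma QS.nonneg {f : A → ℂ} (hf : f ∈ QS A) {a : A} (ha : 0 ≤ a) : 0 ≤ (f a).re ∧ f a = ((f a).re : ℂ) := by
  have := hf.2.2.1 a ha
  rw [Complex.le_def] at this
  refine ⟨this.1, Complex.ext (by simp) (by simp [← this.2])⟩

lemma QS_cs {f : A → ℂ} (hf : f ∈ QS A) (a b : A) :
    ‖f (star a * b)‖ ^ 2 ≤ (f (star a * a)).re * (f (star b * b)).re := by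
  set g := QS.pos hf
  have h := norm_inner_le_norm (𝕜 := ℂ) (g.toPreGNS a) (g.toPreGNS b)
  rw [PositiveLinearMap.preGNS_inner_def] at h
  have h1 := g.preGNS_norm_sq (g.toPreGNS a)
  have h2 := g.preGNS_norm_sq (g.toPreGNS b)
  simp only [PositiveLinearMap.ofPreGNS_toPreGNS] at h h1 h2
  have k1 : ‖g.toPreGNS a‖ ^ 2 = (f (star a * a)).re := by
    have := congrArg Complex.re h1
    rw [← Complex.ofReal_pow, Complex.ofReal_re] at this
    exact this
  have k2 : ‖g.toPreGNS b‖ ^ 2 = (f (star b * b)).re := by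
    have := congrArg Complex.re h2
    rw [← Complex.ofReal_pow, Complex.ofReal_re] at this
    exact this
  rw [← k1, ← k2, ← mul_pow]
  exact pow_le_pow_left₀ (norm_nonneg _) h 2

lemma QS_conj_bound {f : A → ℂ} (hf : f ∈ QS A) (e a : A) :
    ‖f (star e * a * e)‖ ≤ ‖a‖ * (f (star e * e)).re := by
  have h1 := QS_cs hf e (a * e)
  have h0 := (QS.nonneg hf (star_mul_self_nonneg e)).1
  have h2 : (f (star (a * e) * (a * e))).re ≤ ‖a‖ ^ 2 * (f (star e * e)).re := by
    have h3 := CStarAlgebra.star_left_conjugate_le_norm_smul (a := e) (b := star a * a)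
    rw [CStarRing.norm_star_mul_self] at h3
    have h4 := QS.mono hf h3
    rw [Complex.le_def] at h4
    have h5 := h4.1
    rw [← Complex.coe_smul, hf.2.1, Complex.re_ofReal_mul] at h5
    convert h5 using 1
    · rw [star_mul]; simp only [mul_assoc]
    · ring
  rw [← mul_assoc] at h1
  have : ‖f (star e * a * e)‖ ^ 2 ≤ (‖a‖ * (f (star e * e)).re) ^ 2 := by nlinarith
  exact le_of_sq_le_sq this (by positivity)

lemma norm_le_of_QS_sa (y c : A) (hy : IsSelfAdjoint y) (hc : 0 ≤ c) (hc1 : ‖c‖ ≤ 1) (ε : ℝ) (hε : 0 ≤ ε)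
    (h : ∀ f ∈ QS A, |(f y).re| ≤ ε * (f c).re) : ‖y‖ ≤ 3 * ε := by
  have hec : 0 ≤ ε • c := smul_nonneg hε hc
  have hre : ∀ f ∈ QS A, (f (ε • c)).re = ε * (f c).re := by
    intro f hf
    rw [← Complex.coe_smul, hf.2.1, Complex.re_ofReal_mul]
  have h1 : 0 ≤ ε • c - y := by
    refine nonneg_of_QS _ ((IsSelfAdjoint.of_nonneg hec).sub hy) fun f hf => ?_
    rw [QS.sub hf, Complex.sub_re, hre f hf]
    linarith [(abs_le.1 (h f hf)).2]
  have h2 : 0 ≤ ε • c + y := by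
    refine nonneg_of_QS _ ((IsSelfAdjoint.of_nonneg hec).add hy) fun f hf => ?_
    rw [hf.1, Complex.add_re, hre f hf]
    linarith [(abs_le.1 (h f hf)).1]
  have h3 : ε • c - y ≤ ε • c + ε • c := by
    rw [← sub_nonneg]
    convert h2 using 1
    abel
  have h4 := CStarAlgebra.norm_le_norm_of_nonneg_of_le h1 h3
  have h5 : ‖ε • c‖ ≤ ε := by
    rw [norm_smul, Real.norm_of_nonneg hε]; nlinarith
  have h6 := norm_add_le (ε • c) (ε • c)
  have h7 : y = ε • c - (ε • c - y) := by abel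
  have h8 := norm_sub_le (ε • c) (ε • c - y)
  rw [← h7] at h8
  linarith

lemma norm_le_of_QS (y c : A) (hc : 0 ≤ c) (hc1 : ‖c‖ ≤ 1) (ε : ℝ) (hε : 0 ≤ ε)
    (h : ∀ f ∈ QS A, ‖f y‖ ≤ ε * (f c).re) : ‖y‖ ≤ 6 * ε := by
  have h1 : ‖(1/2:ℂ) • (y + star y)‖ ≤ 3 * ε := by
    refine norm_le_of_QS_sa _ c ?_ hc hc1 ε hε fun f hf => ?_
    · rw [isSelfAdjoint_iff, star_smul, star_add, star_star, add_comm (star y)]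
      congr 1
      simp
    · rw [hf.2.1, hf.1, QS.star hf]
      have : (1 / 2 * (f y + star (f y))).re = (f y).re := by simp; ring
      rw [this]
      exact (Complex.abs_re_le_norm _).trans (h f hf)
  have h2 : ‖(-Complex.I/2:ℂ) • (y - star y)‖ ≤ 3 * ε := by
    refine norm_le_of_QS_sa _ c ?_ hc hc1 ε hε fun f hf => ?_
    · rw [isSelfAdjoint_iff, star_smul, star_sub, star_star, ← neg_sub y, smul_neg, ← neg_smul]
      congr 1
      simp
      ring
    · rw [hf.2.1, QS.sub hf, QS.star hf]
      have : (-Complex.I / 2 * (f y - star (f y))).re = (f y).im := by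
        simp; ring
      rw [this]
      exact (Complex.abs_im_le_norm _).trans (h f hf)
  have h3 : y = (1/2:ℂ) • (y + star y) + Complex.I • ((-Complex.I/2:ℂ) • (y - star y)) := by
    rw [smul_smul, show Complex.I * (-Complex.I / 2) = 1/2 by
      rw [mul_div_assoc', mul_neg, Complex.I_mul_I]; norm_num, ← smul_add]
    rw [add_add_sub_cancel, ← two_smul ℂ, smul_smul]; norm_num
  rw [h3]
  refine (norm_add_le _ _).trans ?_
  rw [norm_smul Complex.I, Complex.norm_I, one_mul]
  linarith

lemma excision (φ : A → ℂ) (hφ : Pure φ) (F : Finset A) (ε : ℝ) (hε : 0 < ε) :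
    ∃ e e1 : A, IsSelfAdjoint e ∧ ‖e‖ ≤ 1 ∧ 0 ≤ e1 ∧ e1 * e = e1 ∧ e * e1 = e1 ∧ φ e1 ≠ 0 ∧
      ∀ a ∈ F, ‖e * a * e - φ a • (e * e)‖ ≤ ε := by
  obtain ⟨x, t, hx, ht, htx, hs⟩ := slice φ hφ F (ε / 6) (by positivity)
  set m := (φ x).re with hm
  obtain ⟨t1, h1, h1'⟩ := exists_between htx
  obtain ⟨t2, h2, h2'⟩ := exists_between h1'
  have h01 : 0 < t1 := ht.trans_lt h1
  have h02 : 0 < t2 := h01.trans h2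
  set η : ℝ → ℝ := fun s => max 0 (min 1 ((s - t1) / (t2 - t1))) with hη
  set κ : ℝ → ℝ := fun s => max 0 (s - t2) with hκ
  have hηc : Continuous η := by simp only [hη]; fun_prop
  have hκc : Continuous κ := by simp only [hκ]; fun_prop
  have hd : 0 < t2 - t1 := by linarith
  have hη1 : ∀ s, s ≤ t1 → η s = 0 := by
    intro s hs
    simp only [hη]
    apply max_eq_left
    exact (min_le_right _ _).trans (div_nonpos_of_nonpos_of_nonneg (by linarith) hd.le)
  have hη0 : η 0 = 0 := hη1 0 h01.le
  have hκ0 : κ 0 = 0 := by simp only [hκ]; exact max_eq_left (by linarith)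
  have hη2 : ∀ s, t2 ≤ s → η s = 1 := by
    intro s hs
    simp only [hη]
    rw [min_eq_left, max_eq_right zero_le_one]
    rw [le_div_iff₀ hd]; linarith
  have hηκ : (fun s => η s * κ s) = κ := by
    funext s
    rcases le_total t2 s with h | h
    · rw [hη2 s h, one_mul]
    · have : κ s = 0 := by simp only [hκ]; exact max_eq_left (by linarith)
      rw [this, mul_zero]
  have hηnn : ∀ s, 0 ≤ η s := fun s => le_max_left _ _
  have hηle : ∀ s, η s ≤ 1 := fun s => max_le zero_le_one (min_le_left _ _)
  have hid : cfcₙ (fun s : ℝ => s) x = x := cfcₙ_id' ℝ x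
  set e := cfcₙ η x with he
  set e1 := cfcₙ κ x with he1
  have hesa : IsSelfAdjoint e := cfcₙ_predicate (R := ℝ) _ _
  have hen : ‖e‖ ≤ 1 := norm_cfcₙ_le fun s _ => by
    rw [Real.norm_of_nonneg (hηnn s)]; exact hηle s
  have hee : 0 ≤ e * e := by
    have := star_mul_self_nonneg e
    rwa [hesa.star_eq] at this
  have hee1 : ‖e * e‖ ≤ 1 := (norm_mul_le _ _).trans (by nlinarith [norm_nonneg e])
  refine ⟨e, e1, hesa, hen, ?_, ?_, ?_, ?_, ?_⟩
  · exact cfcₙ_nonneg fun s _ => le_max_left _ _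
  · have := cfcₙ_mul κ η x hκc.continuousOn hκ0 hηc.continuousOn hη0
    rw [← he, ← he1] at this
    rw [← this, he1]
    congr 1
    rw [← hηκ]; funext s; rw [mul_comm]
    exact congrFun hηκ s ▸ rfl
  · have := cfcₙ_mul η κ x hηc.continuousOn hη0 hκc.continuousOn hκ0
    rw [hηκ] at this
    exact this.symm
  · intro h0
    set g : ℝ → ℝ := fun s => max 0 (min s t2) with hg
    have hgc : Continuous g := by simp only [hg]; fun_prop
    have hg0 : g 0 = 0 := by simp only [hg]; rw [min_eq_left h02.le, max_self]
    have hle : cfcₙ (fun s : ℝ => s) x ≤ cfcₙ (fun s => κ s + g s) x := by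
      refine cfcₙ_mono (fun s _ => ?_) (by fun_prop) (by fun_prop) rfl (by simp [hκ0, hg0])
      simp only [hκ, hg]
      rcases le_total t2 s with h | h
      · rw [min_eq_right h]
        linarith [le_max_right 0 (s - t2), le_max_right 0 t2]
      · rw [min_eq_left h]
        linarith [le_max_left 0 (s - t2), le_max_right 0 s]
    rw [hid, cfcₙ_add κ g x hκc.continuousOn hκ0 hgc.continuousOn hg0] at hle
    have h3 := (Complex.le_def.1 (QS.mono hφ.mem hle)).1
    rw [hφ.mem.1, ← he1, h0, zero_add] at h3
    have h4 : ‖cfcₙ g x‖ ≤ t2 := norm_cfcₙ_le fun s _ => by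
      rw [Real.norm_of_nonneg (le_max_left _ _)]
      exact max_le h02.le (min_le_right _ _)
    have h5 := (Complex.re_le_norm _).trans ((hφ.mem.2.2.2 (cfcₙ g x)).trans h4)
    linarith
  · intro a ha
    have hexe : t1 • (e * e) ≤ e * x * e := by
      have k1 : e * e = cfcₙ (fun s => η s * η s) x :=
        (cfcₙ_mul η η x hηc.continuousOn hη0 hηc.continuousOn hη0).symm
      have k2 : e * x * e = cfcₙ (fun s => η s * s * η s) x := by
        rw [cfcₙ_mul (fun s => η s * s) η x (by fun_prop) (by simp) (by fun_prop) hη0,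
          cfcₙ_mul η (fun s => s) x (by fun_prop) hη0 (by fun_prop) rfl, hid]
      rw [k1, k2, ← cfcₙ_smul t1 (fun s => η s * η s) x (by fun_prop) (by simp [hη0])]
      refine cfcₙ_mono (fun s _ => ?_) (by fun_prop) (by fun_prop) (by simp [hη0]) (by simp)
      rcases le_total s t1 with h | h
      · simp [hη1 s h]
      · have := mul_nonneg (hηnn s) (hηnn s)
        simp only [smul_eq_mul]
        nlinarith
    have key : ∀ f ∈ QS A, ‖f (e * a * e - φ a • (e * e))‖ ≤ ε / 6 * (f (e * e)).re := by
      intro f hf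
      have hb : ∀ b, ‖f (e * b * e)‖ ≤ ‖b‖ * (f (e * e)).re := by
        intro b
        have := QS_conj_bound hf e b
        rwa [hesa.star_eq] at this
      obtain ⟨hr0, hr⟩ := QS.nonneg hf hee
      rw [QS.sub hf, hf.2.1]
      set r := (f (e * e)).re with hrdef
      rcases hr0.eq_or_lt with h | h
      · have h3 := hb a
        rw [← h, mul_zero] at h3
        rw [norm_le_zero_iff.1 h3, hr, ← h]; simp
      · have hg : (fun b => ((r⁻¹ : ℝ) : ℂ) * f (e * b * e)) ∈ QS A := by
          refine ⟨fun b c => ?_, fun z b => ?_, fun b hb' => ?_, fun b => ?_⟩ <;> beta_reduce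
          · rw [mul_add, add_mul, hf.1, mul_add]
          · rw [mul_smul_comm, smul_mul_assoc, hf.2.1]; ring
          · have h3 := star_left_conjugate_nonneg hb' e
            rw [hesa.star_eq] at h3
            have h4 := hf.2.2.1 _ h3
            exact mul_nonneg (by rw [Complex.zero_le_real]; positivity) h4
          · rw [norm_mul, Complex.norm_real, Real.norm_of_nonneg (by positivity), inv_mul_le_iff₀ h,
              mul_comm]
            exact hb b
        have h3 := hs _ hg (by
          beta_reduce
          rw [Complex.re_ofReal_mul]
          have h4 := (Complex.le_def.1 (QS.mono hf hexe)).1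
          rw [← Complex.coe_smul, hf.2.1, Complex.re_ofReal_mul] at h4
          refine h1.trans_le ?_
          rw [le_inv_mul_iff₀ h, mul_comm]
          exact h4) a ha
        beta_reduce at h3
        have h5 : f (e * a * e) - φ a * f (e * e) = (r : ℂ) * (((r⁻¹ : ℝ) : ℂ) * f (e * a * e) - φ a) := by
          rw [hr]
          have : (r : ℂ) ≠ 0 := by exact_mod_cast h.ne'
          push_cast
          field_simp
        rw [h5, norm_mul, Complex.norm_real, Real.norm_of_nonneg h.le, mul_comm]
        gcongr
    have := norm_le_of_QS _ _ hee hee1 (ε / 6) (by positivity) key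
    linarith

end excision
end WP


namespace WP

section neumann
open Filter Topology

lemma neumann {Y : Type u} [NonUnitalNormedRing Y] (S : AddSubgroup Y) (hS : IsClosed (S : Set Y))
    (hl : ∀ a, ∀ x ∈ S, a * x ∈ S) (hr : ∀ a, ∀ x ∈ S, x * a ∈ S) (H p k : Y) (hp : H * p = H)
    (hk : k ∈ S) (hpk : ‖p - k‖ < 1) : H ∈ S := by
  set y : ℕ → Y := fun n => (fun z => z * (p - k))^[n] H with hy
  have hy0 : y 0 = H := rfl
  have hys : ∀ n, y (n + 1) = y n * (p - k) := fun n => by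
    simp only [hy, Function.iterate_succ_apply']
  have hn : ∀ n, ‖y n‖ ≤ ‖H‖ * ‖p - k‖ ^ n := by
    intro n
    induction n with
    | zero => simp [hy0]
    | succ n ih =>
      rw [hys, pow_succ, ← mul_assoc]
      exact (norm_mul_le _ _).trans (by gcongr)
  have hmem : ∀ n, H - y n ∈ S := by
    intro n
    induction n with
    | zero => simp [hy0, S.zero_mem]
    | succ n ih =>
      have : H - y (n + 1) = H * k + (H - y n) * (p - k) := by
        rw [hys, sub_mul, mul_sub H, hp]; abel
      rw [this]
      exact S.add_mem (hl _ _ hk) (hr _ _ ih)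
  have hlim : Tendsto y atTop (𝓝 0) := by
    refine squeeze_zero_norm hn ?_
    simpa using (tendsto_pow_atTop_nhds_zero_of_lt_one (norm_nonneg _) hpk).const_mul ‖H‖
  have h2 : Tendsto (fun n => H - y n) atTop (𝓝 H) := by
    simpa using tendsto_const_nhds.sub hlim
  exact hS.mem_of_tendsto h2 (Eventually.of_forall hmem)

end neumann

section prime
open Filter Topology
open scoped ComplexOrder
variable {A : Type u} [NonUnitalCStarAlgebra A] [PartialOrder A] [StarOrderedRing A]

lemma QS.continuous {f : A → ℂ} (hf : f ∈ QS A) : Continuous f := by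
  have : Continuous (QS.lin hf) :=
    AddMonoidHomClass.continuous_of_bound (QS.lin hf) 1 (fun a => by rw [one_mul]; exact hf.2.2.2 a)
  exact this

/-- kernel-type ideal -/
def P {φ : A → ℂ} (hφ : φ ∈ QS A) : Submodule ℂ A where
  carrier := {a | ∀ x y, φ (x * a * y) = 0}
  add_mem' := by
    intro a b ha hb x y
    rw [mul_add, add_mul, hφ.1, ha, hb, add_zero]
  zero_mem' := by intro x y; simp [QS.zero hφ]
  smul_mem' := by
    intro c a ha x y
    rw [mul_smul_comm, smul_mul_assoc, hφ.2.1, ha, mul_zero]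

lemma mem_P {φ : A → ℂ} (hφ : φ ∈ QS A) (a : A) : a ∈ P hφ ↔ ∀ x y, φ (x * a * y) = 0 := Iff.rfl

lemma P_left {φ : A → ℂ} (hφ : φ ∈ QS A) (a x : A) (hx : x ∈ P hφ) : a * x ∈ P hφ := by
  intro c d
  rw [← mul_assoc]
  exact hx _ _

lemma P_right {φ : A → ℂ} (hφ : φ ∈ QS A) (a x : A) (hx : x ∈ P hφ) : x * a ∈ P hφ := by
  intro c d
  rw [← mul_assoc, mul_assoc]
  exact hx _ _

lemma P_closed {φ : A → ℂ} (hφ : φ ∈ QS A) : IsClosed (P hφ : Set A) := by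
  have : (P hφ : Set A) = {a | ∀ x y, φ (x * a * y) = 0} := rfl
  rw [this]
  simp only [Set.setOf_forall]
  have := QS.continuous hφ
  exact isClosed_iInter fun x => isClosed_iInter fun y => isClosed_eq (by fun_prop) (by fun_prop)

lemma not_mem_P {φ : A → ℂ} (hφ : φ ∈ QS A) (e e1 : A) (h1 : e1 * e = e1) (h2 : e * e1 = e1) (h : φ e1 ≠ 0) :
    e1 ∉ P hφ := by
  intro h'
  apply h
  have := h' e e
  rwa [h2, h1] at this

/-- product estimate -/
lemma prod_est {Y Z W : Type*} [SeminormedAddCommGroup Y] [NormedSpace ℂ Y] [SeminormedAddCommGroup Z] [NormedSpace ℂ Z]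
    [SeminormedAddCommGroup W] [NormedSpace ℂ W] (m : Y →ₗ[ℂ] Z →ₗ[ℂ] W) (hm : ∀ y z, ‖m y z‖ ≤ ‖y‖ * ‖z‖)
    (y p : Y) (z q : Z) (α β : ℂ) (ε : ℝ) (hε : 0 ≤ ε) (hp : ‖p‖ ≤ 1)
    (h1 : ‖y - α • p‖ ≤ ε) (h2 : ‖z - β • q‖ ≤ ε) :
    ‖m y z - (α * β) • m p q‖ ≤ ε * (‖z‖ + ‖α‖) := by
  have : m y z - (α * β) • m p q = m (y - α • p) z + m (α • p) (z - β • q) := by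
    simp only [map_sub, map_smul, LinearMap.sub_apply, LinearMap.smul_apply, smul_sub, smul_smul, mul_comm β α]
    abel
  rw [this]
  refine (norm_add_le _ _).trans ?_
  have k1 : ‖m (y - α • p) z‖ ≤ ε * ‖z‖ := (hm _ _).trans (by gcongr)
  have k2 : ‖m (α • p) (z - β • q)‖ ≤ ‖α‖ * ε := by
    refine (hm _ _).trans ?_
    rw [norm_smul]
    have := mul_le_mul_of_nonneg_left hp (norm_nonneg α)
    rw [mul_one] at this
    gcongr
  linarith

lemma P_prime {φ : A → ℂ} (hφ : Pure φ) (a b : A) (ha : a ∉ P hφ.mem) (hb : b ∉ P hφ.mem) :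
    ∃ x, a * x * b ∉ P hφ.mem := by
  classical
  by_contra hcon
  push Not at hcon
  simp only [mem_P, not_forall] at ha hb
  obtain ⟨x1, y1, h1⟩ := ha
  obtain ⟨x2, y2, h2⟩ := hb
  set a' := x1 * a * y1 with ha'
  set b' := x2 * b * y2 with hb'
  have hab : ∀ x, a' * x * b' ∈ P hφ.mem := by
    intro x
    have : a' * x * b' = x1 * (a * (y1 * x * x2) * b) * y2 := by
      simp only [ha', hb', mul_assoc]
    rw [this]
    exact P_right _ _ _ (P_left _ _ _ (hcon _))
  have hz : 0 < ‖φ a' * φ b'‖ := norm_pos_iff.2 (mul_ne_zero h1 h2)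
  set M := ‖b'‖ + ‖φ a'‖ + 1 with hM
  have hM0 : 0 < M := by positivity
  obtain ⟨e, e1, hesa, hen, he1, hee1, hee1', hφe, hF⟩ :=
    excision φ hφ {a', b'} (‖φ a' * φ b'‖ / (2 * M)) (by positivity)
  set ε := ‖φ a' * φ b'‖ / (2 * M) with hε
  have hε0 : 0 < ε := by positivity
  have hen2 : ‖e * e‖ ≤ 1 := (norm_mul_le _ _).trans (by nlinarith [norm_nonneg e])
  have hb3 : ‖e * b' * e‖ ≤ ‖b'‖ :=
    (norm_mul_le _ _).trans ((mul_le_mul_of_nonneg_left hen (norm_nonneg _)).trans (by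
      rw [mul_one]
      exact (norm_mul_le _ _).trans (by nlinarith [norm_nonneg b'])))
  have est := prod_est (LinearMap.mul ℂ A) (fun y z => norm_mul_le y z) (e * a' * e) (e * e) (e * b' * e) (e * e)
    (φ a') (φ b') ε hε0.le hen2 (hF _ (by simp)) (hF _ (by simp))
  simp only [LinearMap.mul_apply'] at est
  have hlt : ε * (‖e * b' * e‖ + ‖φ a'‖) < ‖φ a' * φ b'‖ := by
    have : ε * M = ‖φ a' * φ b'‖ / 2 := by rw [hε]; field_simp
    have : ε * (‖e * b' * e‖ + ‖φ a'‖) ≤ ε * M := by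
      gcongr; rw [hM]; linarith
    linarith
  set z := φ a' * φ b' with hzdef
  have hz0 : z ≠ 0 := norm_pos_iff.1 hz
  refine not_mem_P hφ.mem e e1 hee1 hee1' hφe ?_
  refine neumann (P hφ.mem).toAddSubgroup (P_closed hφ.mem) (P_left hφ.mem) (P_right hφ.mem) e1
    (e * e * (e * e)) (z⁻¹ • (e * a' * e * (e * b' * e))) ?_ ?_ ?_
  · simp only [← mul_assoc, hee1]
  · apply (P hφ.mem).smul_mem
    have : e * a' * e * (e * b' * e) = e * (a' * (e * e) * b') * e := by simp only [mul_assoc]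
    rw [this]
    exact P_right _ _ _ (P_left _ _ _ (hab _))
  · have : e * e * (e * e) - z⁻¹ • (e * a' * e * (e * b' * e)) =
      -(z⁻¹ • (e * a' * e * (e * b' * e) - z • (e * e * (e * e)))) := by
      rw [smul_sub, smul_smul, inv_mul_cancel₀ hz0, one_smul]; abel
    rw [this, norm_neg, norm_smul, norm_inv, inv_mul_lt_iff₀ hz, mul_one]
    exact est.trans_lt hlt

end prime

section key
open Filter Topology
open scoped ComplexOrder
variable {A B X : Type u} [NonUnitalCStarAlgebra A] [PartialOrder A] [StarOrderedRing A]
variable [NonUnitalCStarAlgebra B] [PartialOrder B] [StarOrderedRing B]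
    [NonUnitalNormedRing X] [StarRing X] [NormedSpace ℂ X] [CompleteSpace X]
    [IsScalarTower ℂ X X] [SMulCommClass ℂ X X]
    {NA : ∀ p : ℕ, Matrix (Fin p) (Fin p) A → ℝ}
    {NB : ∀ q : ℕ, Matrix (Fin q) (Fin q) B → ℝ}

lemma conj_norm_le {Y : Type*} [NonUnitalNormedRing Y] (e x : Y) (he : ‖e‖ ≤ 1) : ‖e * x * e‖ ≤ ‖x‖ :=
    (norm_mul_le _ _).trans ((mul_le_mul_of_nonneg_left he (norm_nonneg _)).trans (by
      rw [mul_one]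
      exact (norm_mul_le _ _).trans (by nlinarith [norm_nonneg x])))

lemma approx_u (hNA : ∀ p, IsCStarNorm (NA p)) (hNB : ∀ q, IsCStarNorm (NB q))
    {ι : A ⊗[ℂ] B →ₗ[ℂ] X} (hX : IsTensorCompletion (osProjNorm NA NB) X ι)
    {φ : A → ℂ} {ψ : B → ℂ} (a a' : A) (b b' : B) (M : X →L[ℂ] ℂ)
    (hM : ∀ c d, M (ι (c ⊗ₜ d)) = φ (a' * c * a) * ψ (b' * d * b)) (u : A ⊗[ℂ] B) :
    ∃ (Fa : Finset A) (Fb : Finset B) (C : ℝ), 0 ≤ C ∧ ∀ (e : A) (f : B) (ε : ℝ), 0 ≤ ε → ‖e‖ ≤ 1 → ‖f‖ ≤ 1 →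
      (∀ x ∈ Fa, ‖e * x * e - φ x • (e * e)‖ ≤ ε) → (∀ y ∈ Fb, ‖f * y * f - ψ y • (f * f)‖ ≤ ε) →
      ‖ι (e ⊗ₜ f) * (ι (a' ⊗ₜ b') * ι u * ι (a ⊗ₜ b)) * ι (e ⊗ₜ f) - M (ι u) • ι ((e * e) ⊗ₜ (f * f))‖ ≤ ε * C := by
  classical
  induction u with
  | zero => exact ⟨∅, ∅, 0, le_rfl, by intros; simp⟩
  | tmul c d =>
    refine ⟨{a' * c * a}, {b' * d * b}, ‖b' * d * b‖ + ‖φ (a' * c * a)‖, by positivity, ?_⟩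
    intro e f ε hε he hf h1 h2
    simp only [hX.mul_tmul, hM]
    have hen2 : ‖e * e‖ ≤ 1 := (norm_mul_le _ _).trans (by nlinarith [norm_nonneg e])
    have est := prod_est ((TensorProduct.mk ℂ A B).compr₂ ι)
      (fun y z => by simpa using norm_tmul_le hNA hNB hX y z) (e * (a' * c * a) * e) (e * e)
      (f * (b' * d * b) * f) (f * f) (φ (a' * c * a)) (ψ (b' * d * b)) ε hε hen2
      (h1 _ (by simp)) (h2 _ (by simp))
    simp only [LinearMap.compr₂_apply, TensorProduct.mk_apply] at est
    refine est.trans ?_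
    gcongr
    exact conj_norm_le _ _ hf
  | add u v hu hv =>
    obtain ⟨Fa, Fb, C, hC, h⟩ := hu
    obtain ⟨Fa', Fb', C', hC', h'⟩ := hv
    refine ⟨Fa ∪ Fa', Fb ∪ Fb', C + C', by positivity, ?_⟩
    intro e f ε hε he hf h1 h2
    have k1 := h e f ε hε he hf (fun x hx => h1 x (Finset.mem_union_left _ hx))
      (fun x hx => h2 x (Finset.mem_union_left _ hx))
    have k2 := h' e f ε hε he hf (fun x hx => h1 x (Finset.mem_union_right _ hx))
      (fun x hx => h2 x (Finset.mem_union_right _ hx))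
    rw [mul_add]
    refine le_trans (le_of_eq ?_) ((norm_add_le _ _).trans (add_le_add k1 k2))
    congr 1
    simp only [map_add, mul_add, add_mul, add_smul]
    abel

lemma star_lemma (hNA : ∀ p, IsCStarNorm (NA p)) (hNB : ∀ q, IsCStarNorm (NB q))
    {ι : A ⊗[ℂ] B →ₗ[ℂ] X} (hX : IsTensorCompletion (osProjNorm NA NB) X ι)
    {φ : A → ℂ} {ψ : B → ℂ} (hφ : Pure φ) (hψ : Pure ψ) (K : Submodule ℂ X)
    (hK : IsClosed (K : Set X)) (hl : ∀ a, ∀ x ∈ K, a * x ∈ K) (hr : ∀ a, ∀ x ∈ K, x * a ∈ K)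
    (a a' : A) (b b' : B) (M : X →L[ℂ] ℂ)
    (hM : ∀ c d, M (ι (c ⊗ₜ d)) = φ (a' * c * a) * ψ (b' * d * b)) (k : X) (hk : k ∈ K) (hMk : M k ≠ 0) :
    ∃ e1 f1, ι (e1 ⊗ₜ f1) ∈ K ∧ e1 ∉ P hφ.mem ∧ 0 ≤ f1 ∧ ψ f1 ≠ 0 := by
  set z := M k with hz
  have hz0 : 0 < ‖z‖ := norm_pos_iff.2 hMk
  set R := ‖ι (a' ⊗ₜ[ℂ] b')‖ * ‖ι (a ⊗ₜ[ℂ] b)‖ + ‖M‖ + 1 with hR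
  have hR0 : 0 < R := by positivity
  obtain ⟨u, hu⟩ := hX.dense.exists_dist_lt k (ε := ‖z‖ / (2 * R)) (by positivity)
  rw [dist_eq_norm] at hu
  obtain ⟨Fa, Fb, C, hC, h⟩ := approx_u hNA hNB hX a a' b b' M hM u
  set ε := ‖z‖ / (4 * (C + 1)) with hε
  have hε0 : 0 < ε := by positivity
  obtain ⟨e, e1, hesa, hen, he1, hee1, hee1', hφe, hF⟩ := excision φ hφ Fa ε hε0
  obtain ⟨f, f1, hfsa, hfn, hf1, hff1, hff1', hψf, hG⟩ := excision ψ hψ Fb ε hε0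
  refine ⟨e1, f1, ?_, not_mem_P hφ.mem e e1 hee1 hee1' hφe, hf1, hψf⟩
  have k1 := h e f ε hε0.le hen hfn hF hG
  set E := ι (e ⊗ₜ[ℂ] f) with hE
  have hEn : ‖E‖ ≤ 1 := (norm_tmul_le hNA hNB hX _ _).trans (mul_le_one₀ hen (norm_nonneg _) hfn)
  set p := ι ((e * e) ⊗ₜ[ℂ] (f * f)) with hp
  have hpE : p = E * E := by rw [hp, hE, hX.mul_tmul]
  have hpn : ‖p‖ ≤ 1 := by
    rw [hpE]; exact (norm_mul_le _ _).trans (mul_le_one₀ hEn (norm_nonneg _) hEn)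
  set a₁ := ι (a' ⊗ₜ[ℂ] b')
  set a₂ := ι (a ⊗ₜ[ℂ] b)
  have k2 : ‖E * (a₁ * (k - ι u) * a₂) * E‖ ≤ ‖a₁‖ * ‖a₂‖ * ‖k - ι u‖ := by
    refine (conj_norm_le _ _ hEn).trans ?_
    refine (norm_mul_le _ _).trans ?_
    have := norm_mul_le a₁ (k - ι u)
    have := mul_le_mul_of_nonneg_right this (norm_nonneg a₂)
    linarith
  have k3 : ‖(M (k - ι u)) • p‖ ≤ ‖M‖ * ‖k - ι u‖ := by
    rw [norm_smul]
    have h1 := M.le_opNorm (k - ι u)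
    have h2 := mul_le_mul_of_nonneg_left hpn (norm_nonneg (M (k - ι u)))
    linarith
  have k4 : E * (a₁ * k * a₂) * E - z • p = E * (a₁ * (k - ι u) * a₂) * E - (M (k - ι u)) • p +
      (E * (a₁ * ι u * a₂) * E - M (ι u) • p) := by
    simp only [mul_sub, sub_mul, map_sub, sub_smul, hz]
    abel
  have k5 : ‖E * (a₁ * k * a₂) * E - z • p‖ < ‖z‖ := by
    rw [k4]
    have q1 := norm_add_le (E * (a₁ * (k - ι u) * a₂) * E - (M (k - ι u)) • p) (E * (a₁ * ι u * a₂) * E - M (ι u) • p)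
    have q2 := norm_sub_le (E * (a₁ * (k - ι u) * a₂) * E) ((M (k - ι u)) • p)
    have q3 : R * ‖k - ι u‖ < ‖z‖ / 2 := by
      have : R * (‖z‖ / (2 * R)) = ‖z‖ / 2 := by field_simp
      rw [← this]
      gcongr
    have q4 : ‖a₁‖ * ‖a₂‖ * ‖k - ι u‖ + ‖M‖ * ‖k - ι u‖ ≤ R * ‖k - ι u‖ := by
      rw [hR, add_mul, add_mul]; linarith [norm_nonneg (k - ι u)]
    have q5 : ε * C ≤ ‖z‖ / 4 := by
      have : ε * (C + 1) = ‖z‖ / 4 := by rw [hε]; field_simp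
      nlinarith
    linarith
  refine neumann K.toAddSubgroup hK hl hr _ p (z⁻¹ • (E * (a₁ * k * a₂) * E)) ?_ ?_ ?_
  · rw [hp, hX.mul_tmul, ← mul_assoc, ← mul_assoc, hee1, hee1, hff1, hff1]
  · exact K.smul_mem _ (hr _ _ (hl _ _ (hr _ _ (hl _ _ hk))))
  · have : p - z⁻¹ • (E * (a₁ * k * a₂) * E) = -(z⁻¹ • (E * (a₁ * k * a₂) * E - z • p)) := by
      rw [smul_sub, smul_smul, inv_mul_cancel₀ hMk, one_smul]; abel
    rw [this, norm_neg, norm_smul, norm_inv, inv_mul_lt_iff₀ hz0, mul_one]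
    exact k5

end key
end WP


namespace WP

section main
open Filter Topology
open scoped ComplexOrder
variable {A B X : Type u} [NonUnitalCStarAlgebra A] [PartialOrder A] [StarOrderedRing A]
variable [NonUnitalCStarAlgebra B] [PartialOrder B] [StarOrderedRing B]
    [NonUnitalNormedRing X] [StarRing X] [NormedSpace ℂ X] [CompleteSpace X]
    [IsScalarTower ℂ X X] [SMulCommClass ℂ X X]
    {NA : ∀ p : ℕ, Matrix (Fin p) (Fin p) A → ℝ}
    {NB : ∀ q : ℕ, Matrix (Fin q) (Fin q) B → ℝ}

/-- a closed ideal is a subspace -/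
def Ksub (hNA : ∀ p, IsCStarNorm (NA p)) (hNB : ∀ q, IsCStarNorm (NB q))
    {ι : A ⊗[ℂ] B →ₗ[ℂ] X} (hX : IsTensorCompletion (osProjNorm NA NB) X ι)
    (K : TwoSidedIdeal X) (hclosed : IsClosed (K : Set X)) : Submodule ℂ X where
  carrier := K
  add_mem' := fun ha hb => K.add_mem ha hb
  zero_mem' := K.zero_mem
  smul_mem' := by
    intro c x hx
    have h := au_right hNA hNB hX (c • x)
    refine hclosed.mem_of_tendsto h (Eventually.of_forall fun z => ?_)
    rw [smul_mul_assoc, ← mul_smul_comm]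
    exact K.mul_mem_right _ _ hx

/-- slice ideal in `A` -/
def sliceA (ι : A ⊗[ℂ] B →ₗ[ℂ] X) (K : Submodule ℂ X) (b : B) : Submodule ℂ A :=
  K.comap (ι ∘ₗ (TensorProduct.mk ℂ A B).flip b)

/-- slice ideal in `B` -/
def sliceB (ι : A ⊗[ℂ] B →ₗ[ℂ] X) (K : Submodule ℂ X) (a : A) : Submodule ℂ B :=
  K.comap (ι ∘ₗ (TensorProduct.mk ℂ A B) a)

lemma mem_sliceA (ι : A ⊗[ℂ] B →ₗ[ℂ] X) (K : Submodule ℂ X) (a : A) (b : B) :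
    a ∈ sliceA ι K b ↔ ι (a ⊗ₜ b) ∈ K := Iff.rfl

lemma mem_sliceB (ι : A ⊗[ℂ] B →ₗ[ℂ] X) (K : Submodule ℂ X) (a : A) (b : B) :
    b ∈ sliceB ι K a ↔ ι (a ⊗ₜ b) ∈ K := Iff.rfl

section
variable (hNA : ∀ p, IsCStarNorm (NA p)) (hNB : ∀ q, IsCStarNorm (NB q))
    {ι : A ⊗[ℂ] B →ₗ[ℂ] X} (hX : IsTensorCompletion (osProjNorm NA NB) X ι)
    (K : Submodule ℂ X)
    (hK : IsClosed (K : Set X)) (hl : ∀ a, ∀ x ∈ K, a * x ∈ K) (hr : ∀ a, ∀ x ∈ K, x * a ∈ K)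
include hNA hNB hX hK

lemma sliceA_closed (b : B) : IsClosed (sliceA ι K b : Set A) := by
  have : Continuous fun a : A => ι (a ⊗ₜ[ℂ] b) :=
    continuous_iff_continuousAt.2 fun a => tendsto_iota hNA hNB hX tendsto_id tendsto_const_nhds
  exact hK.preimage this

lemma sliceB_closed (a : A) : IsClosed (sliceB ι K a : Set B) := by
  have : Continuous fun b : B => ι (a ⊗ₜ[ℂ] b) :=
    continuous_iff_continuousAt.2 fun b => tendsto_iota hNA hNB hX tendsto_const_nhds tendsto_id
  exact hK.preimage this

include hl in
lemma slice_left (a c : A) (b d : B) (h : ι (a ⊗ₜ b) ∈ K) : ι ((c * a) ⊗ₜ b) ∈ K ∧ ι (a ⊗ₜ (d * b)) ∈ K := by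
  have hA := (CStarAlgebra.increasingApproximateUnit A)
  have hB := (CStarAlgebra.increasingApproximateUnit B)
  have := hA.neBot
  have := hB.neBot
  constructor
  · refine hK.mem_of_tendsto (tendsto_iota hNA hNB hX (tendsto_const_nhds (x := c * a)) (hB.tendsto_mul_right b))
      (Eventually.of_forall fun z => ?_)
    rw [← hX.mul_tmul]
    exact hl _ _ h
  · refine hK.mem_of_tendsto (tendsto_iota hNA hNB hX (hA.tendsto_mul_right a) (tendsto_const_nhds (x := d * b)))
      (Eventually.of_forall fun z => ?_)
    rw [← hX.mul_tmul]
    exact hl _ _ h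

include hr in
lemma slice_right (a c : A) (b d : B) (h : ι (a ⊗ₜ b) ∈ K) : ι ((a * c) ⊗ₜ b) ∈ K ∧ ι (a ⊗ₜ (b * d)) ∈ K := by
  have hA := (CStarAlgebra.increasingApproximateUnit A)
  have hB := (CStarAlgebra.increasingApproximateUnit B)
  have := hA.neBot
  have := hB.neBot
  constructor
  · refine hK.mem_of_tendsto (tendsto_iota hNA hNB hX (tendsto_const_nhds (x := a * c)) (hB.tendsto_mul_left b))
      (Eventually.of_forall fun z => ?_)
    rw [← hX.mul_tmul]
    exact hr _ _ h
  · refine hK.mem_of_tendsto (tendsto_iota hNA hNB hX (hA.tendsto_mul_left a) (tendsto_const_nhds (x := b * d)))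
      (Eventually.of_forall fun z => ?_)
    rw [← hX.mul_tmul]
    exact hr _ _ h

include hl hr

lemma J_dense {φ : A → ℂ} (hφ : Pure φ)
    (hS : ∀ ψ : B → ℂ, Pure ψ → ∃ e1 f1, ι (e1 ⊗ₜ f1) ∈ K ∧ e1 ∉ P hφ.mem ∧ 0 ≤ f1 ∧ ψ f1 ≠ 0) (b : B) (ε : ℝ)
    (hε : 0 < ε) : ∃ a c, a ∉ P hφ.mem ∧ ι (a ⊗ₜ c) ∈ K ∧ ‖b - c‖ < ε := by
  let J : Submodule ℂ B :=
    { carrier := {b | ∃ a, a ∉ P hφ.mem ∧ ι (a ⊗ₜ b) ∈ K}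
      add_mem' := by
        rintro b b' ⟨a, ha, hab⟩ ⟨a', ha', hab'⟩
        obtain ⟨x, hx⟩ := P_prime hφ a a' ha ha'
        refine ⟨_, hx, ?_⟩
        rw [TensorProduct.tmul_add, map_add]
        refine K.add_mem ?_ (slice_left hNA hNB hX K hK hl a' (a * x) b' 0 hab').1
        rw [mul_assoc]
        exact (slice_right hNA hNB hX K hK hr a (x * a') b 0 hab).1
      zero_mem' := by
        obtain ⟨e, e1, hesa, hen, he1, hee1, hee1', hφe, hF⟩ := excision φ hφ ∅ 1 one_pos
        exact ⟨e1, not_mem_P hφ.mem e e1 hee1 hee1' hφe, by simp⟩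
      smul_mem' := by
        rintro c b ⟨a, ha, hab⟩
        refine ⟨a, ha, ?_⟩
        rw [TensorProduct.tmul_smul, map_smul]
        exact K.smul_mem _ hab }
  have hJl : ∀ d, ∀ x ∈ J, d * x ∈ J := by
    rintro d x ⟨a, ha, hab⟩
    exact ⟨a, ha, (slice_left hNA hNB hX K hK hl a 0 x d hab).2⟩
  have htop : J.topologicalClosure = ⊤ := by
    by_contra hne
    obtain ⟨ψ, hψ, hv⟩ := L3 J.topologicalClosure J.isClosed_topologicalClosure (by
      intro d x hx
      have hcont : Continuous fun y : B => d * y := by fun_prop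
      exact map_mem_closure hcont hx (fun y hy => hJl d y hy)) hne
    obtain ⟨e1, f1, h1, h2, h3, h4⟩ := hS ψ hψ
    exact h4 (hv f1 (J.le_topologicalClosure ⟨e1, h2, h1⟩) h3)
  have hb : b ∈ closure (J : Set B) := by
    have : b ∈ J.topologicalClosure := by rw [htop]; trivial
    exact this
  obtain ⟨c, ⟨a, ha, hac⟩, hc⟩ := Metric.mem_closure_iff.1 hb ε hε
  exact ⟨a, c, ha, hac, by rwa [dist_eq_norm] at hc⟩

omit hNA hNB hX hK hl hr in
lemma ideal_le_P {φ : A → ℂ} (hφ : φ ∈ QS A) (I : Submodule ℂ A) (hl : ∀ a, ∀ x ∈ I, a * x ∈ I)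
    (hr : ∀ a, ∀ x ∈ I, x * a ∈ I) (hv : ∀ i ∈ I, 0 ≤ i → φ i = 0) : I ≤ P hφ := by
  intro a ha x y
  have h := QS_cs hφ (star x) (a * y)
  rw [hv (star (a * y) * (a * y)) (hl _ _ (hr _ _ ha)) (star_mul_self_nonneg _), star_star] at h
  simp only [Complex.zero_re, mul_zero] at h
  have : ‖φ (x * (a * y))‖ = 0 := by nlinarith [norm_nonneg (φ (x * (a * y)))]
  rw [mul_assoc]
  exact norm_eq_zero.1 this

omit hNA hNB hX hK hl hr [NonUnitalCStarAlgebra A] [PartialOrder A] [StarOrderedRing A] in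
lemma exists_trunc (b : B) (hb : 0 ≤ b) (ε : ℝ) (hε : 0 < ε) :
    ∃ b0 p : B, b0 * p = b0 ∧ ‖b - b0‖ ≤ 2 * ε := by
  have hbs : IsSelfAdjoint b := IsSelfAdjoint.of_nonneg hb
  set η : ℝ → ℝ := fun s => max 0 (min 1 ((s - ε) / ε)) with hη
  set κ : ℝ → ℝ := fun s => max 0 (s - 2 * ε) with hκ
  have hηc : Continuous η := by simp only [hη]; fun_prop
  have hκc : Continuous κ := by simp only [hκ]; fun_prop
  have hη0 : η 0 = 0 := by
    simp only [hη]
    apply max_eq_left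
    exact (min_le_right _ _).trans (div_nonpos_of_nonpos_of_nonneg (by linarith) hε.le)
  have hκ0 : κ 0 = 0 := by simp only [hκ]; exact max_eq_left (by linarith)
  have hκη : (fun s => κ s * η s) = κ := by
    funext s
    rcases le_total (2 * ε) s with h | h
    · have : η s = 1 := by
        simp only [hη]
        rw [min_eq_left, max_eq_right zero_le_one]
        rw [le_div_iff₀ hε]; linarith
      rw [this, mul_one]
    · have : κ s = 0 := by simp only [hκ]; exact max_eq_left (by linarith)
      rw [this, zero_mul]
  have hid : cfcₙ (fun s : ℝ => s) b = b := cfcₙ_id' ℝ b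
  refine ⟨cfcₙ κ b, cfcₙ η b, ?_, ?_⟩
  · rw [← cfcₙ_mul κ η b hκc.continuousOn hκ0 hηc.continuousOn hη0, hκη]
  · have : b - cfcₙ κ b = cfcₙ (fun s => s - κ s) b := by
      rw [cfcₙ_sub (fun s => s) κ b (by fun_prop) rfl (by fun_prop) hκ0, hid]
    rw [this]
    refine norm_cfcₙ_le fun s hs => ?_
    have hs0 : 0 ≤ s := quasispectrum_nonneg_of_nonneg b hb s hs
    simp only [hκ]
    rw [Real.norm_eq_abs, abs_le]
    rcases le_total (2 * ε) s with h | h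
    · rw [max_eq_right (by linarith)]; constructor <;> linarith
    · rw [max_eq_left (by linarith)]; constructor <;> linarith

theorem K_eq_top
    (hS : ∀ (φ : A → ℂ) (ψ : B → ℂ) (hφ : Pure φ), Pure ψ →
      ∃ e1 f1, ι (e1 ⊗ₜ f1) ∈ K ∧ e1 ∉ P hφ.mem ∧ 0 ≤ f1 ∧ ψ f1 ≠ 0) : K = ⊤ := by
  have step : ∀ b0 p : B, b0 * p = b0 → ∀ a, ι (a ⊗ₜ b0) ∈ K := by
    intro b0 p hb0
    have hnot : ∀ (φ : A → ℂ) (hφ : Pure φ), ∃ a ∉ P hφ.mem, ι (a ⊗ₜ b0) ∈ K := by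
      intro φ hφ
      obtain ⟨a, c, ha, hac, hpc⟩ := J_dense hNA hNB hX K hK hl hr hφ (fun ψ hψ => hS φ ψ hφ hψ) p 1 one_pos
      refine ⟨a, ha, ?_⟩
      exact neumann (sliceB ι K a).toAddSubgroup (sliceB_closed hNA hNB hX K hK a)
        (fun d x hx => (slice_left hNA hNB hX K hK hl a 0 x d hx).2)
        (fun d x hx => (slice_right hNA hNB hX K hK hr a 0 x d hx).2) b0 p c hb0 hac hpc
    have htop : sliceA ι K b0 = ⊤ := by
      by_contra hne
      have h1 : ∀ a, ∀ x ∈ sliceA ι K b0, a * x ∈ sliceA ι K b0 :=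
        fun d x hx => (slice_left hNA hNB hX K hK hl x d b0 0 hx).1
      have h2 : ∀ a, ∀ x ∈ sliceA ι K b0, x * a ∈ sliceA ι K b0 :=
        fun d x hx => (slice_right hNA hNB hX K hK hr x d b0 0 hx).1
      obtain ⟨φ, hφ, hv⟩ := L3 (sliceA ι K b0) (sliceA_closed hNA hNB hX K hK b0) h1 hne
      obtain ⟨a, ha, hab⟩ := hnot φ hφ
      exact ha (ideal_le_P hφ.mem _ h1 h2 hv hab)
    intro a
    have : a ∈ sliceA ι K b0 := by rw [htop]; trivial
    exact this
  have hall : ∀ a b, ι (a ⊗ₜ b) ∈ K := by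
    intro a
    have hpos : {b : B | 0 ≤ b} ⊆ (sliceB ι K a : Set B) := by
      intro b hb
      rw [← (sliceB_closed hNA hNB hX K hK a).closure_eq, Metric.mem_closure_iff]
      intro ε hε
      obtain ⟨b0, p, h1, h2⟩ := exists_trunc b hb (ε / 3) (by positivity)
      refine ⟨b0, step b0 p h1 a, ?_⟩
      rw [dist_eq_norm]
      linarith
    have htop : sliceB ι K a = ⊤ := by
      rw [eq_top_iff, ← CStarAlgebra.span_nonneg, Submodule.span_le]
      exact hpos
    intro b
    have : b ∈ sliceB ι K a := by rw [htop]; trivial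
    exact this
  rw [eq_top_iff]
  intro x _
  change x ∈ (K : Set X)
  rw [← hK.closure_eq]
  refine closure_mono ?_ (hX.dense x)
  rintro _ ⟨u, rfl⟩
  induction u with
  | zero => simp
  | tmul a b => exact hall a b
  | add u v hu hv => rw [map_add]; exact K.add_mem hu hv

end
end main
end WP


namespace WP

section tens
open scoped ComplexOrder InnerProductSpace
open UniformSpace Completion ContinuousLinearMap

variable {A : Type u} [NonUnitalCStarAlgebra A]
variable {E F : Type u} [NormedAddCommGroup E] [InnerProductSpace ℂ E] [CompleteSpace E]
  [NormedAddCommGroup F] [InnerProductSpace ℂ F] [CompleteSpace F]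

lemma inner_rT (T : E →L[ℂ] E) (u v : E ⊗[ℂ] F) :
    ⟪(star T).rTensor F u, v⟫_ℂ = ⟪u, T.rTensor F v⟫_ℂ := by
  induction u using TensorProduct.induction_on with
  | zero => simp
  | add u u' h h' => rw [map_add, inner_add_left, inner_add_left, h, h']
  | tmul e f =>
    induction v using TensorProduct.induction_on with
    | zero => simp
    | add u u' h h' => rw [map_add, inner_add_right, inner_add_right, h, h']
    | tmul e' f' =>
      rw [rTensor_tmul, rTensor_tmul, TensorProduct.inner_tmul, TensorProduct.inner_tmul,
        star_eq_adjoint, adjoint_inner_left]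

lemma inner_lT (T : F →L[ℂ] F) (u v : E ⊗[ℂ] F) :
    ⟪(star T).lTensor E u, v⟫_ℂ = ⟪u, T.lTensor E v⟫_ℂ := by
  induction u using TensorProduct.induction_on with
  | zero => simp
  | add u u' h h' => rw [map_add, inner_add_left, inner_add_left, h, h']
  | tmul e f =>
    induction v using TensorProduct.induction_on with
    | zero => simp
    | add u u' h h' => rw [map_add, inner_add_right, inner_add_right, h, h']
    | tmul e' f' =>
      rw [lTensor_tmul, lTensor_tmul, TensorProduct.inner_tmul, TensorProduct.inner_tmul,
        star_eq_adjoint, adjoint_inner_left]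

lemma compl_ext {V : Type u} [NormedAddCommGroup V] [InnerProductSpace ℂ V]
    {S T : Completion V →L[ℂ] Completion V} (h : ∀ v : V, S v = T v) : S = T := by
  ext x
  induction x using induction_on with
  | hp => exact isClosed_eq S.continuous T.continuous
  | ih x => exact h x

/-- completing a pre-representation -/
def compRep {V : Type u} [NormedAddCommGroup V] [InnerProductSpace ℂ V] (T : A → (V →L[ℂ] V))
    (hs : ∀ (c : ℂ) a x, T (c • a) x = c • T a x)
    (ha : ∀ a b x, T (a + b) x = T a x + T b x) (hm : ∀ a b x, T (a * b) x = T a (T b x))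
    (hst : ∀ a x y, ⟪T (star a) x, y⟫_ℂ = ⟪x, T a y⟫_ℂ) :
    A →⋆ₙₐ[ℂ] (Completion V →L[ℂ] Completion V) where
  toFun a := (T a).completion
  map_smul' c a := compl_ext fun x => by
    rw [completion_apply_coe, hs, Completion.coe_smul, MonoidHom.id_apply, coe_smul',
      Pi.smul_apply, completion_apply_coe]
  map_zero' := compl_ext fun x => by
    have := hs 0 0 x
    rw [zero_smul, zero_smul] at this
    rw [completion_apply_coe, this, Completion.coe_zero, zero_apply]
  map_add' a b := compl_ext fun x => by
    rw [completion_apply_coe, ha, Completion.coe_add, add_apply, completion_apply_coe,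
      completion_apply_coe]
  map_mul' a b := compl_ext fun x => by
    rw [completion_apply_coe, hm, mul_apply_eq_comp, completion_apply_coe,
      completion_apply_coe]
  map_star' a := by
    refine (eq_adjoint_iff (T (star a)).completion (T a).completion).mpr ?_
    intro x y
    induction x, y using induction_on₂ with
    | hp => apply isClosed_eq <;> fun_prop
    | ih x y => simp [hst]

lemma compRep_coe {V : Type u} [NormedAddCommGroup V] [InnerProductSpace ℂ V] (T : A → (V →L[ℂ] V))
    (hs ha hm hst) (a : A) (v : V) : compRep T hs ha hm hst a (v : Completion V) = T a v :=
  completion_apply_coe _ _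

variable (F) in
/-- left leg -/
def legL (σ : A →⋆ₙₐ[ℂ] (E →L[ℂ] E)) :
    A →⋆ₙₐ[ℂ] (Completion (E ⊗[ℂ] F) →L[ℂ] Completion (E ⊗[ℂ] F)) :=
  compRep (fun a => (σ a).rTensor F)
    (fun c a x => by rw [map_smul, rTensor_smul]; rfl)
    (fun a b x => by rw [map_add, rTensor_add]; rfl)
    (fun a b x => by rw [map_mul, rTensor_mul]; rfl)
    (fun a x y => by rw [map_star, inner_rT])

variable (E) in
/-- right leg -/
def legR (σ : A →⋆ₙₐ[ℂ] (F →L[ℂ] F)) :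
    A →⋆ₙₐ[ℂ] (Completion (E ⊗[ℂ] F) →L[ℂ] Completion (E ⊗[ℂ] F)) :=
  compRep (fun a => (σ a).lTensor E)
    (fun c a x => by rw [map_smul, lTensor_smul]; rfl)
    (fun a b x => by rw [map_add, lTensor_add]; rfl)
    (fun a b x => by rw [map_mul, lTensor_mul]; rfl)
    (fun a x y => by rw [map_star, inner_lT])

lemma legL_tmul (σ : A →⋆ₙₐ[ℂ] (E →L[ℂ] E)) (a : A) (e : E) (f : F) :
    legL F σ a ((e ⊗ₜ[ℂ] f : E ⊗[ℂ] F) : Completion (E ⊗[ℂ] F)) =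
      ((σ a e ⊗ₜ[ℂ] f : E ⊗[ℂ] F) : Completion (E ⊗[ℂ] F)) := by
  rw [legL, compRep_coe, rTensor_tmul]

lemma legR_tmul (σ : A →⋆ₙₐ[ℂ] (F →L[ℂ] F)) (a : A) (e : E) (f : F) :
    legR E σ a ((e ⊗ₜ[ℂ] f : E ⊗[ℂ] F) : Completion (E ⊗[ℂ] F)) =
      ((e ⊗ₜ[ℂ] σ a f : E ⊗[ℂ] F) : Completion (E ⊗[ℂ] F)) := by
  rw [legR, compRep_coe, lTensor_tmul]

/-- operators agreeing on elementary tensors agree -/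
lemma clm_ext {G : Type*} [NormedAddCommGroup G] [NormedSpace ℂ G]
    {S T : Completion (E ⊗[ℂ] F) →L[ℂ] G}
    (h : ∀ e f, S ((e ⊗ₜ[ℂ] f : E ⊗[ℂ] F) : Completion (E ⊗[ℂ] F)) =
      T ((e ⊗ₜ[ℂ] f : E ⊗[ℂ] F) : Completion (E ⊗[ℂ] F))) : S = T := by
  ext x
  induction x using induction_on with
  | hp => apply isClosed_eq <;> fun_prop
  | ih x =>
    induction x using TensorProduct.induction_on with
    | zero => rw [Completion.coe_zero, map_zero, map_zero]
    | add x y hx hy => rw [Completion.coe_add, map_add, map_add, hx, hy]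
    | tmul e f => exact h e f

lemma legs_comm {B : Type u} [NonUnitalCStarAlgebra B] (σ : A →⋆ₙₐ[ℂ] (E →L[ℂ] E))
    (τ : B →⋆ₙₐ[ℂ] (F →L[ℂ] F)) (a : A) (b : B) :
    legL F σ a * legR E τ b = legR E τ b * legL F σ a := by
  refine clm_ext fun e f => ?_
  rw [mul_apply_eq_comp, mul_apply_eq_comp, legR_tmul, legL_tmul, legL_tmul, legR_tmul]

end tens

end WP


namespace WP

section tens2
open scoped ComplexOrder InnerProductSpace
open UniformSpace Completion ContinuousLinearMap

variable {E F : Type u} [NormedAddCommGroup E] [InnerProductSpace ℂ E] [CompleteSpace E]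
  [NormedAddCommGroup F] [InnerProductSpace ℂ F] [CompleteSpace F]

/-- elementary tensor in the completion -/
def tt (e : E) (f : F) : Completion (E ⊗[ℂ] F) := ((e ⊗ₜ[ℂ] f : E ⊗[ℂ] F) : Completion (E ⊗[ℂ] F))

lemma tt_inner (e e' : E) (f f' : F) : ⟪tt e f, tt e' f'⟫_ℂ = ⟪e, e'⟫_ℂ * ⟪f, f'⟫_ℂ := by
  rw [tt, tt, Completion.inner_coe, TensorProduct.inner_tmul]

lemma tt_cont : Continuous fun p : E × F => tt p.1 p.2 :=
  (Completion.continuous_coe _).comp TensorProduct.continuous_tmul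

lemma eq_zero_of_coeff {I J : Type*} (u : I → E) (v : J → F) (hu : DenseRange u) (hv : DenseRange v)
    (T : Completion (E ⊗[ℂ] F) →L[ℂ] Completion (E ⊗[ℂ] F))
    (h : ∀ i i' j j', ⟪tt (u i') (v j'), T (tt (u i) (v j))⟫_ℂ = 0) : T = 0 := by
  have h1 : ∀ i j (p : E × F), ⟪tt p.1 p.2, T (tt (u i) (v j))⟫_ℂ = 0 := by
    intro i j p
    refine (hu.prodMap hv).induction_on (p := fun p => ⟪tt p.1 p.2, T (tt (u i) (v j))⟫_ℂ = 0) p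
      (isClosed_eq (tt_cont.inner continuous_const) continuous_const) ?_
    rintro ⟨a, b⟩
    exact h i a j b
  have h2 : ∀ (q : E × F) (p : E × F), ⟪tt p.1 p.2, T (tt q.1 q.2)⟫_ℂ = 0 := by
    intro q p
    refine (hu.prodMap hv).induction_on (p := fun q => ⟪tt p.1 p.2, T (tt q.1 q.2)⟫_ℂ = 0) q
      (isClosed_eq (continuous_const.inner (T.continuous.comp tt_cont)) continuous_const) ?_
    rintro ⟨a, b⟩
    exact h1 a b p
  refine clm_ext fun e f => ?_
  set w := T ((e ⊗ₜ[ℂ] f : E ⊗[ℂ] F) : Completion (E ⊗[ℂ] F)) with hw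
  have h3 : innerSL ℂ w = 0 := by
    refine clm_ext fun e' f' => ?_
    rw [innerSL_apply_apply, ← inner_conj_symm]
    have := h2 (e, f) (e', f')
    rw [zero_apply]
    change (starRingEnd ℂ) ⟪tt e' f', T (tt e f)⟫_ℂ = 0
    rw [this, map_zero]
  have h4 : ⟪w, w⟫_ℂ = 0 := by
    rw [← innerSL_apply_apply, h3, zero_apply]
  rw [zero_apply]
  exact inner_self_eq_zero.1 h4

end tens2

end WP


namespace WP

section gns
open scoped ComplexOrder InnerProductSpace
open UniformSpace Completion ContinuousLinearMap

variable {A B X : Type u} [NonUnitalCStarAlgebra A] [PartialOrder A] [StarOrderedRing A]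
variable [NonUnitalCStarAlgebra B] [PartialOrder B] [StarOrderedRing B]
    [NonUnitalNormedRing X] [StarRing X] [NormedSpace ℂ X] [CompleteSpace X]
    [IsScalarTower ℂ X X] [SMulCommClass ℂ X X]
    {NA : ∀ p : ℕ, Matrix (Fin p) (Fin p) A → ℝ}
    {NB : ∀ q : ℕ, Matrix (Fin q) (Fin q) B → ℝ}

/-- vectors of the GNS space -/
def Lam {φ : A → ℂ} (hφ : φ ∈ QS A) (a : A) : (QS.pos hφ).GNS :=
  (((QS.pos hφ).toPreGNS a : (QS.pos hφ).PreGNS) : Completion (QS.pos hφ).PreGNS)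

/-- GNS representation -/
def gn {φ : A → ℂ} (hφ : φ ∈ QS A) : A →⋆ₙₐ[ℂ] ((QS.pos hφ).GNS →L[ℂ] (QS.pos hφ).GNS) :=
  (QS.pos hφ).gnsNonUnitalStarAlgHom

lemma Lam_dense {φ : A → ℂ} (hφ : φ ∈ QS A) : DenseRange (Lam hφ) :=
  (Completion.denseRange_coe (α := (QS.pos hφ).PreGNS)).comp
    (QS.pos hφ).toPreGNS.surjective.denseRange (Completion.continuous_coe _)

lemma gn_Lam {φ : A → ℂ} (hφ : φ ∈ QS A) (c a : A) : gn hφ c (Lam hφ a) = Lam hφ (c * a) := by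
  rw [gn, Lam, PositiveLinearMap.gnsNonUnitalStarAlgHom_apply_coe]
  rfl

lemma Lam_inner {φ : A → ℂ} (hφ : φ ∈ QS A) (a b : A) :
    ⟪Lam hφ a, Lam hφ b⟫_ℂ = φ (star a * b) := by
  rw [Lam, Lam, Completion.inner_coe, PositiveLinearMap.preGNS_inner_def]
  rfl

lemma rep_coeff {E F : Type u} [NormedAddCommGroup E] [InnerProductSpace ℂ E] [CompleteSpace E]
    [NormedAddCommGroup F] [InnerProductSpace ℂ F] [CompleteSpace F]
    (hNA : ∀ p, IsCStarNorm (NA p)) (hNB : ∀ q, IsCStarNorm (NB q))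
    {ι : A ⊗[ℂ] B →ₗ[ℂ] X} (hX : IsTensorCompletion (osProjNorm NA NB) X ι)
    (σ : A →⋆ₙₐ[ℂ] (E →L[ℂ] E)) (τ : B →⋆ₙₐ[ℂ] (F →L[ℂ] F)) (c : A) (d : B) (e e' : E) (f f' : F) :
    ⟪tt e' f', ext ι (legL F σ) (legR E τ) (ι (c ⊗ₜ d)) (tt e f)⟫_ℂ =
      ⟪e', σ c e⟫_ℂ * ⟪f', τ d f⟫_ℂ := by
  rw [ext_iota hNA hNB hX, prodMap_tmul, mul_apply_eq_comp]
  change ⟪tt e' f', legL F σ c (legR E τ d ((e ⊗ₜ[ℂ] f : E ⊗[ℂ] F) : Completion (E ⊗[ℂ] F)))⟫_ℂ = _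
  rw [legR_tmul, legL_tmul]
  exact tt_inner _ _ _ _

/-- matrix coefficient functional -/
def coeff {H : Type u} [NormedAddCommGroup H] [InnerProductSpace ℂ H] [CompleteSpace H]
    (R : X →L[ℂ] (H →L[ℂ] H)) (v w : H) : X →L[ℂ] ℂ :=
  (innerSL ℂ v) ∘L ((ContinuousLinearMap.apply ℂ H w) ∘L R)

lemma coeff_apply {H : Type u} [NormedAddCommGroup H] [InnerProductSpace ℂ H] [CompleteSpace H]
    (R : X →L[ℂ] (H →L[ℂ] H)) (v w : H) (x : X) : coeff R v w x = ⟪v, R x w⟫_ℂ := rfl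

lemma rep_exists (hNA : ∀ p, IsCStarNorm (NA p)) (hNB : ∀ q, IsCStarNorm (NB q))
    {ι : A ⊗[ℂ] B →ₗ[ℂ] X} (hX : IsTensorCompletion (osProjNorm NA NB) X ι)
    (K : Submodule ℂ X)
    (hK : IsClosed (K : Set X)) (hl : ∀ a, ∀ x ∈ K, a * x ∈ K) (hr : ∀ a, ∀ x ∈ K, x * a ∈ K)
    (hne : K ≠ ⊤) :
    ∃ (H : Type u) (_ : NormedAddCommGroup H) (_ : InnerProductSpace ℂ H) (_ : CompleteSpace H)
      (R : X →L[ℂ] (H →L[ℂ] H)), (∀ x y, R (x * y) = R x * R y) ∧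
        (∀ x, R (sharp hX x) = star (R x)) ∧ (∃ x, R x ≠ 0) ∧ ∀ k ∈ K, R k = 0 := by
  by_contra hcon
  apply hne
  refine K_eq_top hNA hNB hX K hK hl hr fun φ ψ hφ hψ => ?_
  by_contra hno
  apply hcon
  set σ := gn hφ.mem
  set τ := gn hψ.mem
  have hc := legs_comm σ τ
  refine ⟨Completion ((QS.pos hφ.mem).GNS ⊗[ℂ] (QS.pos hψ.mem).GNS), inferInstance, inferInstance,
    inferInstance, ext ι (legL _ σ) (legR _ τ), ext_mul hNA hNB hX _ _ hc,
    ext_sharp hNA hNB hX _ _ hc, ?_, ?_⟩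
  · obtain ⟨e, e1, he, -, -, h1, h1', hφe, -⟩ := excision φ hφ ∅ 1 one_pos
    obtain ⟨f, f1, hf, -, -, h2, h2', hψf, -⟩ := excision ψ hψ ∅ 1 one_pos
    refine ⟨ι (e1 ⊗ₜ f1), fun h0 => ?_⟩
    have := rep_coeff hNA hNB hX σ τ e1 f1 (Lam hφ.mem e) (Lam hφ.mem e) (Lam hψ.mem f) (Lam hψ.mem f)
    rw [h0, zero_apply, inner_zero_right, gn_Lam, gn_Lam, Lam_inner, Lam_inner, h1, h2,
      he.star_eq, hf.star_eq, h1', h2'] at this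
    exact mul_ne_zero hφe hψf this.symm
  · intro k hk
    refine eq_zero_of_coeff (Lam hφ.mem) (Lam hψ.mem) (Lam_dense _) (Lam_dense _) _ fun a a' b b' => ?_
    by_contra hne0
    apply hno
    refine star_lemma hNA hNB hX hφ hψ K hK hl hr a (star a') b (star b')
      (coeff (ext ι (legL _ σ) (legR _ τ)) (tt (Lam hφ.mem a') (Lam hψ.mem b'))
        (tt (Lam hφ.mem a) (Lam hψ.mem b))) (fun c d => ?_) k hk hne0
    rw [coeff_apply, rep_coeff hNA hNB hX, gn_Lam, gn_Lam, Lam_inner, Lam_inner, mul_assoc, mul_assoc]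

end gns

end WP


namespace WP

section irr
open scoped ComplexOrder InnerProductSpace
open UniformSpace Completion ContinuousLinearMap Filter Topology

variable {A : Type u} [NonUnitalCStarAlgebra A] [PartialOrder A] [StarOrderedRing A]

lemma QS_kadison {φ : A → ℂ} (hφ : φ ∈ QS A) (a : A) : ‖φ a‖ ≤ ‖Lam hφ a‖ := by
  have hu := CStarAlgebra.increasingApproximateUnit A
  have := hu.neBot
  have hb : ∀ᶠ u in CStarAlgebra.approximateUnit A, ‖φ (u * a)‖ ≤ ‖Lam hφ a‖ := by
    filter_upwards [hu.eventually_norm, hu.eventually_nonneg] with u h1 h2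
    have hsa : star u = u := (IsSelfAdjoint.of_nonneg h2).star_eq
    have e : φ (u * a) = ⟪Lam hφ u, Lam hφ a⟫_ℂ := by rw [Lam_inner, hsa]
    rw [e]
    have h3 : ‖Lam hφ u‖ ≤ 1 := by
      have h4 : ‖Lam hφ u‖ * ‖Lam hφ u‖ ≤ 1 := by
        have h5 := inner_self_eq_norm_mul_norm (𝕜 := ℂ) (Lam hφ u)
        rw [← h5, Lam_inner]
        calc _ ≤ ‖φ (star u * u)‖ := Complex.re_le_norm _
          _ ≤ ‖star u * u‖ := hφ.2.2.2 _
          _ ≤ ‖star u‖ * ‖u‖ := norm_mul_le _ _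
          _ ≤ 1 := by rw [norm_star]; nlinarith [norm_nonneg u]
      nlinarith [norm_nonneg (Lam hφ u)]
    calc _ ≤ ‖Lam hφ u‖ * ‖Lam hφ a‖ := norm_inner_le_norm _ _
      _ ≤ _ := by nlinarith [norm_nonneg (Lam hφ a)]
  have ht : Tendsto (fun u => ‖φ (u * a)‖) (CStarAlgebra.approximateUnit A) (𝓝 ‖φ a‖) :=
    (((QS.continuous hφ).tendsto a).comp (hu.tendsto_mul_right a)).norm
  exact le_of_tendsto ht hb

/-- linear version of `Lam` -/
def LamL {φ : A → ℂ} (hφ : φ ∈ QS A) : A →ₗ[ℂ] (QS.pos hφ).GNS :=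
  (Completion.toComplL (𝕜 := ℂ) (E := (QS.pos hφ).PreGNS)).toLinearMap ∘ₗ
    (QS.pos hφ).toPreGNS.toLinearMap

lemma LamL_apply {φ : A → ℂ} (hφ : φ ∈ QS A) (a : A) : LamL hφ a = Lam hφ a := rfl

lemma exists_cyclic {φ : A → ℂ} (hφ : φ ∈ QS A) :
    ∃ ξ : (QS.pos hφ).GNS, ‖ξ‖ ≤ 1 ∧ (∀ a, ⟪ξ, Lam hφ a⟫_ℂ = φ a) ∧ ∀ a, gn hφ a ξ = Lam hφ a := by
  have hd : DenseRange (LamL hφ) := Lam_dense hφ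
  have hbd : ∀ x : A, ‖QS.lin hφ x‖ ≤ 1 * ‖LamL hφ x‖ := fun x => by
    rw [one_mul]; exact QS_kadison hφ x
  set L := (QS.lin hφ).extendOfNorm (LamL hφ) with hL
  have hLe : ∀ a, L (Lam hφ a) = φ a := fun a => LinearMap.extendOfNorm_eq hd ⟨1, hbd⟩ a
  have hLn : ‖L‖ ≤ 1 := LinearMap.opNorm_extendOfNorm_le hd zero_le_one hbd
  set ξ := (InnerProductSpace.toDual ℂ (QS.pos hφ).GNS).symm L with hξ
  have h1 : ∀ a, ⟪ξ, Lam hφ a⟫_ℂ = φ a := fun a => by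
    rw [hξ, InnerProductSpace.toDual_symm_apply, hLe]
  refine ⟨ξ, ?_, h1, fun a => ?_⟩
  · rw [hξ, LinearIsometryEquiv.norm_map]; exact hLn
  · refine (Lam_dense hφ).eq_of_inner_left ℂ ?_
    intro b
    rw [Lam_inner, ← adjoint_inner_right, ← star_eq_adjoint, ← map_star, gn_Lam, h1]

lemma vec_QS {H : Type u} [NormedAddCommGroup H] [InnerProductSpace ℂ H] [CompleteSpace H]
    (σ : A →⋆ₙₐ[ℂ] (H →L[ℂ] H)) (v : H) (c : ℝ) (hc : 0 ≤ c) (hv : c * ‖v‖ ^ 2 ≤ 1) :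
    (fun a => (c : ℂ) * ⟪v, σ a v⟫_ℂ) ∈ QS A := by
  refine ⟨fun a b => ?_, fun z a => ?_, fun a ha => ?_, fun a => ?_⟩
  · beta_reduce; rw [map_add, add_apply, inner_add_right, mul_add]
  · beta_reduce; rw [map_smul, smul_apply, inner_smul_right]; ring
  · refine mul_nonneg (by exact_mod_cast hc) ?_
    obtain ⟨b, rfl⟩ := CStarAlgebra.nonneg_iff_eq_star_mul_self.1 ha
    rw [map_mul, mul_apply_eq_comp, map_star, star_eq_adjoint, adjoint_inner_right]
    rw [inner_self_eq_norm_sq_to_K]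
    exact pow_nonneg (by simp) 2
  · have h1 : ‖⟪v, σ a v⟫_ℂ‖ ≤ ‖v‖ * (‖a‖ * ‖v‖) :=
      (norm_inner_le_norm _ _).trans (mul_le_mul_of_nonneg_left
        (((σ a).le_opNorm v).trans (mul_le_mul_of_nonneg_right (NonUnitalStarAlgHom.norm_apply_le σ a)
          (norm_nonneg _))) (norm_nonneg _))
    rw [norm_mul, Complex.norm_real, Real.norm_of_nonneg hc]
    calc _ ≤ c * (‖v‖ * (‖a‖ * ‖v‖)) := mul_le_mul_of_nonneg_left h1 hc
      _ = (c * ‖v‖ ^ 2) * ‖a‖ := by ring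
      _ ≤ 1 * ‖a‖ := mul_le_mul_of_nonneg_right hv (norm_nonneg _)
      _ = ‖a‖ := one_mul _

lemma pure_irr {φ : A → ℂ} (hφ : Pure φ) (S : Submodule ℂ (QS.pos hφ.mem).GNS)
    (hS : IsClosed (S : Set (QS.pos hφ.mem).GNS)) (hinv : ∀ a, ∀ v ∈ S, gn hφ.mem a v ∈ S) :
    S = ⊥ ∨ S = ⊤ := by
  obtain ⟨ξ, hξ1, hξ, hcyc⟩ := exists_cyclic hφ.mem
  set σ := gn hφ.mem with hσ
  have hinv' : ∀ a, ∀ v ∈ Sᗮ, σ a v ∈ Sᗮ := by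
    intro a v hv
    rw [Submodule.mem_orthogonal] at hv ⊢
    intro w hw
    rw [← adjoint_inner_left, ← star_eq_adjoint, ← map_star]
    exact hv _ (hinv _ _ hw)
  have htop : ∀ T : Submodule ℂ (QS.pos hφ.mem).GNS, IsClosed (T : Set (QS.pos hφ.mem).GNS) →
      (∀ a, ∀ v ∈ T, σ a v ∈ T) → ξ ∈ T → T = ⊤ := by
    intro T hT hi hx
    rw [eq_top_iff]
    intro v _
    refine (Lam_dense hφ.mem).induction_on (p := fun v => v ∈ T) v hT fun a => ?_
    rw [← hcyc]; exact hi a _ hx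
  haveI : CompleteSpace S := hS.completeSpace_coe
  obtain ⟨x, hx, y, hy, hxy⟩ := S.exists_add_mem_mem_orthogonal ξ
  by_cases hx0 : x = 0
  · left
    rw [hx0, zero_add] at hxy
    have := htop Sᗮ S.isClosed_orthogonal hinv' (hxy ▸ hy)
    exact (Submodule.orthogonal_eq_top_iff S).1 this
  right
  refine htop S hS hinv ?_
  by_cases hy0 : y = 0
  · rw [hy0, add_zero] at hxy; rw [hxy]; exact hx
  set s := ‖x‖ ^ 2 with hs
  set t := ‖y‖ ^ 2 with ht
  have hs0 : 0 < s := by have := norm_pos_iff.2 hx0; positivity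
  have ht0 : 0 < t := by have := norm_pos_iff.2 hy0; positivity
  have hst : s + t ≤ 1 := by
    have h1 : ‖x + y‖ * ‖x + y‖ = ‖x‖ * ‖x‖ + ‖y‖ * ‖y‖ :=
      norm_add_sq_eq_norm_sq_add_norm_sq_of_inner_eq_zero x y (hy x hx)
    rw [← hxy] at h1
    nlinarith [norm_nonneg ξ]
  have hdec : ∀ a, φ a = ⟪x, σ a x⟫_ℂ + ⟪y, σ a y⟫_ℂ := by
    intro a
    have e1 : ⟪x, σ a y⟫_ℂ = 0 := hinv' a y hy x hx
    have e2 : ⟪y, σ a x⟫_ℂ = 0 := by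
      rw [← inner_conj_symm, hy _ (hinv a x hx), map_zero]
    rw [← hξ, ← hcyc, hxy, map_add, inner_add_left, inner_add_right, inner_add_right, e1, e2]
    ring
  have hQ1 := vec_QS σ x s⁻¹ (by positivity) (by rw [inv_mul_cancel₀ hs0.ne'])
  have hQ2 := vec_QS σ y (1 - s)⁻¹ (inv_nonneg.2 (by linarith))
    (by rw [inv_mul_le_one₀ (by linarith)]; linarith)
  have hex := (mem_extremePoints_iff_left.1 hφ.1).2 _ hQ1 _ hQ2
    ⟨s, 1 - s, hs0, by linarith, by ring, by
      funext a
      have h1 : (s : ℂ) ≠ 0 := by exact_mod_cast hs0.ne'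
      have h2 : (1 - s : ℂ) ≠ 0 := by
        have : (1 - s : ℝ) ≠ 0 := by linarith
        exact_mod_cast this
      rw [hdec a]
      simp only [Pi.add_apply, Pi.smul_apply, Complex.real_smul, Complex.ofReal_inv,
        Complex.ofReal_sub, Complex.ofReal_one]
      field_simp⟩
  have hfin : x = (s : ℂ) • ξ := by
    refine (Lam_dense hφ.mem).eq_of_inner_left ℂ ?_
    intro a
    have h1 : (s : ℂ) ≠ 0 := by exact_mod_cast hs0.ne'
    have h2 := congrFun hex a
    beta_reduce at h2
    have e1 : ⟪x, σ a y⟫_ℂ = 0 := hinv' a y hy x hx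
    rw [inner_smul_left, hξ, ← h2, ← hcyc, hxy, map_add, inner_add_right, e1]
    simp [h1]
  have h1 : (s : ℂ) ≠ 0 := by exact_mod_cast hs0.ne'
  rw [hfin] at hx
  exact (S.smul_mem_iff h1).1 hx

lemma gn_ne {φ : A → ℂ} (hφ : Pure φ) : ∃ a, gn hφ.mem a ≠ 0 := by
  by_contra hcon
  push Not at hcon
  obtain ⟨ξ, -, hξ, hcyc⟩ := exists_cyclic hφ.mem
  apply hφ.2
  funext a
  rw [← hξ a, ← hcyc, hcon a, zero_apply, inner_zero_right]; rfl

end irr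

end WP


namespace WP

section irr2
open scoped ComplexOrder InnerProductSpace
open ContinuousLinearMap Filter Topology

lemma exists_irr {D : Type u} [NonUnitalCStarAlgebra D] [Nontrivial D] :
    ∃ (H : Type u) (_ : NormedAddCommGroup H) (_ : InnerProductSpace ℂ H) (_ : CompleteSpace H)
      (σ : D →⋆ₙₐ[ℂ] (H →L[ℂ] H)), (∃ d, σ d ≠ 0) ∧
      ∀ S : Submodule ℂ H, IsClosed (S : Set H) → (∀ d, ∀ v ∈ S, σ d v ∈ S) → S = ⊥ ∨ S = ⊤ := by
  letI := CStarAlgebra.spectralOrder D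
  haveI := CStarAlgebra.spectralOrderedRing D
  obtain ⟨φ, hφ, -⟩ := L3 (⊥ : Submodule ℂ D) isClosed_singleton
    (fun a x hx => by rw [(Submodule.mem_bot ℂ).1 hx, mul_zero]; exact Submodule.zero_mem _) bot_ne_top
  exact ⟨_, inferInstance, inferInstance, inferInstance, gn hφ.mem, gn_ne hφ, pure_irr hφ⟩

variable {X : Type u} [NonUnitalNormedRing X] [NormedSpace ℂ X]

/-- the range of a representation as a star-subalgebra -/
def rangeAlg {H : Type u} [NormedAddCommGroup H] [InnerProductSpace ℂ H] [CompleteSpace H]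
    (R : X →L[ℂ] (H →L[ℂ] H)) (hm : ∀ x y, R (x * y) = R x * R y) (sh : X → X)
    (hsh : ∀ x, R (sh x) = star (R x)) : NonUnitalStarSubalgebra ℂ (H →L[ℂ] H) where
  carrier := Set.range R
  add_mem' := by rintro _ _ ⟨x, rfl⟩ ⟨y, rfl⟩; exact ⟨x + y, map_add _ _ _⟩
  zero_mem' := ⟨0, map_zero _⟩
  mul_mem' := by rintro _ _ ⟨x, rfl⟩ ⟨y, rfl⟩; exact ⟨x * y, hm _ _⟩
  smul_mem' := by rintro c _ ⟨x, rfl⟩; exact ⟨c • x, map_smul _ _ _⟩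
  star_mem' := by rintro _ ⟨x, rfl⟩; exact ⟨sh x, hsh x⟩

lemma irr_rep {H : Type u} [NormedAddCommGroup H] [InnerProductSpace ℂ H] [CompleteSpace H]
    (R : X →L[ℂ] (H →L[ℂ] H)) (hm : ∀ x y, R (x * y) = R x * R y) (sh : X → X)
    (hsh : ∀ x, R (sh x) = star (R x)) (hne : ∃ x, R x ≠ 0) :
    ∃ (H' : Type u) (_ : NormedAddCommGroup H') (_ : InnerProductSpace ℂ H') (_ : CompleteSpace H')
      (π : X →L[ℂ] (H' →L[ℂ] H')), (∀ x y, π (x * y) = π x * π y) ∧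
        (∀ x, π (sh x) = star (π x)) ∧ (∃ x, π x ≠ 0) ∧ (∀ x, R x = 0 → π x = 0) ∧
      ∀ S : Submodule ℂ H', IsClosed (S : Set H') → (∀ x, ∀ v ∈ S, π x v ∈ S) → S = ⊥ ∨ S = ⊤ := by
  set D := (rangeAlg R hm sh hsh).topologicalClosure with hD
  haveI hcl : IsClosed (D : Set (H →L[ℂ] H)) := NonUnitalStarSubalgebra.isClosed_topologicalClosure _
  letI : NonUnitalCStarAlgebra D := NonUnitalStarSubalgebra.nonUnitalCStarAlgebra D
  have hmem : ∀ x, R x ∈ D := fun x => subset_closure ⟨x, rfl⟩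
  let Q : X → D := fun x => ⟨R x, hmem x⟩
  have hQd : DenseRange Q := by
    rintro ⟨d, hd⟩
    rw [closure_subtype]
    have : d ∈ closure (Set.range R) := hd
    refine closure_mono ?_ this
    rintro _ ⟨x, rfl⟩
    exact ⟨Q x, ⟨x, rfl⟩, rfl⟩
  have hQc : Continuous Q := R.continuous.subtype_mk hmem
  obtain ⟨x0, hx0⟩ := hne
  haveI : Nontrivial D := ⟨Q x0, 0, fun h => hx0 (congrArg Subtype.val h)⟩
  obtain ⟨H', i1, i2, i3, σ, hσ0, hirr⟩ := exists_irr (D := D)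
  have hσc : Continuous σ := AddMonoidHomClass.continuous_of_bound σ 1 fun a => by
    rw [one_mul]; exact NonUnitalStarAlgHom.norm_apply_le σ a
  let π : X →L[ℂ] (H' →L[ℂ] H') :=
    { toFun := fun x => σ (Q x)
      map_add' := fun x y => by
        rw [← map_add]; congr 1; exact Subtype.ext (map_add R x y)
      map_smul' := fun c x => by
        rw [RingHom.id_apply, ← map_smul]; congr 1; exact Subtype.ext (map_smul R c x)
      cont := hσc.comp hQc }
  have hπ : ∀ x, π x = σ (Q x) := fun _ => rfl
  refine ⟨H', i1, i2, i3, π, fun x y => ?_, fun x => ?_, ?_, fun x hx => ?_, fun S hS hi => ?_⟩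
  · rw [hπ, hπ, hπ, ← map_mul]; congr 1; exact Subtype.ext (hm x y)
  · rw [hπ, hπ, ← map_star]; congr 1; exact Subtype.ext (hsh x)
  · by_contra hcon
    push Not at hcon
    obtain ⟨d, hd⟩ := hσ0
    apply hd
    exact hQd.induction_on (p := fun d => σ d = 0) d (isClosed_eq hσc continuous_const) hcon
  · rw [hπ, ← map_zero σ]; congr 1; exact Subtype.ext hx
  · refine hirr S hS fun d v hv => ?_
    refine hQd.induction_on (p := fun d => σ d v ∈ S) d
      (hS.preimage (by fun_prop)) (fun x => hi x v hv)

end irr2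

end WP


namespace WP

section ransford
open Filter Topology

lemma three_circ (f : ℂ → ℂ) (hf : Differentiable ℂ f) (R a b : ℝ) (hR : 1 < R)
    (ha : ∀ z, ‖z‖ = R → ‖f z‖ ≤ a) (hb : ∀ z, ‖z‖ = R⁻¹ → ‖f z‖ ≤ b) : ‖f 1‖ ^ 2 ≤ a * b := by
  set U : Set ℂ := {z | R⁻¹ < ‖z‖ ∧ ‖z‖ < R} with hU
  have hR1 : R⁻¹ < 1 := inv_lt_one_of_one_lt₀ hR
  have hR0 : 0 < R⁻¹ := by positivity
  have hUo : IsOpen U := (isOpen_lt continuous_const continuous_norm).inter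
    (isOpen_lt continuous_norm continuous_const)
  have hUc : closure U ⊆ {z | R⁻¹ ≤ ‖z‖ ∧ ‖z‖ ≤ R} := by
    refine closure_minimal (fun z hz => ⟨hz.1.le, hz.2.le⟩) ?_
    exact (isClosed_le continuous_const continuous_norm).inter
      (isClosed_le continuous_norm continuous_const)
  have hbd : Bornology.IsBounded U := by
    refine (Metric.isBounded_closedBall (x := (0 : ℂ)) (r := R)).subset fun z hz => ?_
    rw [mem_closedBall_zero_iff]; exact hz.2.le
  have hd : DiffContOnCl ℂ (fun z => f z * f z⁻¹) U := by
    refine DifferentiableOn.diffContOnCl fun z hz => ?_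
    have hz0 : z ≠ 0 := by
      rintro rfl
      have := (hUc hz).1
      rw [norm_zero] at this; linarith
    exact ((hf z).mul ((hf z⁻¹).comp z (differentiableAt_inv hz0))).differentiableWithinAt
  have hfr : ∀ z ∈ frontier U, ‖f z * f z⁻¹‖ ≤ a * b := by
    intro z hz
    rw [hUo.frontier_eq] at hz
    have h1 := hUc hz.1
    have h2 : ‖z‖ = R ∨ ‖z‖ = R⁻¹ := by
      by_contra hcon
      push Not at hcon
      exact hz.2 ⟨lt_of_le_of_ne h1.1 (Ne.symm hcon.2), lt_of_le_of_ne h1.2 hcon.1⟩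
    rw [norm_mul]
    rcases h2 with h2 | h2
    · have h3 := ha z h2
      have h4 := hb z⁻¹ (by rw [norm_inv, h2])
      exact mul_le_mul h3 h4 (norm_nonneg _) ((norm_nonneg _).trans h3)
    · have h3 := hb z h2
      have h4 := ha z⁻¹ (by rw [norm_inv, h2, inv_inv])
      rw [mul_comm]
      exact mul_le_mul h4 h3 (norm_nonneg _) ((norm_nonneg _).trans h4)
  have := Complex.norm_le_of_forall_mem_frontier_norm_le hbd hd hfr (z := 1)
    (subset_closure (by simp [hU, hR, hR1]))
  simpa [sq] using this

lemma three_circ_alg {V : Type*} [NormedRing V] [NormedAlgebra ℂ V] (P Q : V) (R M δ : ℝ)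
    (hR : 1 < R) (hM : 0 ≤ M)
    (h1 : ∀ z : ℂ, ‖z‖ = R → ∃ k : ℕ, ‖(z • P + Q) ^ 2 ^ k‖ < M ^ 2 ^ k)
    (h2 : ∀ z : ℂ, ‖z‖ = R⁻¹ → ‖z • P + Q‖ ≤ δ) (k0 : ℕ) :
    ∃ k ≥ k0, ‖(P + Q) ^ 2 ^ k‖ ^ 2 ≤ (M * δ) ^ 2 ^ k := by
  set W : ℕ → Set ℂ := fun k => {z | ‖(z • P + Q) ^ 2 ^ k‖ < M ^ 2 ^ k} with hW
  have hstep : ∀ k, W k ⊆ W (k + 1) := by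
    intro k z hz
    change ‖(z • P + Q) ^ 2 ^ (k + 1)‖ < M ^ 2 ^ (k + 1)
    rw [pow_succ 2 k, pow_mul, pow_mul]
    have hz' : ‖(z • P + Q) ^ 2 ^ k‖ < M ^ 2 ^ k := hz
    calc _ ≤ ‖(z • P + Q) ^ 2 ^ k‖ ^ 2 := norm_pow_le' _ (by norm_num)
      _ < _ := by gcongr
  have hmono : Monotone W := monotone_nat_of_le_succ hstep
  have hopen : ∀ k, IsOpen (W k) := fun k => isOpen_lt (by fun_prop) continuous_const
  obtain ⟨k1, hk1⟩ := (isCompact_sphere (0 : ℂ) R).elim_directed_cover W hopen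
    (fun z hz => Set.mem_iUnion.2 (h1 z (mem_sphere_zero_iff_norm.1 hz))) (hmono.directed_le)
  set k := max k0 k1 with hk
  refine ⟨k, le_max_left _ _, ?_⟩
  have hWk : ∀ z : ℂ, ‖z‖ = R → ‖(z • P + Q) ^ 2 ^ k‖ ≤ M ^ 2 ^ k := fun z hz =>
    le_of_lt (hmono (le_max_right _ _) (hk1 (mem_sphere_zero_iff_norm.2 hz)))
  obtain ⟨g, hg1, hg⟩ := exists_dual_vector'' ℂ ((P + Q) ^ 2 ^ k)
  have hgb : ∀ v, ‖g v‖ ≤ ‖v‖ := fun v => (g.le_of_opNorm_le hg1 v).trans (by rw [one_mul])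
  have h3 := three_circ (fun z => g ((z • P + Q) ^ 2 ^ k)) (by fun_prop) R (M ^ 2 ^ k) (δ ^ 2 ^ k) hR
    (fun z hz => (hgb _).trans (hWk z hz))
    (fun z hz => (hgb _).trans ((norm_pow_le' _ (by positivity)).trans
      (pow_le_pow_left₀ (norm_nonneg _) (h2 z hz) _)))
  rw [mul_pow]
  simpa [hg] using h3

variable {X : Type u} [NonUnitalNormedRing X] [NormedSpace ℂ X] [CompleteSpace X]
    [IsScalarTower ℂ X X] [SMulCommClass ℂ X X]

/-- left multiplication -/
def Lm : X →L[ℂ] X →L[ℂ] X := ContinuousLinearMap.mul ℂ X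

lemma Lm_apply (x y : X) : Lm x y = x * y := rfl

lemma Lm_norm (x : X) : ‖Lm x‖ ≤ ‖x‖ := ContinuousLinearMap.opNorm_mul_apply_le ℂ X x

lemma gelf [Nontrivial X] (θ : X ≃ₗ[ℂ] X) (hθ : ∀ x y, θ (x * y) = θ x * θ y) (c : X) (M : ℝ)
    (hc : ‖c‖ < M) : ∃ k : ℕ, ‖(Lm (θ c)) ^ 2 ^ k‖ < M ^ 2 ^ k := by
  have hM : 0 < M := (norm_nonneg c).trans_lt hc
  have hspec : ∀ z ∈ spectrum ℂ (Lm (θ c)), ‖z‖₊ < M.toNNReal := by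
    intro z hz
    have hz' : z ∈ spectrum ℂ (Lm c) := by
      by_contra hcon
      apply hz
      rw [spectrum.notMem_iff] at hcon
      change IsUnit _
      rw [ContinuousLinearMap.isUnit_iff_bijective] at hcon ⊢
      have he : ⇑((algebraMap ℂ (X →L[ℂ] X)) z - Lm (θ c)) =
          θ ∘ ⇑((algebraMap ℂ (X →L[ℂ] X)) z - Lm c) ∘ θ.symm := by
        funext v
        simp [Algebra.algebraMap_eq_smul_one, Lm_apply, hθ]
      rw [he]
      exact θ.bijective.comp (hcon.comp θ.symm.bijective)
    have h1 := spectrum.norm_le_norm_of_mem hz'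
    rw [← NNReal.coe_lt_coe, coe_nnnorm, Real.coe_toNNReal _ hM.le]
    exact (h1.trans (Lm_norm c)).trans_lt hc
  have hr := spectrum.spectralRadius_lt_of_forall_lt (Lm (θ c)) hspec
  have ht := spectrum.pow_norm_pow_one_div_tendsto_nhds_spectralRadius (Lm (θ c))
  have hev := ht.eventually_lt_const hr
  have h2 : Tendsto (fun k : ℕ => 2 ^ k) atTop atTop := tendsto_pow_atTop_atTop_of_one_lt (by norm_num)
  obtain ⟨k, hk⟩ := (h2.eventually hev).exists
  refine ⟨k, ?_⟩
  have hk' : ‖(Lm (θ c)) ^ 2 ^ k‖ ^ (1 / ((2 ^ k : ℕ) : ℝ)) < M := by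
    have : ENNReal.ofReal _ < ENNReal.ofReal M := hk
    exact (ENNReal.ofReal_lt_ofReal_iff hM).1 this
  have h3 := pow_lt_pow_left₀ hk' (by positivity) (n := 2 ^ k) (by positivity)
  rwa [one_div, Real.rpow_inv_natCast_pow (norm_nonneg _) (by positivity)] at h3

lemma ransford [Nontrivial X] (θ : X ≃ₗ[ℂ] X) (hθ : ∀ x y, θ (x * y) = θ x * θ y) (y : X)
    (x : ℕ → X) (hx : Tendsto x atTop (𝓝 0)) (hy : Tendsto (fun n => θ (x n)) atTop (𝓝 y))
    (η : ℝ) (hη : 0 < η) (k0 : ℕ) : ∃ k ≥ k0, ‖(Lm y) ^ 2 ^ k‖ ≤ η ^ 2 ^ k := by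
  set b := θ.symm y with hb
  set M := ‖b‖ + 1 with hM
  have hM0 : 0 < M := by positivity
  set R := 2 + M * (‖y‖ + 1) / η ^ 2 with hR
  have hR1 : 1 < R := by
    have : 0 ≤ M * (‖y‖ + 1) / η ^ 2 := by positivity
    linarith
  have hR0 : 0 < R := by linarith
  have hδ : M * ((‖y‖ + 1) / R) ≤ η ^ 2 := by
    rw [← mul_div_assoc, div_le_iff₀ hR0]
    have : η ^ 2 * R = η ^ 2 * 2 + M * (‖y‖ + 1) := by rw [hR]; field_simp
    rw [this]; nlinarith [sq_nonneg η]
  have e1 : ∀ᶠ n in atTop, (R + 1) * ‖x n‖ < 1 := by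
    have : Tendsto (fun n => (R + 1) * ‖x n‖) atTop (𝓝 0) := by
      simpa using hx.norm.const_mul (R + 1)
    exact this.eventually_lt_const one_pos
  have e2 : ∀ᶠ n in atTop, (R⁻¹ + 1) * ‖θ (x n) - y‖ < R⁻¹ := by
    have : Tendsto (fun n => (R⁻¹ + 1) * ‖θ (x n) - y‖) atTop (𝓝 0) := by
      simpa using (hy.sub_const y).norm.const_mul (R⁻¹ + 1)
    exact this.eventually_lt_const (by positivity)
  obtain ⟨n, h1, h2⟩ := (e1.and e2).exists
  obtain ⟨k, hk, h3⟩ := three_circ_alg (Lm (θ (x n))) (Lm (y - θ (x n))) R M ((‖y‖ + 1) / R) hR1 hM0.le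
    (fun z hz => by
      have := gelf θ hθ (z • x n + (b - x n)) M (by
        calc _ ≤ ‖z • x n‖ + (‖b‖ + ‖x n‖) := (norm_add_le _ _).trans (by gcongr; exact norm_sub_le _ _)
          _ = ‖b‖ + (R + 1) * ‖x n‖ := by rw [norm_smul, hz]; ring
          _ < M := by linarith)
      rwa [map_add, map_smul, map_sub, hb, LinearEquiv.apply_symm_apply, map_add, map_smul] at this)
    (fun z hz => by
      rw [← map_smul, ← map_add]
      refine (Lm_norm _).trans ?_
      have : z • θ (x n) + (y - θ (x n)) = z • y + (z • (θ (x n) - y) - (θ (x n) - y)) := by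
        rw [smul_sub]; abel
      rw [this]
      calc _ ≤ ‖z • y‖ + (‖z • (θ (x n) - y)‖ + ‖θ (x n) - y‖) :=
            (norm_add_le _ _).trans (by gcongr; exact norm_sub_le _ _)
        _ = R⁻¹ * ‖y‖ + (R⁻¹ + 1) * ‖θ (x n) - y‖ := by rw [norm_smul, norm_smul, hz]; ring
        _ ≤ R⁻¹ * ‖y‖ + R⁻¹ := by linarith
        _ = (‖y‖ + 1) / R := by field_simp) k0
  refine ⟨k, hk, ?_⟩
  rw [← map_add, add_sub_cancel] at h3
  have h4 : ‖(Lm y) ^ 2 ^ k‖ ^ 2 ≤ (η ^ 2 ^ k) ^ 2 := by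
    refine h3.trans ?_
    rw [← pow_mul, mul_comm (2 ^ k) 2, pow_mul]
    exact pow_le_pow_left₀ (by positivity) hδ _
  exact (pow_le_pow_iff_left₀ (norm_nonneg _) (by positivity) two_ne_zero).1 h4

end ransford

end WP


namespace WP

section starx
open Filter Topology

variable {A B X : Type u} [NonUnitalCStarAlgebra A] [PartialOrder A] [StarOrderedRing A]
variable [NonUnitalCStarAlgebra B] [PartialOrder B] [StarOrderedRing B]
    [NonUnitalNormedRing X] [StarRing X] [NormedSpace ℂ X] [CompleteSpace X]
    [IsScalarTower ℂ X X] [SMulCommClass ℂ X X]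
    {NA : ∀ p : ℕ, Matrix (Fin p) (Fin p) A → ℝ}
    {NB : ∀ q : ℕ, Matrix (Fin q) (Fin q) B → ℝ}

/-- the involution is automatically conjugate-linear -/
lemma star_smul_X (hNA : ∀ p, IsCStarNorm (NA p)) (hNB : ∀ q, IsCStarNorm (NB q))
    {ι : A ⊗[ℂ] B →ₗ[ℂ] X} (hX : IsTensorCompletion (osProjNorm NA NB) X ι) (c : ℂ) (x : X) :
    star (c • x) = star c • star x := by
  have h1 := au_right hNA hNB hX (star (c • x))
  have h2 := au_right hNA hNB hX (star c • star x)
  refine tendsto_nhds_unique h1 (h2.congr fun z => ?_)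
  have e : ι (z.1 ⊗ₜ[ℂ] z.2) = star (ι (star z.1 ⊗ₜ[ℂ] star z.2)) := by
    rw [hX.star_tmul, star_star, star_star]
  rw [e, ← star_mul, mul_smul_comm, ← smul_mul_assoc, ← map_smul, star_mul, star_iota_smul hX,
    smul_mul_assoc, mul_smul_comm]

lemma sharp_mul (hNA : ∀ p, IsCStarNorm (NA p)) (hNB : ∀ q, IsCStarNorm (NB q))
    {ι : A ⊗[ℂ] B →ₗ[ℂ] X} (hX : IsTensorCompletion (osProjNorm NA NB) X ι) (x y : X) :
    sharp hX (x * y) = sharp hX y * sharp hX x := by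
  have hmul : ∀ u v : A ⊗[ℂ] B, ∃ w, ι u * ι v = ι w := by
    intro u v
    induction u with
    | zero => exact ⟨0, by simp⟩
    | add u u' h h' =>
      obtain ⟨w, hw⟩ := h
      obtain ⟨w', hw'⟩ := h'
      exact ⟨w + w', by rw [map_add, map_add, add_mul, hw, hw']⟩
    | tmul a b =>
      induction v with
      | zero => exact ⟨0, by simp⟩
      | add u u' h h' =>
        obtain ⟨w, hw⟩ := h
        obtain ⟨w', hw'⟩ := h'
        exact ⟨w + w', by rw [map_add, map_add, mul_add, hw, hw']⟩
      | tmul a' b' => exact ⟨_, hX.mul_tmul _ _ _ _⟩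
  refine hX.dense.induction_on₂ (p := fun x y => sharp hX (x * y) = sharp hX y * sharp hX x)
    (isClosed_eq (by fun_prop) (by fun_prop)) ?_ x y
  intro u v
  obtain ⟨w, hw⟩ := hmul u v
  rw [hw, sharp_iota hNA hNB, sharp_iota hNA hNB, sharp_iota hNA hNB, ← hw, star_mul]

lemma star_iota_range {ι : A ⊗[ℂ] B →ₗ[ℂ] X} (hX : IsTensorCompletion (osProjNorm NA NB) X ι)
    (u : A ⊗[ℂ] B) : ∃ w, star (ι u) = ι w := by
  induction u with
  | zero => exact ⟨0, by simp⟩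
  | add u u' h h' =>
    obtain ⟨w, hw⟩ := h
    obtain ⟨w', hw'⟩ := h'
    exact ⟨w + w', by rw [map_add, map_add, star_add, hw, hw']⟩
  | tmul a b => exact ⟨_, hX.star_tmul _ _⟩

lemma sharp_sharp (hNA : ∀ p, IsCStarNorm (NA p)) (hNB : ∀ q, IsCStarNorm (NB q))
    {ι : A ⊗[ℂ] B →ₗ[ℂ] X} (hX : IsTensorCompletion (osProjNorm NA NB) X ι) (x : X) :
    sharp hX (sharp hX x) = x := by
  refine hX.dense.induction_on (p := fun x => sharp hX (sharp hX x) = x) x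
    (isClosed_eq (by fun_prop) (by fun_prop)) ?_
  intro u
  obtain ⟨w, hw⟩ := star_iota_range hX u
  rw [sharp_iota hNA hNB, hw, sharp_iota hNA hNB, ← hw, star_star]

/-- comparison of the two involutions -/
def theta (hNA : ∀ p, IsCStarNorm (NA p)) (hNB : ∀ q, IsCStarNorm (NB q))
    {ι : A ⊗[ℂ] B →ₗ[ℂ] X} (hX : IsTensorCompletion (osProjNorm NA NB) X ι) : X ≃ₗ[ℂ] X where
  toFun x := sharp hX (star x)
  invFun x := star (sharp hX x)
  map_add' x y := by rw [star_add, map_add]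
  map_smul' c x := by
    rw [star_smul_X hNA hNB hX, map_smulₛₗ]
    simp
  left_inv x := by simp only [sharp_sharp hNA hNB hX, star_star]
  right_inv x := by simp only [sharp_sharp hNA hNB hX, star_star]

lemma theta_apply (hNA : ∀ p, IsCStarNorm (NA p)) (hNB : ∀ q, IsCStarNorm (NB q))
    {ι : A ⊗[ℂ] B →ₗ[ℂ] X} (hX : IsTensorCompletion (osProjNorm NA NB) X ι) (x : X) :
    theta hNA hNB hX x = sharp hX (star x) := rfl

lemma theta_mul (hNA : ∀ p, IsCStarNorm (NA p)) (hNB : ∀ q, IsCStarNorm (NB q))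
    {ι : A ⊗[ℂ] B →ₗ[ℂ] X} (hX : IsTensorCompletion (osProjNorm NA NB) X ι) (x y : X) :
    theta hNA hNB hX (x * y) = theta hNA hNB hX x * theta hNA hNB hX y := by
  simp only [theta_apply, star_mul, sharp_mul hNA hNB hX]

lemma theta_iota (hNA : ∀ p, IsCStarNorm (NA p)) (hNB : ∀ q, IsCStarNorm (NB q))
    {ι : A ⊗[ℂ] B →ₗ[ℂ] X} (hX : IsTensorCompletion (osProjNorm NA NB) X ι) (u : A ⊗[ℂ] B) :
    theta hNA hNB hX (ι u) = ι u := by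
  obtain ⟨w, hw⟩ := star_iota_range hX u
  rw [theta_apply, hw, sharp_iota hNA hNB, ← hw, star_star]

variable {H : Type u} [NormedAddCommGroup H] [InnerProductSpace ℂ H] [CompleteSpace H]

lemma pi_Lm_pow (π : X →L[ℂ] (H →L[ℂ] H)) (hm : ∀ x y, π (x * y) = π x * π y) (v : X) (n : ℕ) :
    π ((Lm v ^ n) v) = π v ^ (n + 1) := by
  induction n with
  | zero => simp
  | succ n ih => rw [pow_succ', ContinuousLinearMap.mul_apply, Lm_apply, hm, ih, ← pow_succ']

lemma pi_sep_zero [Nontrivial X] (π : X →L[ℂ] (H →L[ℂ] H)) (hm : ∀ x y, π (x * y) = π x * π y)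
    (sh : X → X) (hsh : ∀ x, π (sh x) = star (π x))
    (θ : X ≃ₗ[ℂ] X) (hθ : ∀ x y, θ (x * y) = θ x * θ y) (y : X)
    (x : ℕ → X) (hx : Tendsto x atTop (𝓝 0)) (hy : Tendsto (fun n => θ (x n)) atTop (𝓝 y)) :
    π y = 0 := by
  set v := sh y * y with hv
  have hπv : π v = star (π y) * π y := by rw [hv, hm, hsh]
  have hsa : IsSelfAdjoint (π v) := by rw [hπv]; exact IsSelfAdjoint.star_mul_self _
  have hx' : Tendsto (fun n => θ.symm (sh y) * x n) atTop (𝓝 0) := by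
    simpa using (tendsto_const_nhds (x := θ.symm (sh y))).mul hx
  have hy' : Tendsto (fun n => θ (θ.symm (sh y) * x n)) atTop (𝓝 v) := by
    simp only [hθ, LinearEquiv.apply_symm_apply]
    exact tendsto_const_nhds.mul hy
  have hR := ransford θ hθ v _ hx' hy'
  suffices h : π v = 0 by
    rw [hπv] at h
    exact CStarRing.star_mul_self_eq_zero_iff (π y) |>.1 h
  by_contra hne
  set t := ‖π v‖ with ht
  have ht0 : 0 < t := norm_pos_iff.2 hne
  -- choose η = t / 2
  set C := ‖π‖ * ‖v‖ with hC
  have hC0 : 0 ≤ C := by positivity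
  obtain ⟨k0, hk0⟩ : ∃ k0 : ℕ, C / t < 2 ^ k0 := pow_unbounded_of_one_lt _ (by norm_num)
  obtain ⟨k, hk, hb⟩ := hR (t / 2) (by positivity) k0
  set N := 2 ^ k with hN
  have hN1 : 1 ≤ N := Nat.one_le_two_pow
  have hkN : k0 ≤ N := hk.trans (Nat.lt_two_pow_self (n := k)).le
  have e1 : ‖π v ^ (2 * N)‖ = t ^ (2 * N) := by
    have := hsa.nnnorm_pow_two_pow (k + 1)
    have h2 : 2 * N = 2 ^ (k + 1) := by rw [hN, pow_succ']
    rw [h2]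
    have h3 := congrArg NNReal.toReal this
    simpa using h3
  have e2 : ‖π v ^ (N + 1)‖ ≤ C * (t / 2) ^ N := by
    rw [← pi_Lm_pow π hm]
    calc _ ≤ ‖π‖ * ‖(Lm v ^ N) v‖ := π.le_opNorm _
      _ ≤ ‖π‖ * (‖Lm v ^ N‖ * ‖v‖) := by gcongr; exact ContinuousLinearMap.le_opNorm _ _
      _ ≤ ‖π‖ * ((t / 2) ^ N * ‖v‖) := by gcongr
      _ = _ := by rw [hC]; ring
  have e3 : ‖π v ^ (2 * N)‖ ≤ (C * (t / 2) ^ N) * t ^ (N - 1) := by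
    have : 2 * N = (N + 1) + (N - 1) := by omega
    rw [this, pow_add]
    refine (norm_mul_le _ _).trans ?_
    gcongr
    by_cases hz : N - 1 = 0
    · rw [hz, pow_zero, pow_zero]; exact ContinuousLinearMap.norm_id_le
    · exact norm_pow_le' _ (Nat.pos_of_ne_zero hz)
  rw [e1] at e3
  have e4 : t ^ (2 * N) = t ^ N * t ^ (N - 1) * t := by
    rw [mul_assoc, ← pow_succ, ← pow_add]; congr 1; omega
  rw [e4, div_pow] at e3
  have hp : 0 < t ^ N * t ^ (N - 1) := by positivity
  have e5 : t ≤ C / 2 ^ N := by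
    have : t ^ N * t ^ (N - 1) * t ≤ t ^ N * t ^ (N - 1) * (C / 2 ^ N) := by
      refine e3.trans_eq ?_; ring
    exact le_of_mul_le_mul_left this hp
  rw [le_div_iff₀ (by positivity)] at e5
  rw [div_lt_iff₀ ht0] at hk0
  have : (2:ℝ) ^ k0 ≤ 2 ^ N := pow_le_pow_right₀ (by norm_num) hkN
  nlinarith

lemma pi_theta [Nontrivial X] (π : X →L[ℂ] (H →L[ℂ] H)) (hm : ∀ x y, π (x * y) = π x * π y)
    (sh : X → X) (hsh : ∀ x, π (sh x) = star (π x))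
    (θ : X ≃ₗ[ℂ] X) (hθ : ∀ x y, θ (x * y) = θ x * θ y) :
    Continuous (fun x => π (θ x)) := by
  set G : Submodule ℂ (X × X) := (θ : X →ₗ[ℂ] X).graph.topologicalClosure with hG
  have hGc : IsClosed (G : Set (X × X)) := Submodule.isClosed_topologicalClosure _
  haveI : CompleteSpace G := hGc.completeSpace_coe
  have hGs : ∀ x, (x, θ x) ∈ G := fun x => subset_closure (by simp)
  have hG0 : ∀ y, ((0 : X), y) ∈ G → π y = 0 := by
    intro y hy
    have hy' : ((0 : X), y) ∈ closure ((θ : X →ₗ[ℂ] X).graph : Set (X × X)) := hy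
    obtain ⟨s, hs, hlim⟩ := mem_closure_iff_seq_limit.1 hy'
    refine pi_sep_zero π hm sh hsh θ hθ y (fun n => (s n).1)
      ((continuous_fst.tendsto _).comp hlim) ?_
    have := (continuous_snd.tendsto _).comp hlim
    refine this.congr fun n => ?_
    have h := hs n
    simpa using h
  let f : G →L[ℂ] X := (ContinuousLinearMap.fst ℂ X X).comp G.subtypeL
  have hf : Function.Surjective f := fun x => ⟨⟨(x, θ x), hGs x⟩, rfl⟩
  obtain ⟨C, hC, hb⟩ := f.exists_preimage_norm_le hf
  let T : X →ₗ[ℂ] (H →L[ℂ] H) := (π : X →ₗ[ℂ] (H →L[ℂ] H)).comp (θ : X →ₗ[ℂ] X)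
  refine AddMonoidHomClass.continuous_of_bound T (‖π‖ * C) fun x => ?_
  obtain ⟨⟨⟨x', y⟩, hg⟩, hx', hn⟩ := hb x
  have hx'' : x' = x := hx'
  subst hx''
  have h0 : ((0 : X), y - θ x') ∈ G := by
    have := G.sub_mem hg (hGs x')
    simpa using this
  have h1 := hG0 _ h0
  rw [map_sub, sub_eq_zero] at h1
  have h2 : T x' = π y := h1.symm
  rw [h2]
  have h3 : ‖y‖ ≤ C * ‖x'‖ := (norm_snd_le (x', y)).trans hn
  calc _ ≤ ‖π‖ * ‖y‖ := π.le_opNorm _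
    _ ≤ ‖π‖ * (C * ‖x'‖) := by gcongr
    _ = _ := by ring

lemma pi_star [Nontrivial X] (hNA : ∀ p, IsCStarNorm (NA p)) (hNB : ∀ q, IsCStarNorm (NB q))
    {ι : A ⊗[ℂ] B →ₗ[ℂ] X} (hX : IsTensorCompletion (osProjNorm NA NB) X ι)
    (π : X →L[ℂ] (H →L[ℂ] H)) (hm : ∀ x y, π (x * y) = π x * π y)
    (hsh : ∀ x, π (sharp hX x) = star (π x)) (x : X) : π (star x) = star (π x) := by
  have hc := pi_theta π hm _ hsh (theta hNA hNB hX) (theta_mul hNA hNB hX)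
  have h : ∀ x, π (theta hNA hNB hX x) = π x := by
    intro x
    refine hX.dense.induction_on (p := fun x => π (theta hNA hNB hX x) = π x) x
      (isClosed_eq hc π.continuous) ?_
    intro u
    rw [theta_iota]
  rw [← h x, ← hsh, theta_apply, sharp_sharp hNA hNB]

end starx

end WP

/-- **Wiener property.** For any C⋆-algebras `A` and `B`, every proper closed
two-sided ideal of the Banach `*`-algebra `A ⊗̂ B` is annihilated by some irreducible
`*`-representation of `A ⊗̂ B` on a Hilbert space. -/
theorem wiener_property {A B X : Type u} [NonUnitalCStarAlgebra A] [NonUnitalCStarAlgebra B]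
    [NonUnitalNormedRing X] [StarRing X] [NormedSpace ℂ X] [CompleteSpace X]
    [IsScalarTower ℂ X X] [SMulCommClass ℂ X X]
    (NA : ∀ p : ℕ, Matrix (Fin p) (Fin p) A → ℝ)
    (NB : ∀ q : ℕ, Matrix (Fin q) (Fin q) B → ℝ)
    (hNA : ∀ p, IsCStarNorm (NA p)) (hNB : ∀ q, IsCStarNorm (NB q))
    (ι : A ⊗[ℂ] B →ₗ[ℂ] X) (hX : IsTensorCompletion (osProjNorm NA NB) X ι)
    (K : TwoSidedIdeal X) (hclosed : IsClosed (K : Set X))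
    (hproper : (K : Set X) ≠ Set.univ) :
    ∃ ρ : IrreducibleRepOn X, ∀ x ∈ K, ρ.π x = 0 := by
  letI := CStarAlgebra.spectralOrder A
  haveI := CStarAlgebra.spectralOrderedRing A
  letI := CStarAlgebra.spectralOrder B
  haveI := CStarAlgebra.spectralOrderedRing B
  have hnt : Nontrivial X := by
    by_contra h
    rw [not_nontrivial_iff_subsingleton] at h
    apply hproper
    ext x
    simp only [Set.mem_univ, iff_true, SetLike.mem_coe]
    rw [Subsingleton.elim x 0]
    exact K.zero_mem
  have hne : WP.Ksub hNA hNB hX K hclosed ≠ ⊤ := by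
    intro h
    apply hproper
    exact congrArg (fun S : Submodule ℂ X => (S : Set X)) h
  obtain ⟨H, _, _, _, R, hm, hs, hR, hk⟩ := WP.rep_exists hNA hNB hX
    (WP.Ksub hNA hNB hX K hclosed) hclosed (fun a x hx => K.mul_mem_left a x hx)
    (fun a x hx => K.mul_mem_right x a hx) hne
  obtain ⟨H', i1, i2, i3, π, hm', hs', hne', h0, hirr⟩ := WP.irr_rep R hm _ hs hR
  have hst := WP.pi_star hNA hNB hX π hm' hs'
  exact ⟨{ H := H', normH := i1, ipsH := i2, csH := i3
           π := { toFun := π, map_smul' := fun c x => by simp, map_zero' := map_zero π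
                  map_add' := map_add π, map_mul' := hm', map_star' := hst }
           continuous := π.continuous
           nonzero := hne'
           irreducible := hirr }, fun x hx => h0 x (hk x hx)⟩

end
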